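/- arXiv:1511.01215 — 2 statements merged into one kernel-verified Lean document; each statement's English description precedes it below -/
import Mathlib

section
/- Quantitative infimum comparison for supersolutions: Let Y = (y,s) ∈ ℝ^{n+1}, r > 0, h ∈ (0,1), and let v ∈ C^{2,1} on the closure of Q_r(Y) satisfy v ≥ 0 and −v_t + Lv ≤ 0 at every point of Q_r(Y). Let D_ρ := B_ρ(z) × {τ} and D⁰ := B_{r/2}(y) × {σ} be disks such that B_ρ(z) ⊂ B_r(y) and s − r² ≤ τ < τ + h²r² ≤ σ ≤ s. Then inf_{D_ρ} v ≤ (2r/ρ)^γ · inf_{D⁰} v, where γ is a positive constant depending only on n, ν, h and S. -/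
open MeasureTheory ENNReal Metric Set RealInnerProductSpace

noncomputable section

/-- `n`-dimensional Euclidean space. -/
abbrev En (n : ℕ) : Type := EuclideanSpace ℝ (Fin n)

variable {n : ℕ}

/-- Time derivative `u_t`. -/
def Dt (u : En n × ℝ → ℝ) (X : En n × ℝ) : ℝ :=
  deriv (fun t => u (X.1, t)) X.2

/-- First spatial derivative `D_i u`. -/
def Dx (u : En n × ℝ → ℝ) (i : Fin n) (X : En n × ℝ) : ℝ :=
  fderiv ℝ (fun x => u (x, X.2)) X.1 (EuclideanSpace.single i 1)

/-- Second spatial derivative `D_{ij} u`. -/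
def Dxx (u : En n × ℝ → ℝ) (i j : Fin n) (X : En n × ℝ) : ℝ :=
  Dx (Dx u j) i X

/-- `u` is of class `C^{2,1}` on `Q`: `u`, `D_i u`, `D_{ij} u`, `u_t` exist and are
continuous on `Q`. -/
structure IsC21 (u : En n × ℝ → ℝ) (Q : Set (En n × ℝ)) : Prop where
  cont : ContinuousOn u Q
  diff_t : ∀ X ∈ Q, DifferentiableAt ℝ (fun t => u (X.1, t)) X.2
  diff_x : ∀ X ∈ Q, DifferentiableAt ℝ (fun x => u (x, X.2)) X.1
  diff_xx : ∀ j : Fin n, ∀ X ∈ Q, DifferentiableAt ℝ (fun x => Dx u j (x, X.2)) X.1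
  cont_t : ContinuousOn (Dt u) Q
  cont_x : ∀ i, ContinuousOn (Dx u i) Q
  cont_xx : ∀ i j, ContinuousOn (Dxx u i j) Q

/-- Uniform parabolicity with constant `ν` on `Q`:
`ν⁻¹|ξ|² ≤ Σ a_ij ξ_i ξ_j` and `Σ a_ij² ≤ ν²`. -/
def UnifParabolic (ν : ℝ) (a : En n × ℝ → Matrix (Fin n) (Fin n) ℝ)
    (Q : Set (En n × ℝ)) : Prop :=
  ∀ X ∈ Q, (∀ ξ : Fin n → ℝ, ν⁻¹ * (∑ i, ξ i ^ 2) ≤ ∑ i, ∑ j, a X i j * ξ i * ξ j) ∧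
    (∑ i, ∑ j, (a X i j) ^ 2) ≤ ν ^ 2

/-- `Lu = Σ_{ij} a_ij D_ij u + Σ_i b_i D_i u`. -/
def Lop (a : En n × ℝ → Matrix (Fin n) (Fin n) ℝ) (b : En n × ℝ → En n)
    (u : En n × ℝ → ℝ) (X : En n × ℝ) : ℝ :=
  (∑ i, ∑ j, a X i j * Dxx u i j X) + ∑ i, b X i * Dx u i X

/-- `∫ (ess sup_t |f(x,t)|)ⁿ dx`, the `n`-th power of the `L^n_x L^∞_t` norm of `f`
over the set `Q ⊆ ℝⁿ × ℝ`. -/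
def LxnLtinfPow {E : Type*} [NNNorm E] (f : En n × ℝ → E) (Q : Set (En n × ℝ)) : ℝ≥0∞ :=
  ∫⁻ x, (essSup (fun t => (‖f (x, t)‖₊ : ℝ≥0∞)) (volume.restrict {t | (x, t) ∈ Q})) ^ n

/-- The `L^n_x L^∞_t` norm of `f` over `Q`. -/
def LxnLtinf {E : Type*} [NNNorm E] (f : En n × ℝ → E) (Q : Set (En n × ℝ)) : ℝ≥0∞ :=
  (LxnLtinfPow f Q) ^ (1 / (n : ℝ))

/-- The box `B_ρ(y) × (t₁, t₂)`. -/
def box (y : En n) (ρ t₁ t₂ : ℝ) : Set (En n × ℝ) := ball y ρ ×ˢ Ioo t₁ t₂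

/-- The standard parabolic cylinder `Q_r(Y) = B_r(y) × (s - r², s)`. -/
def pcyl (Y : En n × ℝ) (r : ℝ) : Set (En n × ℝ) := box Y.1 r (Y.2 - r ^ 2) Y.2

/-- The slanted cylinder `V_r(Y) = {(x,t) : |x - (t/s)y| < r, 0 < t < s}`. -/
def slantCyl (Y : En n × ℝ) (r : ℝ) : Set (En n × ℝ) :=
  {X | ‖X.1 - (X.2 / Y.2) • Y.1‖ < r ∧ 0 < X.2 ∧ X.2 < Y.2}

/-- Supremum of the positive part `u₊` over a set `A`. -/
def supPos (u : En n × ℝ → ℝ) (A : Set (En n × ℝ)) : ℝ :=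
  sSup ((fun X => max (u X) 0) '' A)

/-- `Ω` is a Lipschitz domain with character `(rΩ, mΩ)`: at every boundary point `y`
there is a coordinate frame, encoded by the unit "vertical" direction `e`, in which
`Ω ∩ B_{rΩ}(y)` is the region above the graph of an `mΩ`-Lipschitz function `φ`
of the tangential variables. -/
def IsLipschitzDomain (Ω : Set (En n)) (rΩ mΩ : ℝ) : Prop :=
  0 < rΩ ∧ 0 ≤ mΩ ∧
  ∀ y ∈ frontier Ω, ∃ (e : En n) (φ : En n → ℝ),
    ‖e‖ = 1 ∧ LipschitzWith (Real.toNNReal mΩ) φ ∧ φ 0 = 0 ∧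
    (∀ x, x ∈ Ω ∩ ball y rΩ ↔
      dist x y < rΩ ∧ φ ((x - y) - ⟪x - y, e⟫ • e) < ⟪x - y, e⟫) ∧
    (∀ ρ : ℝ, 0 < ρ → ρ ≤ rΩ → y + ρ • e ∈ Ω)



/-! ### Measure of Lipschitz images and the contact lemma -/

lemma vol_lip_image (P : En n → En n) (A : Set (En n)) (L : NNReal)
    (h : LipschitzOnWith L P A) : volume (P '' A) ≤ (L : ℝ≥0∞) ^ n * volume A := by
  have hH := h.hausdorffMeasure_image_le (d := (n : ℝ)) (Nat.cast_nonneg n)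
  have hfin : (Module.finrank ℝ (En n) : ℝ) = n := by simp
  have : (Measure.hausdorffMeasure (n : ℝ) : Measure (En n)).IsAddHaarMeasure := by
    have := isAddHaarMeasure_hausdorffMeasure (E := En n)
    rwa [hfin] at this
  have hv := Measure.isAddLeftInvariant_eq_smul (volume : Measure (En n))
    (Measure.hausdorffMeasure (n : ℝ) : Measure (En n))
  rw [hv]
  simp only [Measure.smul_apply, ENNReal.smul_def, smul_eq_mul]
  rw [ENNReal.rpow_natCast] at hH
  calc _ ≤ _ := mul_le_mul_right hH _
    _ = _ := by ring

/-- A countable measurable partition into sets of small diameter. -/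
lemma exists_cells (δ : ℝ) (hδ : 0 < δ) : ∃ D : ℕ → Set (En n),
    (∀ i, MeasurableSet (D i)) ∧ Pairwise (Function.onFun Disjoint D) ∧ (⋃ i, D i) = univ ∧
    ∀ i, ∀ x ∈ D i, ∀ y ∈ D i, dist x y < δ := by
  let B : ℕ → Set (En n) := fun i => ball (TopologicalSpace.denseSeq (En n) i) (δ / 2)
  refine ⟨disjointed B, fun i => ?_, disjoint_disjointed B, ?_, ?_⟩
  · exact MeasurableSet.disjointed (fun i => measurableSet_ball) i
  · rw [iUnion_disjointed]
    apply eq_univ_of_forall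
    intro x
    obtain ⟨i, hi⟩ := (TopologicalSpace.denseRange_denseSeq (En n)).exists_dist_lt x (half_pos hδ)
    exact mem_iUnion.2 ⟨i, hi⟩
  · intro i x hx y hy
    have hx' := disjointed_subset B i hx
    have hy' := disjointed_subset B i hy
    simp only [B, mem_ball] at hx' hy'
    calc dist x y ≤ _ := dist_triangle_right x y (TopologicalSpace.denseSeq (En n) i)
      _ < δ := by linarith

lemma vol_le_of_antilip (A : Set (En n)) (X : En n → En n) (L : NNReal) (δ : ℝ) (hδ : 0 < δ)
    (h : ∀ p ∈ A, ∀ q ∈ A, dist (X p) (X q) < δ → dist p q ≤ L * dist (X p) (X q)) :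
    volume A ≤ (L : ℝ≥0∞) ^ n * volume (X '' A) := by
  obtain ⟨D, hDm, hDd, hDu, hD⟩ := exists_cells (n := n) δ hδ
  have h1 : ∀ i, volume (A ∩ X ⁻¹' (D i)) ≤ (L : ℝ≥0∞) ^ n * volume (X '' A ∩ D i) := by
    intro i
    set Ai := A ∩ X ⁻¹' (D i) with hAi
    have hanti : ∀ p ∈ Ai, ∀ q ∈ Ai, dist p q ≤ L * dist (X p) (X q) := fun p hp q hq =>
      h p hp.1 q hq.1 (hD i _ hp.2 _ hq.2)
    rcases Ai.eq_empty_or_nonempty with he | hne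
    · rw [he]; simp
    have hinv : ∀ p ∈ Ai, Function.invFunOn X Ai (X p) = p := by
      intro p hp
      have hm := Function.invFunOn_mem (f := X) (s := Ai) (b := X p) ⟨p, hp, rfl⟩
      have he := Function.invFunOn_eq (f := X) (s := Ai) (b := X p) ⟨p, hp, rfl⟩
      have := hanti _ hm p hp
      rw [he, dist_self, mul_zero] at this
      exact dist_le_zero.1 this
    have hlip : LipschitzOnWith L (Function.invFunOn X Ai) (X '' Ai) := by
      apply LipschitzOnWith.of_dist_le_mul
      rintro _ ⟨p, hp, rfl⟩ _ ⟨q, hq, rfl⟩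
      rw [hinv p hp, hinv q hq]
      exact hanti p hp q hq
    have himg : Function.invFunOn X Ai '' (X '' Ai) = Ai := by
      ext p
      constructor
      · rintro ⟨_, ⟨q, hq, rfl⟩, rfl⟩
        rw [hinv q hq]; exact hq
      · intro hp
        exact ⟨X p, ⟨p, hp, rfl⟩, hinv p hp⟩
    calc volume Ai = volume (Function.invFunOn X Ai '' (X '' Ai)) := by rw [himg]
      _ ≤ (L : ℝ≥0∞) ^ n * volume (X '' Ai) := vol_lip_image _ _ _ hlip
      _ ≤ _ := by
        gcongr
        rintro _ ⟨p, hp, rfl⟩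
        exact ⟨⟨p, hp.1, rfl⟩, hp.2⟩
  have h2 : A = ⋃ i, (A ∩ X ⁻¹' (D i)) := by
    rw [← inter_iUnion, ← preimage_iUnion, hDu]; simp
  calc volume A = volume (⋃ i, (A ∩ X ⁻¹' (D i))) := by rw [← h2]
    _ ≤ ∑' i, volume (A ∩ X ⁻¹' (D i)) := measure_iUnion_le _
    _ ≤ ∑' i, (L : ℝ≥0∞) ^ n * volume (X '' A ∩ D i) := ENNReal.tsum_le_tsum h1
    _ = (L : ℝ≥0∞) ^ n * ∑' i, (volume.restrict (X '' A)) (D i) := by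
        rw [ENNReal.tsum_mul_left]
        congr 2
        ext i
        rw [Measure.restrict_apply (hDm i), inter_comm]
    _ = (L : ℝ≥0∞) ^ n * (volume.restrict (X '' A)) (⋃ i, D i) := by
        rw [measure_iUnion hDd hDm]
    _ = _ := by rw [hDu]; simp

/-- The elementary geometric estimate for contact points. -/
lemma contact_lip (W : En n → ℝ) (D : Set (En n)) (M δ : ℝ) (hM : 0 ≤ M)
    (x x' p q : En n)
    (hp : ∀ z ∈ D, W x + ⟪p, z - x⟫ ≤ W z)
    (hq : ∀ z ∈ D, W x' + ⟪q, z - x'⟫ ≤ W z)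
    (hx'D : x' ∈ D)
    (hup : ∀ z ∈ ball x δ, z ∈ D ∧ W z ≤ W x + ⟪p, z - x⟫ + M * ‖z - x‖ ^ 2)
    (hd : dist x x' < δ / 2) : dist p q ≤ 4 * M * dist x x' := by
  by_cases hpq : p = q
  · subst hpq; simp; positivity
  have hne : 0 < ‖q - p‖ := norm_pos_iff.2 (sub_ne_zero.2 (Ne.symm hpq))
  have key : ∀ s : ℝ, 0 < s → dist x x' + s < δ → ‖q - p‖ * s ≤ M * (s + dist x x') ^ 2 := by
    intro s hs hsd
    set z := x' + (s / ‖q - p‖) • (q - p) with hz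
    have hzx' : z - x' = (s / ‖q - p‖) • (q - p) := by rw [hz]; abel
    have hnz : ‖z - x'‖ = s := by
      rw [hzx', norm_smul, Real.norm_eq_abs, abs_of_pos (by positivity)]; field_simp
    have hzx : ‖z - x‖ ≤ s + dist x x' := by
      calc ‖z - x‖ = ‖(z - x') + (x' - x)‖ := by congr 1; abel
        _ ≤ _ := norm_add_le _ _
        _ = _ := by rw [hnz, dist_comm, dist_eq_norm]
    have hzb : z ∈ ball x δ := by
      rw [mem_ball, dist_eq_norm]; linarith
    obtain ⟨hzD, h1⟩ := hup z hzb
    have h2 := hq z hzD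
    have h3 := hp x' hx'D
    have h4 : ⟪q - p, z - x'⟫ = ‖q - p‖ * s := by
      rw [hzx', inner_smul_right, real_inner_self_eq_norm_sq]; field_simp
    have h5 : ⟪p, z - x⟫ = ⟪p, z - x'⟫ + ⟪p, x' - x⟫ := by
      rw [← inner_add_right]; congr 1; abel
    rw [inner_sub_left] at h4
    have h6 : ‖z - x‖ ^ 2 ≤ (s + dist x x') ^ 2 := by gcongr
    nlinarith [mul_le_mul_of_nonneg_left h6 hM]
  rw [dist_comm p q, dist_eq_norm q p]
  rcases eq_or_lt_of_le (dist_nonneg (x := x) (y := x')) with h0 | h0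
  · exfalso
    rw [← h0] at key hd
    have hδ : 0 < δ := by linarith
    set s := min (δ / 2) (‖q - p‖ / (2 * (M + 1))) with hs
    have hs0 : 0 < s := lt_min (by linarith) (by positivity)
    have h1 := key s hs0 (by have := min_le_left (δ / 2) (‖q - p‖ / (2 * (M + 1))); linarith)
    have h2 : s ≤ ‖q - p‖ / (2 * (M + 1)) := min_le_right _ _
    rw [le_div_iff₀ (by positivity)] at h2
    nlinarith
  · have h1 := key (dist x x') h0 (by linarith)
    have : ‖q - p‖ * dist x x' ≤ (4 * M * dist x x') * dist x x' := by nlinarith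
    exact le_of_mul_le_mul_right this h0


lemma abp_piece (W : En n → ℝ) (D A : Set (En n)) (X : En n → En n) (L : NNReal)
    (hD : ∀ p ∈ A, D ∈ nhds (X p))
    (hlow : ∀ p ∈ A, ∀ z ∈ D, W (X p) + ⟪p, z - X p⟫ ≤ W z)
    (hup : ∀ p ∈ A, ∀ᶠ z in nhds (X p), W z ≤ W (X p) + ⟪p, z - X p⟫ + L * ‖z - X p‖ ^ 2) :
    volume A ≤ ((4 * L : NNReal) : ℝ≥0∞) ^ n * volume (X '' A) := by
  let Aj : ℕ → Set (En n) := fun j => {p ∈ A | ∀ z ∈ ball (X p) (1 / ((j : ℝ) + 1)),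
    z ∈ D ∧ W z ≤ W (X p) + ⟪p, z - X p⟫ + L * ‖z - X p‖ ^ 2}
  have hmono : Monotone Aj := by
    intro i j hij p hp
    refine ⟨hp.1, fun z hz => hp.2 z (ball_subset_ball ?_ hz)⟩
    apply one_div_le_one_div_of_le (by positivity)
    have : (i : ℝ) ≤ j := by exact_mod_cast hij
    linarith
  have hU : A = ⋃ j, Aj j := by
    apply subset_antisymm
    · intro p hp
      obtain ⟨δ, hδ, hb⟩ := Metric.eventually_nhds_iff_ball.1 ((Filter.eventually_mem_set.2 (hD p hp)).and (hup p hp))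
      obtain ⟨j, hj⟩ := exists_nat_one_div_lt hδ
      exact mem_iUnion.2 ⟨j, hp, fun z hz => hb z (ball_subset_ball hj.le hz)⟩
    · exact iUnion_subset fun j p hp => hp.1
  calc volume A = volume (⋃ j, Aj j) := by rw [← hU]
    _ = ⨆ j, volume (Aj j) := hmono.measure_iUnion
    _ ≤ _ := by
      apply iSup_le
      intro j
      have hpos : (0 : ℝ) < 1 / ((j : ℝ) + 1) := by positivity
      have := vol_le_of_antilip (Aj j) X (4 * L) (1 / ((j : ℝ) + 1) / 2) (by positivity) (by
        intro p hp q hq hd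
        have := contact_lip W D L _ L.2 (X p) (X q) p q (hlow p hp.1) (hlow q hq.1)
          (mem_of_mem_nhds (hD q hq.1)) hp.2 hd
        simpa using this)
      refine this.trans ?_
      gcongr
      exact fun p hp => hp.1

lemma abp0 (hn : 0 < n) (W : En n → ℝ) (D E A : Set (En n)) (K : En n → ℝ≥0∞)
    (hKm : Measurable K) (ε : NNReal) (hε : 0 < ε) (hKε : ∀ x, (ε : ℝ≥0∞) ≤ K x)
    (h : ∀ p ∈ A, ∃ x ∈ E, D ∈ nhds x ∧ (∀ z ∈ D, W x + ⟪p, z - x⟫ ≤ W z) ∧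
      (∃ M : ℝ, ∀ᶠ z in nhds x, W z ≤ W x + ⟪p, z - x⟫ + M * ‖z - x‖ ^ 2) ∧
      (K x ≠ ∞ → ∀ᶠ z in nhds x, W z ≤ W x + ⟪p, z - x⟫ + (K x).toReal * ‖z - x‖ ^ 2)) :
    volume A ≤ 8 ^ n * ∫⁻ x in E, K x ^ n := by
  choose! X hXE hD hlow hM hK using h
  by_cases hfin : ∫⁻ x in E, K x ^ n = ∞
  · rw [hfin, ENNReal.mul_top (by positivity)]; exact le_top
  -- infinite part
  have hinf : volume (A ∩ {p | K (X p) = ∞}) = 0 := by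
    have hnull : volume (E ∩ {x | K x = ∞}) = 0 := by
      have h1 : ∀ᵐ x ∂(volume.restrict E), K x ^ n < ∞ :=
        ae_lt_top (hKm.pow_const n) hfin
      have h2 : (volume.restrict E) {x | K x = ∞} = 0 := by
        rw [ae_iff] at h1
        refine measure_mono_null ?_ h1
        intro x hx
        simp only [mem_ofPred_eq] at hx ⊢
        rw [hx, ENNReal.top_pow hn.ne']; simp
      have h3 : MeasurableSet {x | K x = ∞} := hKm (measurableSet_singleton ∞)
      rw [Measure.restrict_apply h3] at h2
      rw [inter_comm]; exact h2
    let Am : ℕ → Set (En n) := fun m => {p ∈ A | K (X p) = ∞ ∧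
      ∀ᶠ z in nhds (X p), W z ≤ W (X p) + ⟪p, z - X p⟫ + (m : NNReal) * ‖z - X p‖ ^ 2}
    have hsub : A ∩ {p | K (X p) = ∞} ⊆ ⋃ m, Am m := by
      rintro p ⟨hp, hpK⟩
      obtain ⟨M, hM'⟩ := hM p hp
      obtain ⟨m, hm⟩ := exists_nat_ge M
      refine mem_iUnion.2 ⟨m, hp, hpK, ?_⟩
      filter_upwards [hM'] with z hz
      have : M * ‖z - X p‖ ^ 2 ≤ m * ‖z - X p‖ ^ 2 := by gcongr
      push_cast
      linarith
    refine measure_mono_null hsub (measure_iUnion_null fun m => ?_)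
    have := abp_piece W D (Am m) X m (fun p hp => hD p hp.1) (fun p hp => hlow p hp.1)
      (fun p hp => hp.2.2)
    have h0 : volume (X '' Am m) = 0 := by
      refine measure_mono_null ?_ hnull
      rintro _ ⟨p, hp, rfl⟩
      exact ⟨hXE p hp.1, hp.2.1⟩
    rw [h0, mul_zero] at this
    exact le_antisymm this zero_le
  -- finite part, level sets
  let Lev : ℕ → Set (En n) := fun k => {x | (k : ℝ≥0∞) * ε ≤ K x ∧ K x < (k + 1 : ℕ) * ε}
  have hLevm : ∀ k, MeasurableSet (Lev k) := fun k =>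
    (measurableSet_le measurable_const hKm).inter (measurableSet_lt hKm measurable_const)
  have hLevd : Pairwise (Function.onFun Disjoint Lev) := by
    have aux : ∀ i j, i < j → Disjoint (Lev i) (Lev j) := by
      intro i j hij
      rw [Set.disjoint_left]
      rintro x ⟨_, h1⟩ ⟨h2, _⟩
      have : ((i + 1 : ℕ) : ℝ≥0∞) * ε ≤ (j : ℝ≥0∞) * ε := by
        gcongr; exact_mod_cast hij
      exact absurd (h1.trans_le this) (not_lt.2 h2)
    intro i j hij
    rcases lt_or_gt_of_ne hij with h | h
    · exact aux i j h
    · exact (aux j i h).symm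
  have hlevel : ∀ k, volume (A ∩ {p | X p ∈ Lev k}) ≤ 8 ^ n * ∫⁻ x in Lev k, K x ^ n ∂(volume.restrict E) := by
    intro k
    rcases Nat.eq_zero_or_pos k with rfl | hk
    · have : A ∩ {p | X p ∈ Lev 0} = ∅ := by
        ext p
        simp only [mem_inter_iff, mem_ofPred_eq, mem_empty_iff_false, iff_false, not_and]
        rintro - ⟨_, h2⟩
        simp only [zero_add, Nat.cast_one, one_mul] at h2
        exact absurd h2 (not_lt.2 (hKε _))
      rw [this]; simp
    set Ak := A ∩ {p | X p ∈ Lev k}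
    have h1 := abp_piece W D Ak X ((k + 1 : ℕ) * ε) (fun p hp => hD p hp.1) (fun p hp => hlow p hp.1)
      (by
        intro p hp
        have hlt : K (X p) < (k + 1 : ℕ) * ε := hp.2.2
        have hne : K (X p) ≠ ∞ := hlt.ne_top
        filter_upwards [hK p hp.1 hne] with z hz
        refine hz.trans ?_
        gcongr
        have : K (X p) ≤ (((k + 1 : ℕ) * ε : NNReal) : ℝ≥0∞) := by push_cast; push_cast at hlt; exact hlt.le
        have := ENNReal.toReal_mono ENNReal.coe_ne_top this
        rw [ENNReal.coe_toReal] at this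
        exact this)
    have h2 : ((4 * ((k + 1 : ℕ) * ε) : NNReal) : ℝ≥0∞) ≤ 8 * (k * ε) := by
      have : (4 * ((k + 1 : ℕ) * ε) : NNReal) ≤ 8 * (k * ε) := by
        have h3 : ((k + 1 : ℕ) : NNReal) ≤ 2 * k := by
          have : k + 1 ≤ 2 * k := by omega
          exact_mod_cast this
        calc (4 * ((k + 1 : ℕ) * ε) : NNReal) ≤ 4 * (2 * k * ε) := by gcongr
          _ = _ := by ring
      exact_mod_cast this
    calc volume Ak ≤ _ := h1
      _ ≤ (8 * (k * ε)) ^ n * volume (X '' Ak) := by gcongr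
      _ ≤ (8 * (k * ε)) ^ n * (volume.restrict E) (Lev k) := by
        gcongr _ * ?_
        rw [Measure.restrict_apply (hLevm k)]
        apply measure_mono
        rintro _ ⟨p, hp, rfl⟩
        exact ⟨hp.2, hXE p hp.1⟩
      _ = 8 ^ n * ∫⁻ x in Lev k, (k * ε) ^ n ∂(volume.restrict E) := by
        rw [setLIntegral_const, mul_pow]; ring
      _ ≤ _ := by
        gcongr 8 ^ n * ?_
        apply setLIntegral_mono' (hLevm k)
        intro x hx
        have := hx.1
        gcongr
  have hsub : A ⊆ (A ∩ {p | K (X p) = ∞}) ∪ ⋃ k, (A ∩ {p | X p ∈ Lev k}) := by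
    intro p hp
    by_cases hpK : K (X p) = ∞
    · exact Or.inl ⟨hp, hpK⟩
    · right
      obtain ⟨κ, hκ⟩ : ∃ κ : NNReal, (κ : ℝ≥0∞) = K (X p) :=
        ⟨(K (X p)).toNNReal, ENNReal.coe_toNNReal hpK⟩
      refine mem_iUnion.2 ⟨⌊κ / ε⌋₊, hp, ?_⟩
      have ha : ((⌊κ / ε⌋₊ : ℕ) : NNReal) * ε ≤ κ := by
        have := Nat.floor_le (zero_le (a := κ / ε))
        rwa [le_div_iff₀ hε] at this
      have hb : κ < ((⌊κ / ε⌋₊ + 1 : ℕ) : NNReal) * ε := by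
        have := Nat.lt_floor_add_one (κ / ε)
        rw [div_lt_iff₀ hε] at this
        exact_mod_cast this
      refine ⟨?_, ?_⟩
      · rw [← hκ]; exact_mod_cast ha
      · rw [← hκ]; exact_mod_cast hb
  calc volume A ≤ _ := measure_mono hsub
    _ ≤ volume (A ∩ {p | K (X p) = ∞}) + volume (⋃ k, (A ∩ {p | X p ∈ Lev k})) := measure_union_le _ _
    _ ≤ 0 + ∑' k, volume (A ∩ {p | X p ∈ Lev k}) := by rw [hinf]; gcongr; exact measure_iUnion_le _
    _ ≤ ∑' k, 8 ^ n * ∫⁻ x in Lev k, K x ^ n ∂(volume.restrict E) := by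
      rw [zero_add]; exact ENNReal.tsum_le_tsum hlevel
    _ = 8 ^ n * ∫⁻ x in ⋃ k, Lev k, K x ^ n ∂(volume.restrict E) := by
      rw [ENNReal.tsum_mul_left, lintegral_iUnion hLevm hLevd]
    _ ≤ _ := by gcongr 8 ^ n * ?_; exact setLIntegral_le_lintegral _ _


/-! ### Pointwise notions -/

/-- Admissible coefficient matrices. -/
def Adm (ν : ℝ) (a : Matrix (Fin n) (Fin n) ℝ) : Prop :=
  (∀ ξ : Fin n → ℝ, ν⁻¹ * (∑ i, ξ i ^ 2) ≤ ∑ i, ∑ j, a i j * ξ i * ξ j) ∧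
    (∑ i, ∑ j, (a i j) ^ 2) ≤ ν ^ 2

/-- The pairing of two matrices. -/
def tr2 (a H : Matrix (Fin n) (Fin n) ℝ) : ℝ := ∑ i, ∑ j, a i j * H i j

/-- The quadratic form of a matrix. -/
def quad (H : Matrix (Fin n) (Fin n) ℝ) (ξ : En n) : ℝ := ∑ i, ∑ j, H i j * ξ i * ξ j

/-- Second order Taylor expansion at a point, with symmetric Hessian. -/
def Taylor2 (f : En n → ℝ) (x p : En n) (H : Matrix (Fin n) (Fin n) ℝ) : Prop :=
  (∀ i j, H i j = H j i) ∧ ∀ ε : ℝ, 0 < ε → ∀ᶠ z in nhds x,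
    |f z - f x - ⟪p, z - x⟫ - quad H (z - x) / 2| ≤ ε * ‖z - x‖ ^ 2

/-- Pointwise supersolution property. -/
def SupAt (ν : ℝ) (g : ℝ≥0∞) (v : En n × ℝ → ℝ) (x : En n) (t : ℝ) : Prop :=
  ∃ (q : ℝ) (p : En n) (H : Matrix (Fin n) (Fin n) ℝ),
    HasDerivAt (fun s => v (x, s)) q t ∧ Taylor2 (fun z => v (z, t)) x p H ∧
    (g ≠ ∞ → ∀ ε : ℝ, 0 < ε → ∃ a, Adm ν a ∧ tr2 a H ≤ q + g.toReal * ‖p‖ + ε)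

/-- Nonnegative supersolutions on `ball y r × [t₁, t₂]` with drift bound `g`. -/
structure Super (ν : ℝ) (g : En n → ℝ≥0∞) (v : En n × ℝ → ℝ) (y : En n) (r t₁ t₂ : ℝ) : Prop where
  meas : Measurable g
  cont : ContinuousOn v (ball y r ×ˢ Icc t₁ t₂)
  nonneg : ∀ x ∈ ball y r, ∀ t ∈ Icc t₁ t₂, 0 ≤ v (x, t)
  sup : ∀ x ∈ ball y r, ∀ t ∈ Icc t₁ t₂, SupAt ν (g x) v x t

lemma tr2_sub (a H G : Matrix (Fin n) (Fin n) ℝ) : tr2 a (H - G) = tr2 a H - tr2 a G := by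
  simp [tr2, mul_sub, Finset.sum_sub_distrib]

lemma quad_sub (H G : Matrix (Fin n) (Fin n) ℝ) (ξ : En n) :
    quad (H - G) ξ = quad H ξ - quad G ξ := by
  simp [quad, sub_mul, Finset.sum_sub_distrib]

lemma quad_smul (H : Matrix (Fin n) (Fin n) ℝ) (s : ℝ) (ξ : En n) :
    quad H (s • ξ) = s ^ 2 * quad H ξ := by
  simp only [quad, Finset.mul_sum, PiLp.smul_apply, smul_eq_mul]
  refine Finset.sum_congr rfl fun i _ => Finset.sum_congr rfl fun j _ => by ring

lemma norm_sq_eq_sum (ξ : En n) : ‖ξ‖ ^ 2 = ∑ i, ξ i ^ 2 := EuclideanSpace.real_norm_sq_eq ξ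

lemma exists_gram (H : Matrix (Fin n) (Fin n) ℝ) (hs : ∀ i j, H i j = H j i)
    (hp : ∀ ξ, 0 ≤ quad H ξ) : ∃ B : Matrix (Fin n) (Fin n) ℝ, ∀ i j, H i j = ∑ k, B k i * B k j := by
  have h1 : H.PosSemidef := by
    refine Matrix.PosSemidef.of_dotProduct_mulVec_nonneg ?_ ?_
    · ext i j; simp [hs j i]
    · intro ξ
      have := hp (WithLp.toLp 2 ξ)
      simp only [quad] at this
      simp only [dotProduct, Matrix.mulVec, star_trivial, Finset.mul_sum]
      refine this.trans_eq ?_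
      refine Finset.sum_congr rfl fun i _ => Finset.sum_congr rfl fun j _ => by
        ring
  obtain ⟨B, hB⟩ : ∃ B : Matrix (Fin n) (Fin n) ℝ, H = B.conjTranspose * B := by
    open scoped MatrixOrder in
    exact CStarAlgebra.nonneg_iff_eq_star_mul_self.1 h1.nonneg
  refine ⟨B, fun i j => ?_⟩
  rw [hB]; simp [Matrix.mul_apply]

lemma trace_le_tr2 {ν : ℝ} {a H : Matrix (Fin n) (Fin n) ℝ} (ha : Adm ν a)
    (hs : ∀ i j, H i j = H j i) (hp : ∀ ξ, 0 ≤ quad H ξ) :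
    ν⁻¹ * (∑ i, H i i) ≤ tr2 a H := by
  obtain ⟨B, hB⟩ := exists_gram H hs hp
  have h1 : tr2 a H = ∑ k, ∑ i, ∑ j, a i j * B k i * B k j := by
    simp only [tr2, hB, Finset.mul_sum]
    rw [Finset.sum_comm]
    rw [Finset.sum_comm]
    calc _ = ∑ i, ∑ k, ∑ j, a i j * B k i * B k j := by
          refine Finset.sum_congr rfl fun i _ => ?_
          rw [Finset.sum_comm]
          refine Finset.sum_congr rfl fun k _ => Finset.sum_congr rfl fun j _ => by ring
      _ = _ := Finset.sum_comm
  have h2 : ∑ i, H i i = ∑ k, ∑ i, B k i ^ 2 := by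
    simp only [hB]
    rw [Finset.sum_comm]
    refine Finset.sum_congr rfl fun i _ => Finset.sum_congr rfl fun j _ => by ring
  rw [h1, h2, Finset.mul_sum]
  exact Finset.sum_le_sum fun k _ => ha.1 (B k)

lemma quad_le_trace {H : Matrix (Fin n) (Fin n) ℝ}
    (hs : ∀ i j, H i j = H j i) (hp : ∀ ξ, 0 ≤ quad H ξ) (ξ : En n) :
    quad H ξ ≤ (∑ i, H i i) * ‖ξ‖ ^ 2 := by
  obtain ⟨B, hB⟩ := exists_gram H hs hp
  have h1 : quad H ξ = ∑ k, (∑ i, B k i * ξ i) ^ 2 := by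
    simp only [quad, hB, sq, Finset.sum_mul, Finset.mul_sum]
    calc _ = ∑ i, ∑ k, ∑ j, B k i * ξ i * (B k j * ξ j) := by
          refine Finset.sum_congr rfl fun i _ => ?_
          rw [Finset.sum_comm]
          refine Finset.sum_congr rfl fun k _ => Finset.sum_congr rfl fun j _ => by ring
      _ = _ := Finset.sum_comm.trans (Finset.sum_congr rfl fun k _ => Finset.sum_comm)
  have h2 : ∑ i, H i i = ∑ k, ∑ i, B k i ^ 2 := by
    simp only [hB]
    rw [Finset.sum_comm]
    refine Finset.sum_congr rfl fun i _ => Finset.sum_congr rfl fun j _ => by ring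
  rw [h1, h2, norm_sq_eq_sum, Finset.sum_mul]
  exact Finset.sum_le_sum fun k _ => Finset.sum_mul_sq_le_sq_mul_sq _ _ _

lemma Taylor2.sub {f h : En n → ℝ} {x p q : En n} {H G : Matrix (Fin n) (Fin n) ℝ}
    (hf : Taylor2 f x p H) (hh : Taylor2 h x q G) :
    Taylor2 (fun z => f z - h z) x (p - q) (H - G) := by
  refine ⟨fun i j => by simp [hf.1 i j, hh.1 i j], fun ε hε => ?_⟩
  filter_upwards [hf.2 (ε / 2) (half_pos hε), hh.2 (ε / 2) (half_pos hε)] with z h1 h2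
  rw [quad_sub, inner_sub_left]
  rw [abs_le] at *
  constructor <;> linarith [h1.1, h1.2, h2.1, h2.2]

/-- First and second order conditions at a point where an affine function touches from below. -/
lemma Taylor2.touch {f : En n → ℝ} {x p p0 : En n} {H : Matrix (Fin n) (Fin n) ℝ}
    (hf : Taylor2 f x p H) (hlow : ∀ᶠ z in nhds x, f x + ⟪p0, z - x⟫ ≤ f z) :
    p = p0 ∧ ∀ ξ, 0 ≤ quad H ξ := by
  have main : ∀ ξ : En n, ∀ ε : ℝ, 0 < ε → ∃ δ : ℝ, 0 < δ ∧ ∀ s : ℝ, |s| < δ →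
      0 ≤ s * ⟪p - p0, ξ⟫ + s ^ 2 * (quad H ξ / 2 + ε * ‖ξ‖ ^ 2) := by
    intro ξ ε hε
    have hc : Filter.Tendsto (fun s : ℝ => x + s • ξ) (nhds 0) (nhds x) := by
      have : Continuous (fun s : ℝ => x + s • ξ) := by fun_prop
      simpa using this.tendsto 0
    have := hc.eventually ((hf.2 ε hε).and hlow)
    obtain ⟨δ, hδ, hb⟩ := Metric.eventually_nhds_iff.1 this
    refine ⟨δ, hδ, fun s hs => ?_⟩
    obtain ⟨h1, h2⟩ := hb (y := s) (by simpa [Real.dist_eq] using hs)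
    simp only [add_sub_cancel_left, quad_smul, inner_smul_right, norm_smul, mul_pow,
      Real.norm_eq_abs, sq_abs] at h1 h2
    rw [abs_le] at h1
    rw [inner_sub_left]
    nlinarith [h1.2]
  have hp : p = p0 := by
    by_contra hne
    have hpos : 0 < ‖p - p0‖ ^ 2 := by
      have : 0 < ‖p - p0‖ := norm_pos_iff.2 (sub_ne_zero.2 hne)
      positivity
    obtain ⟨δ, hδ, hb⟩ := main (p - p0) 1 one_pos
    set N := ‖p - p0‖ ^ 2
    set c := quad H (p - p0) / 2 + 1 * N with hcdef
    rw [real_inner_self_eq_norm_sq] at hb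
    set s := min (δ / 2) (N / (2 * (|c| + 1))) with hs
    have hs0 : 0 < s := lt_min (by linarith) (by positivity)
    have h1 := hb (-s) (by
      rw [abs_neg, abs_of_pos hs0]
      have := min_le_left (δ / 2) (N / (2 * (|c| + 1)))
      linarith)
    have h2 : s ≤ N / (2 * (|c| + 1)) := min_le_right _ _
    rw [le_div_iff₀ (by positivity)] at h2
    have h3 : s * c ≤ s * |c| := by gcongr; exact le_abs_self c
    have h4 : 0 ≤ s * (-N + s * c) := by
      calc (0 : ℝ) ≤ _ := h1
        _ = _ := by ring
    have h5 : 0 ≤ -N + s * c := nonneg_of_mul_nonneg_right h4 hs0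
    nlinarith
  refine ⟨hp, fun ξ => ?_⟩
  by_contra hneg
  push Not at hneg
  set ε := -quad H ξ / (4 * (‖ξ‖ ^ 2 + 1)) with hε
  have hε0 : 0 < ε := by apply div_pos <;> [linarith; positivity]
  obtain ⟨δ, hδ, hb⟩ := main ξ ε hε0
  have h1 := hb (δ / 2) (by rw [abs_of_pos (by linarith)]; linarith)
  rw [hp, sub_self, inner_zero_left, mul_zero, zero_add] at h1
  have h2 : 0 ≤ quad H ξ / 2 + ε * ‖ξ‖ ^ 2 := by
    have : 0 < (δ / 2) ^ 2 := by positivity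
    exact nonneg_of_mul_nonneg_right h1 this
  have h3 : ε * (4 * (‖ξ‖ ^ 2 + 1)) = -quad H ξ := by
    rw [hε]; field_simp
  nlinarith

lemma deriv_nonpos_of_min_left {f : ℝ → ℝ} {q t t₁ : ℝ} (hd : HasDerivAt f q t) (ht : t₁ < t)
    (hmin : ∀ s ∈ Icc t₁ t, f t ≤ f s) : q ≤ 0 := by
  have h1 : Filter.Tendsto (slope f t) (nhdsWithin t (Iio t)) (nhds q) :=
    (hasDerivAt_iff_tendsto_slope.1 hd).mono_left (nhdsWithin_mono _ fun s hs => ne_of_lt hs)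
  refine le_of_tendsto h1 ?_
  filter_upwards [Ioo_mem_nhdsLT ht] with s hs
  rw [slope_def_field]
  apply div_nonpos_of_nonneg_of_nonpos
  · linarith [hmin s ⟨hs.1.le, hs.2.le⟩]
  · linarith [hs.2]


/-- Parabolic contact estimate. -/
lemma abp1 (hn : 0 < n) {ν : ℝ} (hν : 1 ≤ ν) {g : En n → ℝ≥0∞} {v : En n × ℝ → ℝ} {y : En n}
    {r t₁ t₂ : ℝ} (hv : Super ν g v y r t₁ t₂) (D E A : Set (En n)) (hD : D ⊆ ball y r)
    (ψ : En n × ℝ → ℝ) (α β ε : NNReal) (hβ : 0 < β) (hε : 0 < ε)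
    (h : ∀ p ∈ A, ∃ x ∈ E, ∃ t ∈ Ioc t₁ t₂, D ∈ nhds x ∧
      (∀ z ∈ D, ∀ t' ∈ Icc t₁ t₂, v (x, t) - ψ (x, t) + ⟪p, z - x⟫ ≤ v (z, t') - ψ (z, t')) ∧
      ∃ (q : ℝ) (pψ : En n) (Hψ : Matrix (Fin n) (Fin n) ℝ),
        HasDerivAt (fun s => ψ (x, s)) q t ∧ Taylor2 (fun z => ψ (z, t)) x pψ Hψ ∧
        (∀ a, Adm ν a → q - tr2 a Hψ ≤ α) ∧ ‖pψ + p‖ ≤ β) :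
    volume A ≤ 8 ^ n * ∫⁻ x in E, (ENNReal.ofReal ν * (α + β * g x) + ε) ^ n := by
  have hν0 : 0 < ν := by linarith
  set W : En n → ℝ := fun z => sInf ((fun t' => v (z, t') - ψ (z, t')) '' Icc t₁ t₂) with hW
  have hgm := hv.meas
  refine abp0 hn W D E A (fun x => ENNReal.ofReal ν * (α + β * g x) + ε) (by fun_prop) ε hε
    (fun x => le_add_self) ?_
  intro p hp
  obtain ⟨x, hxE, t, ht, hDx, hcon, qψ, pψ, Hψ, hdψ, hTψ, hα, hpβ⟩ := h p hp
  have htI : t ∈ Icc t₁ t₂ := ⟨ht.1.le, ht.2⟩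
  have hxD : x ∈ D := mem_of_mem_nhds hDx
  obtain ⟨q, pv, H, hdv, hTv, hsup⟩ := hv.sup x (hD hxD) t htI
  have hne : ∀ z, ((fun t' => v (z, t') - ψ (z, t')) '' Icc t₁ t₂).Nonempty := fun z =>
    ⟨_, t, htI, rfl⟩
  have hbdd : ∀ z ∈ D, BddBelow ((fun t' => v (z, t') - ψ (z, t')) '' Icc t₁ t₂) := by
    intro z hz
    refine ⟨v (x, t) - ψ (x, t) + ⟪p, z - x⟫, ?_⟩
    rintro _ ⟨t', ht', rfl⟩
    exact hcon z hz t' ht'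
  have hlow : ∀ z ∈ D, v (x, t) - ψ (x, t) + ⟪p, z - x⟫ ≤ W z := by
    intro z hz
    refine le_csInf (hne z) ?_
    rintro _ ⟨t', ht', rfl⟩
    exact hcon z hz t' ht'
  have hup : ∀ z ∈ D, W z ≤ v (z, t) - ψ (z, t) := fun z hz => csInf_le (hbdd z hz) ⟨t, htI, rfl⟩
  have hWx : W x = v (x, t) - ψ (x, t) := by
    refine le_antisymm (hup x hxD) ?_
    simpa using hlow x hxD
  have hT := hTv.sub hTψ
  have htouch := hT.touch (p0 := p) (by
    filter_upwards [hDx] with z hz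
    exact (hcon z hz t htI))
  obtain ⟨hpp, hpsd⟩ := htouch
  have hpv : ‖pv‖ ≤ β := by
    have : pv = pψ + p := by rw [← hpp]; abel
    rw [this]; exact hpβ
  have hq : q - qψ ≤ 0 := by
    refine deriv_nonpos_of_min_left (f := fun s => v (x, s) - ψ (x, s)) (hdv.sub hdψ) ht.1 ?_
    intro s hs
    have := hcon x hxD s ⟨hs.1, hs.2.trans ht.2⟩
    simpa using this
  have hsym := hT.1
  set G := H - Hψ with hG
  have hupper : ∀ e : ℝ, 0 < e → ∀ᶠ z in nhds x,
      W z ≤ W x + ⟪p, z - x⟫ + ((∑ i, G i i) / 2 + e) * ‖z - x‖ ^ 2 := by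
    intro e he
    filter_upwards [hT.2 e he, hDx] with z hz hzD
    rw [abs_le] at hz
    have h1 := hup z hzD
    have h2 := quad_le_trace hsym hpsd (z - x)
    rw [hpp] at hz
    rw [hWx]
    nlinarith [hz.2]
  refine ⟨x, hxE, hDx, fun z hz => ?_, ⟨(∑ i, G i i) / 2 + 1, hupper 1 one_pos⟩, ?_⟩
  · rw [hWx]; exact hlow z hz
  intro hK
  have hgx : g x ≠ ∞ := by
    intro hg
    apply hK
    have h1 : (β : ℝ≥0∞) * g x = ∞ := by
      rw [hg, ENNReal.mul_top]; exact_mod_cast hβ.ne'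
    simp only [h1, add_top]
    rw [ENNReal.mul_top (by simpa using hν0)]; simp
  have htr : ∑ i, G i i ≤ ν * (α + β * (g x).toReal) := by
    refine le_of_forall_pos_le_add fun e he => ?_
    obtain ⟨a, ha, hle⟩ := hsup hgx (e / ν) (by positivity)
    have h1 := trace_le_tr2 ha hsym hpsd
    rw [hG, tr2_sub] at h1
    have h2 := hα a ha
    have h3 : (g x).toReal * ‖pv‖ ≤ β * (g x).toReal := by
      rw [mul_comm]; gcongr
    have h4 : ν⁻¹ * (∑ i, G i i) ≤ α + β * (g x).toReal + e / ν := by linarith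
    rw [inv_mul_le_iff₀ hν0] at h4
    refine h4.trans_eq ?_
    field_simp
  have hKr : (ENNReal.ofReal ν * (α + β * g x) + ε).toReal = ν * (α + β * (g x).toReal) + ε := by
    rw [ENNReal.toReal_add (by finiteness) (by simp), ENNReal.toReal_mul,
      ENNReal.toReal_add (by simp) (by finiteness), ENNReal.toReal_mul,
      ENNReal.toReal_ofReal hν0.le]
    simp
  rw [hKr]
  filter_upwards [hupper ε (by exact_mod_cast hε)] with z hz
  refine hz.trans ?_
  gcongr _ + ?_ * _
  have : 0 ≤ ν * (α + β * (g x).toReal) := by positivity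
  linarith


lemma ennreal_add_pow_le (a b : ℝ≥0∞) (k : ℕ) : (a + b) ^ k ≤ 2 ^ k * (a ^ k + b ^ k) := by
  rcases le_total a b with h | h
  · calc (a + b) ^ k ≤ (2 * b) ^ k := by gcongr; rw [two_mul]; gcongr
      _ = 2 ^ k * b ^ k := mul_pow _ _ _
      _ ≤ _ := by gcongr; exact le_add_self
  · calc (a + b) ^ k ≤ (2 * a) ^ k := by gcongr; rw [two_mul]; gcongr
      _ = 2 ^ k * a ^ k := mul_pow _ _ _
      _ ≤ _ := by gcongr; exact le_self_add

lemma int_add_pow_le {g : En n → ℝ≥0∞} (hg : Measurable g) (D : Set (En n)) (a b : ℝ≥0∞) :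
    ∫⁻ x in D, (a + b * g x) ^ n ≤ 2 ^ n * (a ^ n * volume D + b ^ n * ∫⁻ x in D, g x ^ n) := by
  calc ∫⁻ x in D, (a + b * g x) ^ n ≤ ∫⁻ x in D, 2 ^ n * (a ^ n + b ^ n * g x ^ n) := by
        gcongr with x
        rw [← mul_pow]
        exact ennreal_add_pow_le _ _ _
    _ = _ := by
        rw [lintegral_const_mul _ (by fun_prop), lintegral_add_left (by fun_prop),
          lintegral_const_mul _ (by fun_prop)]
        simp

/-- The contact relation. -/
def Contact (f : En n × ℝ → ℝ) (D : Set (En n)) (I : Set ℝ) (p x : En n) (t : ℝ) : Prop :=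
  ∀ z ∈ D, ∀ t' ∈ I, f (x, t) + ⟪p, z - x⟫ ≤ f (z, t')

lemma exists_contact {f : En n × ℝ → ℝ} {D : Set (En n)} {I : Set ℝ} (hD : IsCompact D)
    (hI : IsCompact I) (hD0 : D.Nonempty) (hI0 : I.Nonempty) (hf : ContinuousOn f (D ×ˢ I))
    (p : En n) : ∃ x ∈ D, ∃ t ∈ I, Contact f D I p x t := by
  obtain ⟨⟨x, t⟩, hxt, hmin⟩ := (hD.prod hI).exists_isMinOn (hD0.prod hI0)
    (f := fun X => f X - ⟪p, X.1⟫) (by fun_prop)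
  refine ⟨x, hxt.1, t, hxt.2, fun z hz t' ht' => ?_⟩
  have := isMinOn_iff.1 hmin (z, t') ⟨hz, ht'⟩
  simp only [inner_sub_right] at *
  linarith

lemma isCompact_contact {f : En n × ℝ → ℝ} {D A : Set (En n)} {I : Set ℝ} (hD : IsCompact D)
    (hI : IsCompact I) (hA : IsCompact A) (hf : ContinuousOn f (D ×ˢ I)) :
    IsCompact {x | x ∈ D ∧ ∃ t ∈ I, ∃ p ∈ A, Contact f D I p x t} := by
  set K : Set ((En n × ℝ) × En n) := (D ×ˢ I) ×ˢ A with hK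
  have hKc : IsCompact K := (hD.prod hI).prod hA
  set Z : Set ((En n × ℝ) × En n) := K ∩ ⋂ z ∈ D, ⋂ t' ∈ I,
    {q ∈ K | f q.1 + ⟪q.2, z - q.1.1⟫ ≤ f (z, t')} with hZ
  have hcl : IsClosed (⋂ z ∈ D, ⋂ t' ∈ I,
    {q ∈ K | f q.1 + ⟪q.2, z - q.1.1⟫ ≤ f (z, t')}) := by
    refine isClosed_biInter fun z hz => isClosed_biInter fun t' ht' => ?_
    refine hKc.isClosed.isClosed_le ?_ continuousOn_const
    refine ContinuousOn.add (hf.comp (by fun_prop) fun q hq => hq.1) (by fun_prop)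
  have hZc : IsCompact Z := hKc.inter_right hcl
  have : {x | x ∈ D ∧ ∃ t ∈ I, ∃ p ∈ A, Contact f D I p x t} = (fun q => q.1.1) '' Z := by
    ext x
    constructor
    · rintro ⟨hx, t, ht, p, hp, hc⟩
      have hk : ((x, t), p) ∈ K := ⟨⟨hx, ht⟩, hp⟩
      refine ⟨((x, t), p), ⟨hk, ?_⟩, rfl⟩
      simp only [mem_iInter]
      exact fun z hz t' ht' => ⟨hk, hc z hz t' ht'⟩
    · rintro ⟨⟨⟨x', t⟩, p⟩, ⟨hk, hq⟩, rfl⟩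
      simp only [mem_iInter] at hq
      exact ⟨hk.1.1, t, hk.1.2, p, hk.2, fun z hz t' ht' => (hq z hz t' ht').2⟩
  rw [this]
  exact hZc.image (by fun_prop)

lemma quad_smul_mat (H : Matrix (Fin n) (Fin n) ℝ) (s : ℝ) (ξ : En n) :
    quad (s • H) ξ = s * quad H ξ := by
  simp only [quad, Finset.mul_sum, Matrix.smul_apply, smul_eq_mul]
  refine Finset.sum_congr rfl fun i _ => Finset.sum_congr rfl fun j _ => by ring

lemma tr2_smul (a H : Matrix (Fin n) (Fin n) ℝ) (s : ℝ) : tr2 a (s • H) = s * tr2 a H := by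
  simp only [tr2, Finset.mul_sum, Matrix.smul_apply, smul_eq_mul]
  refine Finset.sum_congr rfl fun i _ => Finset.sum_congr rfl fun j _ => by ring

lemma Taylor2.affine {f : En n → ℝ} {x p : En n} {H : Matrix (Fin n) (Fin n) ℝ}
    (hf : Taylor2 f x p H) (b c : ℝ) :
    Taylor2 (fun z => b + c * f z) x (c • p) (c • H) := by
  refine ⟨fun i j => by simp [hf.1 i j], fun ε hε => ?_⟩
  filter_upwards [hf.2 (ε / (|c| + 1)) (by positivity)] with z hz
  rw [quad_smul_mat, real_inner_smul_left]
  have : b + c * f z - (b + c * f x) - c * ⟪p, z - x⟫ - c * quad H (z - x) / 2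
    = c * (f z - f x - ⟪p, z - x⟫ - quad H (z - x) / 2) := by ring
  rw [this, abs_mul]
  calc |c| * _ ≤ (|c| + 1) * (ε / (|c| + 1) * ‖z - x‖ ^ 2) := by gcongr; linarith
    _ = _ := by field_simp

/-- Multi-scale contact estimate. -/
lemma multi (hn : 0 < n) {ν : ℝ} (hν : 1 ≤ ν) {g : En n → ℝ≥0∞} {v : En n × ℝ → ℝ} {y : En n}
    {r t₁ t₂ : ℝ} (hv : Super ν g v y r t₁ t₂) (hT : t₁ ≤ t₂) (D : Set (En n))
    (hDc : IsCompact D) (hD0 : D.Nonempty) (hD : D ⊆ ball y r)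
    (θ θ' : ℝ → ℝ) (φ : En n → ℝ) (pφ : En n → En n) (Hφ : En n → Matrix (Fin n) (Fin n) ℝ)
    (lam : ℕ → ℝ) (J : ℕ) (p0 : En n) (η C : ℝ) (hθ : ∀ t, HasDerivAt θ (θ' t) t)
    (hφ : ContinuousOn φ D) (hTφ : ∀ x ∈ D, Taylor2 φ x (pφ x) (Hφ x))
    (hlam : ∀ j < J, 0 < lam j) (hsep : ∀ j k, j < k → k < J → lam k * C < lam j * η)
    (hη : 0 < η) (hpos : ∀ x ∈ D, 2 * η ≤ ‖pφ x + p0‖)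
    (hC : ∀ x ∈ D, ‖pφ x‖ + ‖p0‖ + η ≤ C)
    (hα : ∀ j < J, ∀ x ∈ D, ∀ t ∈ Icc t₁ t₂, ∀ a, Adm ν a →
      θ' t - lam j * tr2 a (Hφ x) ≤ C * lam j)
    (hInt0 : ∀ j < J, ∀ p ∈ closedBall (lam j • p0) (lam j * η), ∀ x ∈ D, ∀ t ∈ Icc t₁ t₂,
      Contact (fun X => v X - (θ X.2 + lam j * φ X.1)) D (Icc t₁ t₂) p x t →
      t₁ < t ∧ D ∈ nhds x) :
    J * (ENNReal.ofReal η ^ n * volume (ball (0 : En n) 1)) ≤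
      8 ^ n * ∫⁻ x in D, (ENNReal.ofReal (ν * C) * (1 + g x) + 1) ^ n := by
  have hgm := hv.meas
  have hν0 : 0 < ν := by linarith
  obtain ⟨x0, hx0⟩ := hD0
  have hC0 : 0 < C := by
    have := hC x0 hx0
    have h1 := norm_nonneg (pφ x0)
    have h2 := norm_nonneg p0
    linarith
  have hDI : D ×ˢ Icc t₁ t₂ ⊆ ball y r ×ˢ Icc t₁ t₂ := prod_mono hD subset_rfl
  have hcf : ∀ j, ContinuousOn (fun X : En n × ℝ => v X - (θ X.2 + lam j * φ X.1))
      (D ×ˢ Icc t₁ t₂) := by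
    intro j
    have hθc : Continuous θ := continuous_iff_continuousAt.2 fun t => (hθ t).continuousAt
    refine (hv.cont.mono hDI).sub (ContinuousOn.add (by fun_prop) ?_)
    refine continuousOn_const.mul (hφ.comp (by fun_prop) fun X hX => hX.1)
  set A : ℕ → Set (En n) := fun j => closedBall (lam j • p0) (lam j * η) with hA
  set E : ℕ → Set (En n) := fun j => {x | x ∈ D ∧ ∃ t ∈ Icc t₁ t₂, ∃ p ∈ A j,
    Contact (fun X => v X - (θ X.2 + lam j * φ X.1)) D (Icc t₁ t₂) p x t} with hE
  have hEm : ∀ j, MeasurableSet (E j) := fun j =>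
    (isCompact_contact hDc isCompact_Icc (isCompact_closedBall _ _) (hcf j)).measurableSet
  -- norms of the slopes
  have hnorm : ∀ j < J, ∀ p ∈ A j, ∀ x ∈ D, lam j * η ≤ ‖lam j • pφ x + p‖ ∧
      ‖lam j • pφ x + p‖ ≤ lam j * C := by
    intro j hj p hp x hx
    have hl := hlam j hj
    have h1 : ‖p - lam j • p0‖ ≤ lam j * η := by simpa [hA, dist_eq_norm] using hp
    have h2 : ‖lam j • (pφ x + p0)‖ = lam j * ‖pφ x + p0‖ := by
      rw [norm_smul, Real.norm_of_nonneg hl.le]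
    have h3 : lam j • pφ x + p = lam j • (pφ x + p0) + (p - lam j • p0) := by
      rw [smul_add]; abel
    have h4 := hpos x hx
    have h5 := hC x hx
    have h6 : ‖lam j • (pφ x + p0)‖ - ‖p - lam j • p0‖ ≤ ‖lam j • pφ x + p‖ := by
      rw [h3]
      have := norm_sub_norm_le (lam j • (pφ x + p0)) (-(p - lam j • p0))
      rwa [norm_neg, sub_neg_eq_add] at this
    have h7 : ‖lam j • pφ x + p‖ ≤ ‖lam j • (pφ x + p0)‖ + ‖p - lam j • p0‖ := by
      rw [h3]; exact norm_add_le _ _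
    have h8 := norm_add_le (pφ x) p0
    constructor <;> nlinarith
  have hdisj : ∀ j < J, ∀ k < J, j < k → Disjoint (E j) (E k) := by
    intro j hj k hk hjk
    rw [Set.disjoint_left]
    rintro x ⟨hx, tj, htj, pj, hpj, hcj⟩ ⟨-, tk, htk, pk, hpk, hck⟩
    have hDn := (hInt0 j hj pj hpj x hx tj htj hcj).2
    obtain ⟨q, pv, H, -, hTv, -⟩ := hv.sup x (hD hx) tk htk
    have hj1 := (hTv.sub ((hTφ x hx).affine 0 (lam j))).touch (p0 := pj) (by
      filter_upwards [hDn] with z hz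
      have h1 := hcj z hz tk htk
      have h2 := hck x hx tj htj
      simp only [sub_self, inner_zero_right] at h1 h2
      linarith)
    have hk1 := (hTv.sub ((hTφ x hx).affine 0 (lam k))).touch (p0 := pk) (by
      filter_upwards [hDn] with z hz
      have h1 := hck z hz tk htk
      simp only at h1
      linarith)
    have e1 : lam j • pφ x + pj = pv := by rw [← hj1.1]; abel
    have e2 : lam k • pφ x + pk = pv := by rw [← hk1.1]; abel
    have n1 := (hnorm j hj pj hpj x hx).1
    have n2 := (hnorm k hk pk hpk x hx).2
    rw [e1] at n1
    rw [e2] at n2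
    linarith [hsep j k hjk hk]
  have hone : ∀ j < J, ENNReal.ofReal η ^ n * volume (ball (0 : En n) 1) ≤
      8 ^ n * ∫⁻ x in E j, (ENNReal.ofReal (ν * C) * (1 + g x) + 1) ^ n := by
    intro j hj
    have hl := hlam j hj
    have h1 := abp1 hn hν hv D (E j) (A j) hD (fun X => θ X.2 + lam j * φ X.1)
      (C * lam j).toNNReal (C * lam j).toNNReal (lam j).toNNReal
      (by simp only [Real.toNNReal_pos]; positivity) (by simpa using hl) (by
        intro p hp
        obtain ⟨x, hx, t, ht, hc⟩ := exists_contact hDc isCompact_Icc ⟨x0, hx0⟩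
          (nonempty_Icc.2 hT) (hcf j) p
        obtain ⟨h1, h2⟩ := hInt0 j hj p hp x hx t ht hc
        have h3 : HasDerivAt (fun s => θ s + lam j * φ x) (θ' t) t := (hθ t).add_const _
        have h4 := (hTφ x hx).affine (θ t) (lam j)
        refine ⟨x, ⟨hx, t, ht, p, hp, hc⟩, t, ⟨h1, ht.2⟩, h2, hc, θ' t, lam j • pφ x,
          lam j • Hφ x, h3, h4, fun a ha => ?_, ?_⟩
        · rw [tr2_smul, Real.coe_toNNReal _ (by positivity)]
          exact hα j hj x hx t ht a ha
        · rw [Real.coe_toNNReal _ (by positivity), mul_comm]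
          exact (hnorm j hj p hp x hx).2)
    have hvol : volume (A j) = ENNReal.ofReal (lam j) ^ n *
        (ENNReal.ofReal η ^ n * volume (ball (0 : En n) 1)) := by
      rw [hA, Measure.addHaar_closedBall _ _ (by positivity)]
      simp only [finrank_euclideanSpace, Fintype.card_fin]
      rw [← mul_assoc, ← mul_pow, ← ENNReal.ofReal_mul hl.le, ENNReal.ofReal_pow (by positivity)]
    have hK : ∀ x, ENNReal.ofReal ν * (((C * lam j).toNNReal : ℝ≥0∞) +
        ((C * lam j).toNNReal : ℝ≥0∞) * g x) + ((lam j).toNNReal : ℝ≥0∞) =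
        ENNReal.ofReal (lam j) * (ENNReal.ofReal (ν * C) * (1 + g x) + 1) := by
      intro x
      change ENNReal.ofReal ν * (ENNReal.ofReal (C * lam j) + ENNReal.ofReal (C * lam j) * g x)
        + ENNReal.ofReal (lam j) = _
      rw [ENNReal.ofReal_mul hC0.le, ENNReal.ofReal_mul hν0.le]
      ring
    simp only [hK] at h1
    rw [hvol] at h1
    have h2 : ∫⁻ x in E j, (ENNReal.ofReal (lam j) * (ENNReal.ofReal (ν * C) * (1 + g x) + 1)) ^ n
        = ENNReal.ofReal (lam j) ^ n *
          ∫⁻ x in E j, (ENNReal.ofReal (ν * C) * (1 + g x) + 1) ^ n := by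
      simp only [mul_pow (ENNReal.ofReal (lam j))]
      rw [lintegral_const_mul _ (by fun_prop)]
    rw [h2, mul_left_comm (8 ^ n)] at h1
    refine (ENNReal.mul_le_mul_iff_right ?_ ?_).1 h1
    · exact pow_ne_zero _ (by simpa using hl)
    · finiteness
  calc (J : ℝ≥0∞) * (ENNReal.ofReal η ^ n * volume (ball (0 : En n) 1))
      = ∑ j ∈ Finset.range J, (ENNReal.ofReal η ^ n * volume (ball (0 : En n) 1)) := by simp
    _ ≤ ∑ j ∈ Finset.range J,
        8 ^ n * ∫⁻ x in E j, (ENNReal.ofReal (ν * C) * (1 + g x) + 1) ^ n :=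
        Finset.sum_le_sum fun j hj => hone j (Finset.mem_range.1 hj)
    _ = 8 ^ n * ∫⁻ x in ⋃ j ∈ Finset.range J, E j,
          (ENNReal.ofReal (ν * C) * (1 + g x) + 1) ^ n := by
        rw [← Finset.mul_sum, lintegral_biUnion_finset _ fun j _ => hEm j]
        intro j hj k hk hjk
        rw [Finset.coe_range] at hj hk
        rcases lt_or_gt_of_ne hjk with h | h
        · exact hdisj j hj k hk h
        · exact (hdisj k hk j hj h).symm
    _ ≤ _ := by
        gcongr
        exact iUnion₂_subset fun j _ x hx => hx.1


lemma map_eq_sum (L : En n →L[ℝ] ℝ) (ξ : En n) :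
    L ξ = ∑ i, ξ i * L (EuclideanSpace.single i 1) := by
  conv_lhs => rw [← (EuclideanSpace.basisFun (Fin n) ℝ).sum_repr ξ]
  simp

lemma bilin_eq_quad (B : En n →L[ℝ] En n →L[ℝ] ℝ) (ξ : En n) :
    B ξ ξ = quad (Matrix.of fun i j => B (EuclideanSpace.single i 1) (EuclideanSpace.single j 1)) ξ
    := by
  have h1 : B ξ ξ = ∑ i, ξ i * B (EuclideanSpace.single i 1) ξ := map_eq_sum (B.flip ξ) ξ
  rw [h1, quad]
  refine Finset.sum_congr rfl fun i _ => ?_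
  rw [map_eq_sum (B _) ξ, Finset.mul_sum]
  refine Finset.sum_congr rfl fun j _ => ?_
  simp only [Matrix.of_apply]; ring

lemma taylor2_of_fderiv {f : En n → ℝ} {f' : En n → En n →L[ℝ] ℝ} {B : En n →L[ℝ] En n →L[ℝ] ℝ}
    {x : En n} (h1 : ∀ᶠ z in nhds x, HasFDerivAt f (f' z) z) (h2 : HasFDerivAt f' B x) :
    Taylor2 f x (WithLp.toLp 2 fun i => f' x (EuclideanSpace.single i 1))
      (Matrix.of fun i j => B (EuclideanSpace.single i 1) (EuclideanSpace.single j 1)) := by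
  have hsym : ∀ u w, B u w = B w u := fun u w =>
    second_derivative_symmetric_of_eventually_of_real h1 h2 u w
  refine ⟨fun i j => hsym _ _, fun ε hε => ?_⟩
  have h3 := h2.isLittleO.def hε
  obtain ⟨δ, hδ, hb⟩ := Metric.eventually_nhds_iff_ball.1 (h1.and h3)
  filter_upwards [ball_mem_nhds x hδ] with z hz
  set φ : En n → ℝ := fun w => f w - f' x (w - x) - B (w - x) (w - x) / 2 with hφ
  have hd : ∀ w ∈ ball x δ, HasFDerivAt φ (f' w - f' x - B (w - x)) w := by
    intro w hw
    have e1 := (hb w hw).1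
    have e2 : HasFDerivAt (fun w => w - x) (ContinuousLinearMap.id ℝ (En n)) w :=
      (hasFDerivAt_id w).sub_const x
    have e3 : HasFDerivAt (fun w => f' x (w - x)) (f' x) w := by
      exact (f' x).hasFDerivAt.comp w e2
    have e4 : HasFDerivAt (fun w => B (w - x)) B w := by
      exact B.hasFDerivAt.comp w e2
    have e5 := e4.clm_apply e2
    have e6 := (e1.sub e3).sub (e5.const_mul (1 / 2 : ℝ))
    refine (e6.congr_fderiv ?_).congr_of_eventuallyEq (Filter.Eventually.of_forall fun w => ?_)
    · ext u
      simp only [sub_apply, smul_apply,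
        add_apply, ContinuousLinearMap.comp_apply,
        ContinuousLinearMap.id_apply, ContinuousLinearMap.flip_apply, smul_eq_mul]
      rw [hsym u (w - x)]; ring
    · simp only [hφ, Pi.sub_apply]; ring
  have hbd : ∀ w ∈ closedBall x ‖z - x‖, ‖f' w - f' x - B (w - x)‖ ≤ ε * ‖z - x‖ := by
    intro w hw
    rw [mem_closedBall, dist_eq_norm] at hw
    rw [mem_ball, dist_eq_norm] at hz
    have := (hb w (by rw [mem_ball, dist_eq_norm]; linarith)).2
    refine this.trans ?_
    gcongr
  have hsub : closedBall x ‖z - x‖ ⊆ ball x δ := closedBall_subset_ball (by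
    simpa [dist_eq_norm] using hz)
  have hmv := (convex_closedBall x ‖z - x‖).norm_image_sub_le_of_norm_hasFDerivWithin_le
    (fun w hw => (hd w (hsub hw)).hasFDerivWithinAt) hbd
    (mem_closedBall_self (norm_nonneg _)) (by simp [dist_eq_norm] : z ∈ closedBall x ‖z - x‖)
  rw [← bilin_eq_quad]
  have hin : ⟪(WithLp.toLp 2 fun i => f' x (EuclideanSpace.single i 1) : En n), z - x⟫
      = f' x (z - x) := by
    rw [map_eq_sum (f' x), PiLp.inner_apply]
    simp
  rw [hin]
  simp only [hφ, Real.norm_eq_abs, sub_self, map_zero] at hmv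
  calc _ = _ := by congr 1; ring
    _ ≤ _ := hmv
    _ = _ := by ring

lemma taylor2_radial {F F1 : ℝ → ℝ} {F2 : ℝ} (x : En n) (h1 : ∀ s, HasDerivAt F (F1 s) s)
    (h2 : HasDerivAt F1 F2 (‖x‖ ^ 2)) :
    Taylor2 (fun z => F (‖z‖ ^ 2)) x ((2 * F1 (‖x‖ ^ 2)) • x)
      (Matrix.of fun i j => 4 * F2 * x i * x j + 2 * F1 (‖x‖ ^ 2) * (if i = j then 1 else 0)) := by
  obtain ⟨T, hTT⟩ : ∃ T : En n →L[ℝ] En n →L[ℝ] ℝ, T = innerSL ℝ := ⟨_, rfl⟩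
  have hT : ∀ u w, T u w = ⟪u, w⟫ := fun u w => by rw [hTT]; rfl
  have hs : ∀ z : En n, HasFDerivAt (fun z => ‖z‖ ^ 2) (2 • T z) z := fun z => by
    rw [hTT]; exact (hasStrictFDerivAt_norm_sq z).hasFDerivAt
  have e1 : ∀ z : En n, HasFDerivAt (fun z => F (‖z‖ ^ 2))
      (F1 (‖z‖ ^ 2) • (2 • T z)) z := fun z => (h1 _).comp_hasFDerivAt z (hs z)
  have e2 : HasFDerivAt (fun z : En n => F1 (‖z‖ ^ 2)) (F2 • (2 • T x)) x :=
    h2.comp_hasFDerivAt x (hs x)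
  have e3 : HasFDerivAt (fun z : En n => (2 • T z : En n →L[ℝ] ℝ)) (2 • T) x :=
    (2 • T).hasFDerivAt
  have e4 := e2.smul e3
  have := taylor2_of_fderiv (Filter.Eventually.of_forall e1) e4
  convert this using 1
  · ext i
    simp [hT, EuclideanSpace.inner_single_right]; ring
  · ext i j
    simp only [Matrix.of_apply, add_apply, smul_apply,
      ContinuousLinearMap.smulRight_apply, hT, EuclideanSpace.inner_single_right]
    rcases eq_or_ne i j with h | h <;> simp [h] <;> ring

lemma taylor2_of_C21 {v : En n × ℝ → ℝ} {Q : Set (En n × ℝ)} (hv : IsC21 v Q) {x : En n} {t : ℝ}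
    (hx : ∀ᶠ z in nhds x, (z, t) ∈ Q) :
    Taylor2 (fun z => v (z, t)) x (WithLp.toLp 2 fun i => Dx v i (x, t))
      (Matrix.of fun i j => Dxx v i j (x, t)) := by
  have e1 : ∀ᶠ z in nhds x, HasFDerivAt (fun z => v (z, t)) (fderiv ℝ (fun z => v (z, t)) z) z := by
    filter_upwards [hx] with z hz
    exact (hv.diff_x _ hz).hasFDerivAt
  have hxQ := hx.self_of_nhds
  have hrep : ∀ z, fderiv ℝ (fun z => v (z, t)) z
      = ∑ j, Dx v j (z, t) • (EuclideanSpace.proj j : En n →L[ℝ] ℝ) := by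
    intro z
    ext ξ
    rw [map_eq_sum]
    simp [Dx, mul_comm]
  have e2 : HasFDerivAt (fun z => fderiv ℝ (fun z => v (z, t)) z)
      (∑ j, (fderiv ℝ (fun z => Dx v j (z, t)) x).smulRight
        (EuclideanSpace.proj j : En n →L[ℝ] ℝ)) x := by
    simp only [hrep]
    refine HasFDerivAt.fun_sum fun j _ => ?_
    exact (hv.diff_xx j _ hxQ).hasFDerivAt.smul_const (EuclideanSpace.proj j : En n →L[ℝ] ℝ)
  have := taylor2_of_fderiv e1 e2
  refine cast ?_ this
  congr 1
  refine Matrix.ext fun i j => ?_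
  simp only [Matrix.of_apply, sum_apply, ContinuousLinearMap.smulRight_apply,
    smul_apply]
  simp [Pi.single_apply]
  rfl


lemma Taylor2.comp_scale {f : En n → ℝ} {x p : En n} {H : Matrix (Fin n) (Fin n) ℝ} {z : En n}
    {ρ : ℝ} (hρ : 0 < ρ) (hf : Taylor2 f (z + ρ • x) p H) :
    Taylor2 (fun w => f (z + ρ • w)) x (ρ • p) (ρ ^ 2 • H) := by
  refine ⟨fun i j => by simp [hf.1 i j], fun ε hε => ?_⟩
  have hc : Filter.Tendsto (fun w : En n => z + ρ • w) (nhds x) (nhds (z + ρ • x)) := by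
    have : Continuous (fun w : En n => z + ρ • w) := by fun_prop
    exact this.tendsto x
  filter_upwards [hc.eventually (hf.2 (ε / ρ ^ 2) (by positivity))] with w hw
  have e : z + ρ • w - (z + ρ • x) = ρ • (w - x) := by rw [smul_sub]; abel
  rw [e, quad_smul, inner_smul_right, norm_smul, mul_pow, Real.norm_eq_abs, sq_abs] at hw
  rw [quad_smul_mat, real_inner_smul_left]
  refine hw.trans_eq ?_
  field_simp

lemma Super.mono {ν : ℝ} {g : En n → ℝ≥0∞} {v : En n × ℝ → ℝ} {y : En n} {r t₁ t₂ : ℝ}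
    (hv : Super ν g v y r t₁ t₂) {y' : En n} {r' t₁' t₂' : ℝ} (hb : ball y' r' ⊆ ball y r)
    (h1 : t₁ ≤ t₁') (h2 : t₂' ≤ t₂) : Super ν g v y' r' t₁' t₂' where
  meas := hv.meas
  cont := hv.cont.mono (prod_mono hb (Icc_subset_Icc h1 h2))
  nonneg x hx t ht := hv.nonneg x (hb hx) t (Icc_subset_Icc h1 h2 ht)
  sup x hx t ht := hv.sup x (hb hx) t (Icc_subset_Icc h1 h2 ht)

lemma Super.scale {ν : ℝ} {g : En n → ℝ≥0∞} {v : En n × ℝ → ℝ} {y : En n} {r t₁ t₂ : ℝ}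
    (hv : Super ν g v y r t₁ t₂) {ρ c : ℝ} (hρ : 0 < ρ) (hc : 0 < c) (z : En n) (τ : ℝ)
    {y' : En n} {r' t₁' t₂' : ℝ} (hb : ∀ x ∈ ball y' r', z + ρ • x ∈ ball y r)
    (ht : ∀ t ∈ Icc t₁' t₂', τ + ρ ^ 2 * t ∈ Icc t₁ t₂) :
    Super ν (fun x => ENNReal.ofReal ρ * g (z + ρ • x))
      (fun X => c * v (z + ρ • X.1, τ + ρ ^ 2 * X.2)) y' r' t₁' t₂' where
  meas := by have := hv.meas; fun_prop
  cont := by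
    refine continuousOn_const.mul (hv.cont.comp (by fun_prop) ?_)
    rintro ⟨x, t⟩ ⟨hx, htt⟩
    exact ⟨hb x hx, ht t htt⟩
  nonneg x hx t htt := mul_nonneg hc.le (hv.nonneg _ (hb x hx) _ (ht t htt))
  sup x hx t htt := by
    obtain ⟨q, p, H, hq, hT, hs⟩ := hv.sup _ (hb x hx) _ (ht t htt)
    refine ⟨c * (ρ ^ 2 * q), c • (ρ • p), c • (ρ ^ 2 • H), ?_, ?_, ?_⟩
    · have h1 : HasDerivAt (fun s : ℝ => τ + ρ ^ 2 * s) (ρ ^ 2) t := by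
        simpa using ((hasDerivAt_id t).const_mul (ρ ^ 2)).const_add τ
      have h2 := (HasDerivAt.comp t hq h1).const_mul c
      refine (h2.congr_deriv (by ring))
    · have := (hT.comp_scale hρ).affine 0 c
      simpa using this
    · intro hg ε hε
      have hg' : g (z + ρ • x) ≠ ∞ := by
        intro h
        apply hg
        rw [h, ENNReal.mul_top (by simpa using hρ)]
      obtain ⟨a, ha, hle⟩ := hs hg' (ε / (c * ρ ^ 2)) (by positivity)
      refine ⟨a, ha, ?_⟩
      rw [tr2_smul, tr2_smul, ENNReal.toReal_mul, ENNReal.toReal_ofReal hρ.le, norm_smul,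
        norm_smul, Real.norm_of_nonneg hc.le, Real.norm_of_nonneg hρ.le]
      calc c * (ρ ^ 2 * tr2 a H) ≤ c * (ρ ^ 2 *
          (q + (g (z + ρ • x)).toReal * ‖p‖ + ε / (c * ρ ^ 2))) := by gcongr
        _ = _ := by field_simp

lemma lintegral_scale {g : En n → ℝ≥0∞} (hg : Measurable g) {ρ : ℝ} (hρ : 0 < ρ) (z : En n)
    (A B : Set (En n)) (hA : MeasurableSet A) (hB : MeasurableSet B)
    (hAB : ∀ x ∈ A, z + ρ • x ∈ B) :
    ∫⁻ x in A, (ENNReal.ofReal ρ * g (z + ρ • x)) ^ n ≤ ∫⁻ x in B, g x ^ n := by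
  have hm : Measurable (B.indicator fun x => g x ^ n) := (hg.pow_const n).indicator hB
  have h1 : ∫⁻ x, (B.indicator fun x => g x ^ n) (z + ρ • x) =
      ENNReal.ofReal (ρ ^ n)⁻¹ * ∫⁻ x, (B.indicator fun x => g x ^ n) x := by
    have e1 : ∫⁻ x, (B.indicator fun x => g x ^ n) (z + ρ • x) =
        ∫⁻ y, (B.indicator fun x => g x ^ n) (z + y) ∂(Measure.map (fun x => ρ • x) volume) := by
      rw [lintegral_map (by fun_prop) (by fun_prop)]
    rw [e1, Measure.map_addHaar_smul _ hρ.ne', lintegral_smul_measure, lintegral_add_left_eq_self]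
    simp only [finrank_euclideanSpace, Fintype.card_fin, smul_eq_mul]
    rw [abs_of_pos (by positivity)]
  calc ∫⁻ x in A, (ENNReal.ofReal ρ * g (z + ρ • x)) ^ n
      ≤ ∫⁻ x, ENNReal.ofReal ρ ^ n * (B.indicator fun x => g x ^ n) (z + ρ • x) := by
        rw [← lintegral_indicator hA]
        refine lintegral_mono fun x => ?_
        by_cases hx : x ∈ A
        · simp [hx, hAB x hx, mul_pow]
        · simp [hx]
    _ = ∫⁻ x in B, g x ^ n := by
        rw [lintegral_const_mul _ (by fun_prop), h1, lintegral_indicator hB, ← mul_assoc,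
          ← ENNReal.ofReal_pow hρ.le, ← ENNReal.ofReal_mul (by positivity),
          mul_inv_cancel₀ (by positivity)]
        simp

lemma tr2_radial (a : Matrix (Fin n) (Fin n) ℝ) (x : En n) (b c : ℝ) :
    tr2 a (Matrix.of fun i j => b * x i * x j + c * (if i = j then 1 else 0))
      = b * quad a x + c * ∑ i, a i i := by
  simp only [tr2, quad, Matrix.of_apply, mul_add, Finset.sum_add_distrib, Finset.mul_sum]
  congr 1
  · refine Finset.sum_congr rfl fun i _ => Finset.sum_congr rfl fun j _ => by ring
  · refine Finset.sum_congr rfl fun i _ => by simp; ring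

lemma Adm.quad_ge {ν : ℝ} {a : Matrix (Fin n) (Fin n) ℝ} (ha : Adm ν a) (x : En n) :
    ν⁻¹ * ‖x‖ ^ 2 ≤ quad a x := by
  rw [norm_sq_eq_sum]; exact ha.1 x

lemma Adm.entry {ν : ℝ} (hν : 0 ≤ ν) {a : Matrix (Fin n) (Fin n) ℝ} (ha : Adm ν a) (i j : Fin n) :
    |a i j| ≤ ν := by
  refine abs_le_of_sq_le_sq ?_ hν
  refine le_trans ?_ ha.2
  calc a i j ^ 2 ≤ ∑ j, a i j ^ 2 :=
        Finset.single_le_sum (f := fun j => a i j ^ 2) (fun _ _ => sq_nonneg _) (Finset.mem_univ j)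
    _ ≤ _ := Finset.single_le_sum (f := fun i => ∑ j, a i j ^ 2)
        (fun _ _ => Finset.sum_nonneg fun _ _ => sq_nonneg _) (Finset.mem_univ i)

lemma Adm.trace_le {ν : ℝ} (hν : 0 ≤ ν) {a : Matrix (Fin n) (Fin n) ℝ} (ha : Adm ν a) :
    |∑ i, a i i| ≤ n * ν := by
  calc |∑ i, a i i| ≤ ∑ i, |a i i| := Finset.abs_sum_le_sum_abs _ _
    _ ≤ ∑ i : Fin n, ν := Finset.sum_le_sum fun i _ => ha.entry hν i i
    _ = _ := by simp

lemma Adm.quad_le {ν : ℝ} (hν : 0 ≤ ν) {a : Matrix (Fin n) (Fin n) ℝ} (ha : Adm ν a) (x : En n) :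
    quad a x ≤ ν * ‖x‖ ^ 2 := by
  have h1 : quad a x ^ 2 ≤ ν ^ 2 * (‖x‖ ^ 2) ^ 2 := by
    have e1 : quad a x = ∑ q : Fin n × Fin n, a q.1 q.2 * (x q.1 * x q.2) := by
      rw [Fintype.sum_prod_type, quad]
      refine Finset.sum_congr rfl fun i _ => Finset.sum_congr rfl fun j _ => by ring
    have e2 : ∑ q : Fin n × Fin n, a q.1 q.2 ^ 2 ≤ ν ^ 2 := by
      rw [Fintype.sum_prod_type]; exact ha.2
    have e3 : ∑ q : Fin n × Fin n, (x q.1 * x q.2) ^ 2 = (‖x‖ ^ 2) ^ 2 := by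
      rw [Fintype.sum_prod_type, norm_sq_eq_sum, sq (∑ i, x i ^ 2), Finset.sum_mul_sum]
      refine Finset.sum_congr rfl fun i _ => Finset.sum_congr rfl fun j _ => by ring
    rw [e1]
    refine (Finset.sum_mul_sq_le_sq_mul_sq _ _ _).trans ?_
    rw [e3]
    gcongr
  rw [← mul_pow] at h1
  exact (abs_le_of_sq_le_sq' h1 (by positivity)).2


lemma unit_vol : ∃ w : ℝ, 0 < w ∧ volume (ball (0 : En n) 1) = ENNReal.ofReal w := by
  refine ⟨(volume (ball (0 : En n) 1)).toReal, ?_, ?_⟩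
  · exact ENNReal.toReal_pos (measure_ball_pos _ _ one_pos).ne' measure_ball_lt_top.ne
  · rw [ENNReal.ofReal_toReal measure_ball_lt_top.ne]

/-- Algebra behind the annulus barrier. -/
lemma barrier_alg {ν s Q T : ℝ} {N : ℝ} (hν : 1 ≤ ν) (h1 : 1 / 4 ≤ s) (h2 : s ≤ 1)
    (hQ1 : ν⁻¹ * s ≤ Q) (hQ2 : Q ≤ ν * s) (hT : |T| ≤ N * ν) :
    0 ≤ ((8 + (16 + 3 * N) * ν) ^ 2 * ν) * ((1 - s) * (s - 1 / 4)) ^ 2 +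
      (4 * (2 * (5 / 4 - 2 * s) ^ 2 - 4 * ((1 - s) * (s - 1 / 4))) * Q +
        2 * (2 * ((1 - s) * (s - 1 / 4)) * (5 / 4 - 2 * s)) * T) := by
  set B := (1 - s) * (s - 1 / 4) with hB
  set d := 5 / 4 - 2 * s with hd
  have hν0 : 0 < ν := by linarith
  have hB0 : 0 ≤ B := mul_nonneg (by linarith) (by linarith)
  have hdd : d ^ 2 = 9 / 16 - 4 * B := by rw [hB, hd]; ring
  have hdabs : |d| ≤ 3 / 4 := by rw [abs_le]; constructor <;> rw [hd] <;> linarith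
  have hQ3 : ν⁻¹ / 4 ≤ Q := by
    have : ν⁻¹ * (1 / 4) ≤ ν⁻¹ * s := by gcongr
    linarith
  have hQ4 : Q ≤ ν := by nlinarith
  have hinv : 0 < ν⁻¹ := by positivity
  have hinv1 : ν⁻¹ ≤ 1 := inv_le_one_of_one_le₀ hν
  have e1 : d ^ 2 * (ν⁻¹ / 4) ≤ d ^ 2 * Q := by gcongr
  have e2 : B * Q ≤ B * ν := by gcongr
  have e3 : -(B * (3 / 4 * (N * ν))) ≤ B * d * T := by
    have : |B * d * T| ≤ B * (3 / 4 * (N * ν)) := by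
      rw [mul_assoc, abs_mul B, abs_mul d, abs_of_nonneg hB0]
      gcongr
    exact (abs_le.1 this).1
  set M := 8 + (16 + 3 * N) * ν with hM
  have e4 : 0 ≤ M ^ 2 * ν * B ^ 2 - M * B + 9 / 8 * ν⁻¹ := by
    have : M ^ 2 * ν * B ^ 2 - M * B + 9 / 8 * ν⁻¹ = ν * (M * B - ν⁻¹ / 2) ^ 2 + 7 / 8 * ν⁻¹ := by
      field_simp; ring
    rw [this]; positivity
  have e5 : B * ν⁻¹ ≤ B * 1 := by gcongr
  rw [hdd] at e1
  rw [hdd]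
  have e6 : M * B = 8 * B + 16 * (B * ν) + 3 * (B * (N * ν)) := by rw [hM]; ring
  nlinarith

lemma lemA1 (hn : 0 < n) {ν : ℝ} (hν : 1 ≤ ν) : ∃ c δ : ℝ, 0 < c ∧ 0 < δ ∧
    ∀ (T : ℝ) (g : En n → ℝ≥0∞) (v : En n × ℝ → ℝ), 0 ≤ T → T ≤ 1 → Super ν g v 0 2 0 T →
      (∀ x ∈ ball (0 : En n) 1, 1 ≤ v (x, 0)) →
      ∫⁻ x in {x : En n | 1 / 2 < ‖x‖ ∧ ‖x‖ < 1}, g x ^ n ≤ ENNReal.ofReal δ →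
      ∀ x, ‖x‖ = 3 / 4 → ∀ t ∈ Icc (0 : ℝ) T, c ≤ v (x, t) := by
  have hν0 : 0 < ν := by linarith
  obtain ⟨w, hw, hvol⟩ := unit_vol (n := n)
  set lam : ℝ := (8 + (16 + 3 * (n : ℝ)) * ν) ^ 2 * ν with hlam
  have hlam0 : 0 ≤ lam := by positivity
  set μ : ℝ := Real.exp (-lam) * (35 / 256) ^ 2 with hμ
  have hμ0 : 0 < μ := by positivity
  have hμ1 : μ ≤ 1 := by
    have : Real.exp (-lam) ≤ 1 := Real.exp_le_one_iff.2 (by linarith)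
    rw [hμ]; nlinarith
  set η : ℝ := μ / 8 with hη
  have hη0 : 0 < η := by positivity
  refine ⟨μ / 2, (η / (64 * ν)) ^ n * w / 4, by positivity, by positivity, ?_⟩
  intro T g v hT0 hT1 hv hv1 hg xs hxs ts hts
  have hts1 : ts ≤ 1 := hts.2.trans hT1
  by_contra hlt
  push Not at hlt
  set F : ℝ → ℝ := fun s => ((1 - s) * (s - 1 / 4)) ^ 2 with hF
  set F1 : ℝ → ℝ := fun s => 2 * ((1 - s) * (s - 1 / 4)) * (5 / 4 - 2 * s) with hF1
  set F2 : ℝ → ℝ := fun s => 2 * (5 / 4 - 2 * s) ^ 2 - 4 * ((1 - s) * (s - 1 / 4)) with hF2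
  have hB : ∀ s : ℝ, HasDerivAt (fun s : ℝ => (1 - s) * (s - 1 / 4)) (5 / 4 - 2 * s) s := by
    intro s
    have := ((hasDerivAt_id s).const_sub 1).mul ((hasDerivAt_id s).sub_const (1 / 4))
    refine this.congr_deriv ?_
    simp; ring
  have hdF : ∀ s, HasDerivAt F (F1 s) s := by
    intro s
    refine ((hB s).pow 2).congr_deriv ?_
    simp [hF1]
  have hdF1 : ∀ s, HasDerivAt F1 (F2 s) s := by
    intro s
    have h2 : HasDerivAt (fun s : ℝ => 5 / 4 - 2 * s) (-2) s := by
      simpa using ((hasDerivAt_id s).const_mul (2 : ℝ)).const_sub (5 / 4)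
    refine (((hB s).const_mul 2).mul h2).congr_deriv ?_
    simp only [hF2]; ring
  set ψ : En n × ℝ → ℝ := fun X => Real.exp (-lam * X.2) * F (‖X.1‖ ^ 2) with hψ
  set D : Set (En n) := {x | 1 / 2 ≤ ‖x‖ ∧ ‖x‖ ≤ 1} with hD
  set E : Set (En n) := {x | 1 / 2 < ‖x‖ ∧ ‖x‖ < 1} with hE
  have hEo : IsOpen E := (isOpen_lt continuous_const continuous_norm).inter
    (isOpen_lt continuous_norm continuous_const)
  have hED : E ⊆ D := fun x hx => ⟨hx.1.le, hx.2.le⟩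
  have hDb : D ⊆ ball (0 : En n) 2 := fun x hx => by
    rw [mem_ball_zero_iff]; linarith [hx.2]
  have hDc : IsCompact D := by
    refine (isCompact_closedBall (0 : En n) 1).of_isClosed_subset ?_ fun x hx => by
      simpa using hx.2
    exact (isClosed_le continuous_const continuous_norm).inter
      (isClosed_le continuous_norm continuous_const)
  have hFc : Continuous F := by fun_prop
  have hfc : ContinuousOn (fun X => v X - ψ X) (D ×ˢ Icc 0 T) := by
    refine (hv.cont.mono (prod_mono hDb subset_rfl)).sub ?_
    have : Continuous ψ := by fun_prop
    exact this.continuousOn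
  have hsq : ∀ x ∈ D, 1 / 4 ≤ ‖x‖ ^ 2 ∧ ‖x‖ ^ 2 ≤ 1 := by
    intro x hx
    obtain ⟨h1, h2⟩ := hx
    constructor <;> nlinarith
  have key := abp1 hn hν hv D E (closedBall 0 η) hDb ψ 0 4 (η / 64).toNNReal (by norm_num)
    (by simp only [Real.toNNReal_pos]; positivity) (by
      intro p hp
      have hpn : ‖p‖ ≤ η := by simpa using hp
      obtain ⟨x, hx, t, ht, hc⟩ := exists_contact hDc isCompact_Icc
        ⟨xs, by rw [hD]; constructor <;> rw [hxs] <;> norm_num⟩ (nonempty_Icc.2 hT0) hfc p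
      have hxsD : xs ∈ D := by constructor <;> rw [hxs] <;> norm_num
      have hneg : v (x, t) - ψ (x, t) < 0 := by
        have h1 := hc xs hxsD ts hts
        have h2 : |⟪p, xs - x⟫| ≤ η * 2 := by
          refine (abs_real_inner_le_norm _ _).trans ?_
          gcongr
          refine (norm_sub_le _ _).trans ?_
          linarith [hx.2]
        have h3 : μ ≤ ψ (xs, ts) := by
          simp only [hψ, hF, hxs, hμ]
          have : Real.exp (-lam) ≤ Real.exp (-lam * ts) := Real.exp_le_exp.2 (by nlinarith [hts1])
          have e : ((1 - (3 / 4 : ℝ) ^ 2) * ((3 / 4) ^ 2 - 1 / 4)) ^ 2 = (35 / 256) ^ 2 := by norm_num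
          rw [e]
          gcongr
        have := (abs_le.1 h2).1
        simp only at h1
        linarith
      have hvn := hv.nonneg x (hDb hx) t ht
      have hx1 : ‖x‖ ≠ 1 := by
        intro h
        simp only [hψ, hF, h] at hneg
        norm_num at hneg
        linarith
      have hx2 : ‖x‖ ≠ 1 / 2 := by
        intro h
        simp only [hψ, hF, h] at hneg
        norm_num at hneg
        linarith
      have hxE : x ∈ E := ⟨lt_of_le_of_ne hx.1 hx2.symm, lt_of_le_of_ne hx.2 hx1⟩
      obtain ⟨hs1, hs2⟩ := hsq x hx
      have hB0 : 0 ≤ (1 - ‖x‖ ^ 2) * (‖x‖ ^ 2 - 1 / 4) := mul_nonneg (by linarith) (by linarith)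
      have hB1 : (1 - ‖x‖ ^ 2) * (‖x‖ ^ 2 - 1 / 4) ≤ 1 := by nlinarith
      have ht0 : 0 < t := by
        refine lt_of_le_of_ne ht.1 fun h => ?_
        subst h
        have h1 := hv1 x (by simpa using hxE.2)
        have h2 : ψ (x, 0) ≤ 1 := by
          simp only [hψ, hF]
          simp only [mul_zero, Real.exp_zero, one_mul]
          exact pow_le_one₀ hB0 hB1
        linarith
      have hexp1 : Real.exp (-lam * t) ≤ 1 := Real.exp_le_one_iff.2 (by nlinarith)
      refine ⟨x, hxE, t, ⟨ht0, ht.2⟩, Filter.mem_of_superset (hEo.mem_nhds hxE) hED, hc,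
        -lam * Real.exp (-lam * t) * F (‖x‖ ^ 2), Real.exp (-lam * t) • ((2 * F1 (‖x‖ ^ 2)) • x),
        Real.exp (-lam * t) • (Matrix.of fun i j => 4 * F2 (‖x‖ ^ 2) * x i * x j +
          2 * F1 (‖x‖ ^ 2) * (if i = j then 1 else 0)), ?_, ?_, ?_, ?_⟩
      · have h1 : HasDerivAt (fun s : ℝ => -lam * s) (-lam) t := by
          simpa using (hasDerivAt_id t).const_mul (-lam)
        have h2 := h1.exp.mul_const (F (‖x‖ ^ 2))
        exact h2.congr_deriv (by ring)
      · have := (taylor2_radial x hdF (hdF1 _)).affine 0 (Real.exp (-lam * t))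
        simpa [hψ] using this
      · intro a ha
        rw [tr2_smul, tr2_radial]
        have h1 := barrier_alg (N := n) hν hs1 hs2 (ha.quad_ge x)
          (ha.quad_le hν0.le x) (ha.trace_le hν0.le)
        have h2 : 0 ≤ Real.exp (-lam * t) * (lam * F (‖x‖ ^ 2) +
            (4 * F2 (‖x‖ ^ 2) * quad a x + 2 * F1 (‖x‖ ^ 2) * ∑ i, a i i)) :=
          mul_nonneg (Real.exp_pos _).le h1
        simp only [NNReal.coe_zero]
        linarith
      · have h1 : |F1 (‖x‖ ^ 2)| ≤ 3 / 2 := by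
          simp only [hF1]
          rw [abs_mul, abs_mul, abs_two, abs_of_nonneg hB0]
          have : |5 / 4 - 2 * ‖x‖ ^ 2| ≤ 3 / 4 := by rw [abs_le]; constructor <;> linarith
          calc 2 * ((1 - ‖x‖ ^ 2) * (‖x‖ ^ 2 - 1 / 4)) * |5 / 4 - 2 * ‖x‖ ^ 2|
              ≤ 2 * 1 * (3 / 4) := by gcongr
            _ = 3 / 2 := by norm_num
        have h2 : ‖Real.exp (-lam * t) • ((2 * F1 (‖x‖ ^ 2)) • x)‖ ≤ 1 * ((2 * (3 / 2)) * 1) := by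
          rw [norm_smul, norm_smul, Real.norm_of_nonneg (Real.exp_pos _).le, Real.norm_eq_abs,
            abs_mul, abs_two]
          gcongr
          exact hx.2
        refine (norm_add_le _ _).trans ?_
        simp only [NNReal.coe_ofNat]
        linarith)
  have hEw : volume E ≤ ENNReal.ofReal w := by
    rw [← hvol]
    exact measure_mono fun x hx => by simpa using hx.2
  have h1 : volume (closedBall (0 : En n) η) = ENNReal.ofReal (η ^ n * w) := by
    rw [Measure.addHaar_closedBall _ _ hη0.le, hvol, ENNReal.ofReal_mul (by positivity)]
    simp
  have h2 : 8 ^ n * ∫⁻ x in E, (ENNReal.ofReal ν * ((0 : NNReal) + (4 : NNReal) * g x)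
      + ((η / 64).toNNReal : ℝ≥0∞)) ^ n ≤ ENNReal.ofReal (16 ^ n * ((η / 64) ^ n * w +
        (4 * ν) ^ n * ((η / (64 * ν)) ^ n * w / 4))) := by
    have e1 : ∀ x, ENNReal.ofReal ν * ((0 : NNReal) + (4 : NNReal) * g x)
      + ((η / 64).toNNReal : ℝ≥0∞) = ENNReal.ofReal (η / 64) + ENNReal.ofReal (4 * ν) * g x := by
      intro x
      rw [ENNReal.ofReal_mul (by norm_num), add_comm]
      change ENNReal.ofReal (η / 64) + _ = _
      simp only [ENNReal.coe_zero, zero_add]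
      congr 1
      rw [← mul_assoc, mul_comm (ENNReal.ofReal ν)]
      norm_num
    simp only [e1]
    calc _ ≤ 8 ^ n * (2 ^ n * (ENNReal.ofReal (η / 64) ^ n * volume E +
          ENNReal.ofReal (4 * ν) ^ n * ∫⁻ x in E, g x ^ n)) := by
          gcongr; exact int_add_pow_le hv.meas _ _ _
      _ ≤ 8 ^ n * (2 ^ n * (ENNReal.ofReal (η / 64) ^ n * ENNReal.ofReal w +
          ENNReal.ofReal (4 * ν) ^ n * ENNReal.ofReal ((η / (64 * ν)) ^ n * w / 4))) := by
          gcongr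
      _ = _ := by
          rw [ENNReal.ofReal_mul (show (0 : ℝ) ≤ 16 ^ n by positivity),
            ENNReal.ofReal_add (by positivity) (by positivity),
            ENNReal.ofReal_mul (show (0 : ℝ) ≤ (η / 64) ^ n by positivity),
            ENNReal.ofReal_mul (show (0 : ℝ) ≤ (4 * ν) ^ n by positivity),
            ENNReal.ofReal_pow (show (0 : ℝ) ≤ 16 by norm_num),
            ENNReal.ofReal_pow (show (0 : ℝ) ≤ η / 64 by positivity),
            ENNReal.ofReal_pow (show (0 : ℝ) ≤ 4 * ν by positivity), ← mul_assoc,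
            ← mul_pow]
          norm_num
  rw [h1] at key
  have h3 := key.trans h2
  rw [ENNReal.ofReal_le_ofReal_iff (by positivity)] at h3
  have h4 : (16 : ℝ) ^ n * ((η / 64) ^ n * w + (4 * ν) ^ n * ((η / (64 * ν)) ^ n * w / 4))
      = ((1 / 4) ^ n + 1 / 4) * (η ^ n * w) := by
    have e1 : (16 : ℝ) ^ n * (η / 64) ^ n = (1 / 4) ^ n * η ^ n := by
      rw [← mul_pow, ← mul_pow]; congr 1; ring
    have e2 : (16 : ℝ) ^ n * ((4 * ν) ^ n * (η / (64 * ν)) ^ n) = η ^ n := by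
      rw [← mul_pow, ← mul_pow]; congr 1; field_simp; norm_num
    linear_combination w * e1 + w / 4 * e2
  have h5 : ((1 : ℝ) / 4) ^ n ≤ 1 / 4 := pow_le_of_le_one (by norm_num) (by norm_num) hn.ne'
  have h6 : 0 < η ^ n * w := by positivity
  rw [h4] at h3
  nlinarith


lemma int_bd {g : En n → ℝ≥0∞} (hg : Measurable g) (D : Set (En n)) {V S C ν : ℝ} (hC : 0 ≤ C)
    (hν : 0 ≤ ν) (hV0 : 0 ≤ V) (hS0 : 0 ≤ S) (hV : volume D ≤ ENNReal.ofReal V)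
    (hS : ∫⁻ x in D, g x ^ n ≤ ENNReal.ofReal S) :
    8 ^ n * ∫⁻ x in D, (ENNReal.ofReal (ν * C) * (1 + g x) + 1) ^ n ≤
      ENNReal.ofReal (16 ^ n * ((ν * C + 1) ^ n * V + (ν * C) ^ n * S)) := by
  have e1 : ∀ x, ENNReal.ofReal (ν * C) * (1 + g x) + 1 =
      ENNReal.ofReal (ν * C + 1) + ENNReal.ofReal (ν * C) * g x := by
    intro x
    rw [ENNReal.ofReal_add (show (0 : ℝ) ≤ ν * C by positivity) zero_le_one, ENNReal.ofReal_one]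
    ring
  simp only [e1]
  calc _ ≤ 8 ^ n * (2 ^ n * (ENNReal.ofReal (ν * C + 1) ^ n * volume D +
          ENNReal.ofReal (ν * C) ^ n * ∫⁻ x in D, g x ^ n)) := by
          gcongr; exact int_add_pow_le hg _ _ _
    _ ≤ 8 ^ n * (2 ^ n * (ENNReal.ofReal (ν * C + 1) ^ n * ENNReal.ofReal V +
          ENNReal.ofReal (ν * C) ^ n * ENNReal.ofReal S)) := by
          gcongr
    _ = _ := by
          rw [ENNReal.ofReal_mul (show (0 : ℝ) ≤ 16 ^ n by positivity),
            ENNReal.ofReal_add (show (0 : ℝ) ≤ (ν * C + 1) ^ n * V by positivity) (by positivity),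
            ENNReal.ofReal_mul (show (0 : ℝ) ≤ (ν * C + 1) ^ n by positivity),
            ENNReal.ofReal_mul (show (0 : ℝ) ≤ (ν * C) ^ n by positivity),
            ENNReal.ofReal_pow (show (0 : ℝ) ≤ 16 by norm_num),
            ENNReal.ofReal_pow (show (0 : ℝ) ≤ ν * C + 1 by positivity),
            ENNReal.ofReal_pow (show (0 : ℝ) ≤ ν * C by positivity), ← mul_assoc,
            ← mul_pow]
          norm_num

lemma J_bd {g : En n → ℝ≥0∞} (hg : Measurable g) (D : Set (En n)) {V S C ν η w : ℝ} {J : ℕ}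
    (hC : 0 ≤ C) (hη : 0 ≤ η) (hw : 0 ≤ w)
    (hν : 0 ≤ ν) (hV0 : 0 ≤ V) (hS0 : 0 ≤ S) (hV : volume D ≤ ENNReal.ofReal V)
    (hS : ∫⁻ x in D, g x ^ n ≤ ENNReal.ofReal S)
    (hvol : volume (ball (0 : En n) 1) = ENNReal.ofReal w)
    (h : (J : ℝ≥0∞) * (ENNReal.ofReal η ^ n * volume (ball (0 : En n) 1)) ≤
      8 ^ n * ∫⁻ x in D, (ENNReal.ofReal (ν * C) * (1 + g x) + 1) ^ n) :
    J * (η ^ n * w) ≤ 16 ^ n * ((ν * C + 1) ^ n * V + (ν * C) ^ n * S) := by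
  have h1 := h.trans (int_bd hg D hC hν hV0 hS0 hV hS)
  rw [hvol, ← ENNReal.ofReal_pow hη, ← ENNReal.ofReal_mul (by positivity),
    ← ENNReal.ofReal_natCast, ← ENNReal.ofReal_mul (by positivity),
    ENNReal.ofReal_le_ofReal_iff (by positivity)] at h1
  exact h1

lemma geom_sep {q C η : ℝ} (hq : 0 < q) (hq1 : q ≤ 1) (hC : 0 ≤ C) (h : q * C < η) {j k : ℕ}
    (hjk : j < k) : q ^ k * C < q ^ j * η := by
  have h1 : q ^ k ≤ q ^ (j + 1) := pow_le_pow_of_le_one hq.le hq1 hjk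
  have h2 : 0 < q ^ j := by positivity
  calc q ^ k * C ≤ q ^ (j + 1) * C := by gcongr
    _ = q ^ j * (q * C) := by ring
    _ < q ^ j * η := by gcongr

lemma taylor2_zero (x : En n) : Taylor2 (fun _ => (0 : ℝ)) x 0 0 := by
  refine ⟨fun i j => rfl, fun ε hε => Filter.Eventually.of_forall fun z => ?_⟩
  simp [quad]; positivity

lemma lemA2 (hn : 0 < n) {ν : ℝ} (hν : 1 ≤ ν) {g : En n → ℝ≥0∞} {v : En n × ℝ → ℝ}
    {T : ℝ} (hT : 0 ≤ T) (hv : Super ν g v 0 2 0 T) {S : ℝ} (hS0 : 0 ≤ S)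
    (hS : ∫⁻ x in closedBall 0 (3 / 4), g x ^ n ≤ ENNReal.ofReal S) (c : ℝ)
    (hlat : ∀ x, ‖x‖ = 3 / 4 → ∀ t ∈ Icc (0 : ℝ) T, c ≤ v (x, t))
    (hbot : ∀ x ∈ closedBall (0 : En n) (3 / 4), c ≤ v (x, 0)) :
    ∀ x ∈ closedBall (0 : En n) (3 / 4), ∀ t ∈ Icc (0 : ℝ) T, c ≤ v (x, t) := by
  intro xs hxs ts hts
  by_contra hlt
  push Not at hlt
  obtain ⟨w, hw, hvol⟩ := unit_vol (n := n)
  set d := c - v (xs, ts) with hd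
  have hd0 : 0 < d := by rw [hd]; linarith
  set e : En n := EuclideanSpace.single (⟨0, hn⟩ : Fin n) (1 : ℝ) with he
  have he1 : ‖e‖ = 1 := by simp [he]
  have hDb : closedBall (0 : En n) (3 / 4) ⊆ ball 0 2 := closedBall_subset_ball (by norm_num)
  obtain ⟨J, hJ⟩ := exists_nat_gt (16 ^ n * ((ν * (5 / 4) + 1) ^ n * w + (ν * (5 / 4)) ^ n * S) /
    ((1 / 4) ^ n * w))
  have key := multi hn hν hv hT (closedBall 0 (3 / 4)) (isCompact_closedBall _ _)
    ⟨xs, hxs⟩ hDb (fun _ => 0) (fun _ => 0) (fun _ => 0) (fun _ => 0) (fun _ => 0)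
    (fun j => d / 8 * (1 / 6) ^ j) J e (1 / 4) (5 / 4) (fun t => hasDerivAt_const _ _)
    continuousOn_const (fun x _ => taylor2_zero x) (fun j _ => by positivity)
    (fun j k hjk _ => by
      have := geom_sep (q := 1 / 6) (C := 5 / 4) (η := 1 / 4) (by norm_num) (by norm_num)
        (by norm_num) (by norm_num) hjk
      have h2 : 0 < d / 8 := by positivity
      simp only [mul_assoc]
      gcongr) (by norm_num)
    (fun x _ => by simp only [zero_add]; rw [he1]; norm_num)
    (fun x _ => by simp only [norm_zero]; rw [he1]; norm_num)
    (fun j _ x _ t _ a _ => by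
      have : tr2 a 0 = 0 := by simp [tr2]
      simp only [this]
      have : 0 < d / 8 * (1 / 6) ^ j := by positivity
      linarith)
    (by
      intro j _ p hp x hx t ht hc
      have hl : d / 8 * (1 / 6) ^ j ≤ d / 8 :=
        mul_le_of_le_one_right (by positivity) (pow_le_one₀ (by norm_num) (by norm_num))
      have hl0 : 0 < d / 8 * (1 / 6) ^ j := by positivity
      set l := d / 8 * (1 / 6) ^ j with hldef
      have hpn : ‖p‖ ≤ d / 4 := by
        have h1 : ‖p - l • e‖ ≤ l * (1 / 4) := by simpa [dist_eq_norm] using hp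
        have h2 : ‖l • e‖ = l := by rw [norm_smul, he1, Real.norm_of_nonneg hl0.le, mul_one]
        have h3 : ‖p‖ ≤ ‖p - l • e‖ + ‖l • e‖ := by
          simpa using norm_add_le (p - l • e) (l • e)
        linarith
      have h1 := hc xs hxs ts hts
      have hxn : ‖x‖ ≤ 3 / 4 := by simpa using hx
      have hxsn : ‖xs‖ ≤ 3 / 4 := by simpa using hxs
      have h2 : |⟪p, xs - x⟫| ≤ d / 4 * (3 / 2) := by
        refine (abs_real_inner_le_norm _ _).trans ?_
        gcongr
        refine (norm_sub_le _ _).trans ?_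
        linarith
      have h3 := (abs_le.1 h2).1
      simp only [mul_zero, add_zero, sub_zero] at h1
      have h4 : v (x, t) < c := by linarith
      constructor
      · refine lt_of_le_of_ne ht.1 fun h => ?_
        subst h
        linarith [hbot x hx]
      · have : ‖x‖ < 3 / 4 := lt_of_le_of_ne hxn fun h => by linarith [hlat x h t ht]
        exact Filter.mem_of_superset (isOpen_ball.mem_nhds (by simpa using this))
          ball_subset_closedBall)
  have hV : volume (closedBall (0 : En n) (3 / 4)) ≤ ENNReal.ofReal w := by
    rw [← hvol]; exact measure_mono (closedBall_subset_ball (by norm_num))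
  have := J_bd hv.meas _ (by norm_num) (by norm_num) hw.le (by linarith) hw.le hS0 hV hS hvol key
  rw [div_lt_iff₀ (by positivity)] at hJ
  linarith

/-- Local positivity at the centre. -/
lemma lemA12 (hn : 0 < n) {ν : ℝ} (hν : 1 ≤ ν) : ∃ c δ : ℝ, 0 < c ∧ c ≤ 1 ∧ 0 < δ ∧
    ∀ (T : ℝ) (g : En n → ℝ≥0∞) (v : En n × ℝ → ℝ), 0 ≤ T → T ≤ 1 → Super ν g v 0 2 0 T →
      (∀ x ∈ ball (0 : En n) 1, 1 ≤ v (x, 0)) →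
      ∫⁻ x in ball (0 : En n) 2, g x ^ n ≠ ∞ →
      ∫⁻ x in {x : En n | 1 / 2 < ‖x‖ ∧ ‖x‖ < 1}, g x ^ n ≤ ENNReal.ofReal δ →
      ∀ t ∈ Icc (0 : ℝ) T, c ≤ v (0, t) := by
  obtain ⟨c, δ, hc, hδ, h⟩ := lemA1 hn hν
  refine ⟨min c 1, δ, by positivity, min_le_right _ _, hδ, fun T g v hT0 hT1 hv h1 hfin hg t ht => ?_⟩
  refine lemA2 hn hν hT0 hv (S := (∫⁻ x in ball (0 : En n) 2, g x ^ n).toReal) ENNReal.toReal_nonneg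
    ?_ (min c 1) ?_ ?_ 0 (by simp; norm_num) t ht
  · rw [ENNReal.ofReal_toReal hfin]
    exact lintegral_mono_set (closedBall_subset_ball (by norm_num))
  · intro x hx t ht
    exact (min_le_left _ _).trans (h T g v hT0 hT1 hv h1 hg x hx t ht)
  · intro x hx
    refine (min_le_right _ _).trans (h1 x ?_)
    exact closedBall_subset_ball (by norm_num) hx


lemma lemA3 (hn : 0 < n) {ν : ℝ} (hν : 1 ≤ ν) (S : ℝ) : ∃ c T₁ : ℝ, 0 < c ∧ c ≤ 1 ∧ 0 < T₁ ∧ T₁ ≤ 1 ∧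
    ∀ (T : ℝ) (g : En n → ℝ≥0∞) (v : En n × ℝ → ℝ), 0 ≤ T → T ≤ T₁ → Super ν g v 0 2 0 T →
      (∀ x ∈ ball (0 : En n) 1, 1 ≤ v (x, 0)) →
      ∫⁻ x in ball (0 : En n) 2, g x ^ n ≤ ENNReal.ofReal S →
      ∀ t ∈ Icc (0 : ℝ) T, c ≤ v (0, t) := by
  obtain ⟨c, δ, hc, hc1, hδ, h⟩ := lemA12 hn hν
  obtain ⟨N, hN⟩ := exists_nat_gt (max (S / δ) 0)
  have hN0 : 0 < N := by exact_mod_cast (le_max_right _ _).trans_lt hN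
  replace hN := (le_max_left _ _).trans_lt hN
  rw [div_lt_iff₀ hδ] at hN
  refine ⟨c, (1 / 4) ^ N, hc, hc1, by positivity, pow_le_one₀ (by norm_num) (by norm_num), ?_⟩
  intro T g v hT0 hT1 hv hv1 hg t ht
  set A : ℕ → Set (En n) := fun k => {x | (1 / 2) ^ (k + 1) < ‖x‖ ∧ ‖x‖ < (1 / 2) ^ k} with hA
  have hAm : ∀ k, MeasurableSet (A k) := fun k =>
    ((isOpen_lt continuous_const continuous_norm).inter
      (isOpen_lt continuous_norm continuous_const)).measurableSet
  have hAd : ∀ j k, j < k → Disjoint (A j) (A k) := by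
    intro j k hjk
    rw [Set.disjoint_left]
    intro x hx hx'
    have h1 : (1 / 2 : ℝ) ^ k ≤ (1 / 2) ^ (j + 1) :=
      pow_le_pow_of_le_one (by norm_num) (by norm_num) hjk
    linarith [hx.1, hx'.2]
  have hex : ∃ k < N, ∫⁻ x in A k, g x ^ n ≤ ENNReal.ofReal δ := by
    by_contra hcon
    push Not at hcon
    have h1 : ∫⁻ x in ⋃ k ∈ Finset.range N, A k, g x ^ n =
        ∑ k ∈ Finset.range N, ∫⁻ x in A k, g x ^ n :=
      lintegral_biUnion_finset (fun j _ k _ hjk => by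
        rcases lt_or_gt_of_ne hjk with h | h
        · exact hAd j k h
        · exact (hAd k j h).symm) (fun k _ => hAm k) _
    have h2 : ∑ k ∈ Finset.range N, ENNReal.ofReal δ ≤ ∑ k ∈ Finset.range N, ∫⁻ x in A k, g x ^ n :=
      Finset.sum_le_sum fun k hk => (hcon k (Finset.mem_range.1 hk)).le
    have h3 : ∫⁻ x in ⋃ k ∈ Finset.range N, A k, g x ^ n ≤ ∫⁻ x in ball (0 : En n) 2, g x ^ n := by
      refine lintegral_mono_set ?_
      intro x hx
      simp only [mem_iUnion] at hx
      obtain ⟨k, _, hk⟩ := hx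
      have : (1 / 2 : ℝ) ^ k ≤ 1 := pow_le_one₀ (by norm_num) (by norm_num)
      rw [mem_ball_zero_iff]
      linarith [hk.2]
    have h4 := h2.trans (h1.symm.le.trans (h3.trans hg))
    rw [Finset.sum_const, Finset.card_range, nsmul_eq_mul, ← ENNReal.ofReal_natCast,
      ← ENNReal.ofReal_mul (by positivity)] at h4
    rw [ENNReal.ofReal_le_ofReal_iff'] at h4
    rcases h4 with h4 | h4
    · linarith
    · have : 0 < (N : ℝ) * δ := by have : 0 < (N : ℝ) := by exact_mod_cast hN0
                                   positivity
      linarith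
  obtain ⟨k, hkN, hk⟩ := hex
  set ρ : ℝ := (1 / 2) ^ k with hρ
  have hρ0 : 0 < ρ := by positivity
  have hρ1 : ρ ≤ 1 := pow_le_one₀ (by norm_num) (by norm_num)
  have hρ2 : (1 / 4 : ℝ) ^ N ≤ ρ ^ 2 := by
    have : ρ ^ 2 = (1 / 4) ^ k := by rw [hρ, ← pow_mul, mul_comm, pow_mul]; norm_num
    rw [this]
    exact pow_le_pow_of_le_one (by norm_num) (by norm_num) hkN.le
  have hsc := hv.scale hρ0 (c := 1) one_pos 0 0 (y' := 0) (r' := 2) (t₁' := 0) (t₂' := T / ρ ^ 2)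
    (by
      intro x hx
      rw [mem_ball_zero_iff] at hx ⊢
      rw [zero_add, norm_smul, Real.norm_of_nonneg hρ0.le]
      nlinarith [norm_nonneg x])
    (by
      intro t ht
      have h2 := ht.2
      rw [le_div_iff₀ (by positivity)] at h2
      constructor
      · have := ht.1
        positivity
      · linarith)
  have hT' : T / ρ ^ 2 ≤ 1 := by
    rw [div_le_one (by positivity)]; linarith
  have h5 := h (T / ρ ^ 2) _ _ (by positivity) hT' hsc
    (by
      intro x hx
      simp only [one_mul, zero_add, mul_zero]
      refine hv1 _ ?_
      rw [mem_ball_zero_iff] at hx ⊢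
      rw [norm_smul, Real.norm_of_nonneg hρ0.le]
      nlinarith [norm_nonneg x])
    (by
      refine ne_top_of_le_ne_top ENNReal.ofReal_ne_top ((lintegral_scale hv.meas hρ0 0 _ (ball 0 2)
        measurableSet_ball measurableSet_ball ?_).trans hg)
      intro x hx
      rw [mem_ball_zero_iff] at hx ⊢
      rw [zero_add, norm_smul, Real.norm_of_nonneg hρ0.le]
      nlinarith [norm_nonneg x])
    (by
      refine (lintegral_scale hv.meas hρ0 0 _ (A k) ?_ (hAm k) ?_).trans hk
      · have := hAm 0
        simpa [hA] using this
      · intro x hx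
        simp only [zero_add, hA, mem_ofPred_eq] at hx ⊢
        rw [norm_smul, Real.norm_of_nonneg hρ0.le]
        constructor
        · rw [pow_succ]; change ρ * (1 / 2) < _; nlinarith [hx.1]
        · change _ < ρ; nlinarith [hx.2])
    (t / ρ ^ 2) ⟨by have := ht.1; positivity, by gcongr; exact ht.2⟩
  have h6 : ρ ^ 2 * (t / ρ ^ 2) = t := by field_simp
  simpa [h6] using h5

lemma lemA3' (hn : 0 < n) {ν : ℝ} (hν : 1 ≤ ν) (S : ℝ) : ∃ c T₁ : ℝ, 0 < c ∧ c ≤ 1 ∧ 0 < T₁ ∧ T₁ ≤ 1 ∧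
    ∀ (T m τ ρ : ℝ) (z : En n) (g : En n → ℝ≥0∞) (v : En n × ℝ → ℝ), 0 ≤ T → T ≤ T₁ → 0 ≤ m → 0 < ρ →
      Super ν g v z (2 * ρ) τ (τ + T * ρ ^ 2) →
      (∀ x ∈ ball z ρ, m ≤ v (x, τ)) →
      ∫⁻ x in ball z (2 * ρ), g x ^ n ≤ ENNReal.ofReal S →
      ∀ t ∈ Icc τ (τ + T * ρ ^ 2), c * m ≤ v (z, t) := by
  obtain ⟨c, T₁, hc, hc1, hT, hT1, h⟩ := lemA3 hn hν S
  refine ⟨c, T₁, hc, hc1, hT, hT1, fun T m τ ρ z g v h0 h1 hm hρ hv hv1 hg t ht => ?_⟩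
  rcases hm.eq_or_lt with rfl | hm
  · rw [mul_zero]; exact hv.nonneg z (mem_ball_self (by positivity)) t ht
  have hin : ∀ r, ∀ x ∈ ball (0 : En n) r, z + ρ • x ∈ ball z (r * ρ) := by
    intro r x hx
    rw [mem_ball_zero_iff] at hx
    rw [mem_ball, dist_eq_norm, add_sub_cancel_left, norm_smul, Real.norm_of_nonneg hρ.le]
    nlinarith
  have hsc := hv.scale hρ (c := m⁻¹) (by positivity) z τ (y' := 0) (r' := 2) (t₁' := 0) (t₂' := T)
    (hin 2) (by
      intro t ht
      constructor
      · have := ht.1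
        have : 0 ≤ ρ ^ 2 * t := by positivity
        linarith
      · have := ht.2
        have : ρ ^ 2 * t ≤ ρ ^ 2 * T := by gcongr
        linarith)
  have h5 := h T _ _ h0 h1 hsc
    (by
      intro x hx
      simp only [mul_zero, add_zero]
      have hx1 := hin 1 x hx
      rw [one_mul] at hx1
      have := hv1 (z + ρ • x) hx1
      rw [inv_mul_eq_div, le_div_iff₀ hm]; linarith)
    ((lintegral_scale hv.meas hρ z _ _ measurableSet_ball measurableSet_ball (hin 2)).trans hg)
    ((t - τ) / ρ ^ 2) ⟨by have := ht.1; exact div_nonneg (by linarith) (by positivity), by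
      rw [div_le_iff₀ (by positivity)]; linarith [ht.2]⟩
  have h6 : τ + ρ ^ 2 * ((t - τ) / ρ ^ 2) = t := by field_simp; ring
  simp only [h6, smul_zero, add_zero] at h5
  rw [inv_mul_eq_div, le_div_iff₀ hm] at h5
  exact h5

lemma lemA4 (hn : 0 < n) {ν : ℝ} (hν : 1 ≤ ν) (S : ℝ) : ∃ c T₁ : ℝ, 0 < c ∧ c ≤ 1 ∧ 0 < T₁ ∧ T₁ ≤ 1 ∧
    ∀ (T m : ℝ) (z : En n) (g : En n → ℝ≥0∞) (v : En n × ℝ → ℝ), 0 ≤ T → T ≤ T₁ → 0 ≤ m →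
      Super ν g v z 2 0 T →
      (∀ x ∈ ball z 1, m ≤ v (x, 0)) →
      ∫⁻ x in ball z 2, g x ^ n ≤ ENNReal.ofReal S →
      ∀ x ∈ closedBall z (1 / 2), ∀ t ∈ Icc 0 T, c * m ≤ v (x, t) := by
  obtain ⟨c, T₁, hc, hc1, hT, hT1, h⟩ := lemA3' hn hν S
  refine ⟨c, T₁ / 4, hc, hc1, by positivity, by linarith, fun T m z g v h0 h1 hm hv hv1 hg x hx t ht => ?_⟩
  have hx' : dist x z ≤ 1 / 2 := hx
  have hb : ball x (2 * (1 / 2)) ⊆ ball z 2 := ball_subset_ball' (by linarith)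
  have e : 0 + 4 * T * (1 / 2) ^ 2 = T := by ring
  refine h (4 * T) m 0 (1 / 2) x g v (by linarith) (by linarith) hm (by norm_num) ?_ ?_ ?_ t ?_
  · exact hv.mono hb le_rfl e.le
  · intro x' hx'
    exact hv1 x' (ball_subset_ball' (by linarith) hx')
  · exact (lintegral_mono_set hb).trans hg
  · rw [e]; exact ht


set_option maxHeartbeats 1000000 in
lemma lemB0 (hn : 0 < n) {ν : ℝ} (hν : 1 ≤ ν) (S : ℝ) : ∃ c K : ℝ, 0 < c ∧ c ≤ 1 ∧ 1 ≤ K ∧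
    ∀ (g : En n → ℝ≥0∞) (v : En n × ℝ → ℝ), Super ν g v 0 5 0 K →
      (∀ x ∈ closedBall (0 : En n) 1, ∀ t ∈ Icc 0 K, 1 ≤ v (x, t)) →
      ∫⁻ x in ball (0 : En n) 5, g x ^ n ≤ ENNReal.ofReal S →
      ∀ x, 1 ≤ ‖x‖ → ‖x‖ ≤ 3 → c ≤ v (x, K) := by
  have hν0 : 0 < ν := by linarith
  obtain ⟨w, hw, hvol⟩ := unit_vol (n := n)
  set m : ℝ := n * ν ^ 2 + 1 with hm
  have hm1 : 1 ≤ m := by rw [hm]; have : 0 ≤ (n : ℝ) * ν ^ 2 := by positivity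
                         linarith
  have hm0 : 0 < m := by linarith
  set E : ℝ := Real.exp (-(16 * m)) with hE
  have hE0 : 0 < E := Real.exp_pos _
  have hE1 : E ≤ 1 := Real.exp_le_one_iff.2 (by linarith)
  set d : ℝ := Real.exp (-(9 * m)) - E with hd
  have hdE : E ≤ d := by
    have h1 : Real.exp (-(9 * m)) = Real.exp (7 * m) * E := by
      rw [hE, ← Real.exp_add]; congr 1; ring
    have h2 : 2 ≤ Real.exp (7 * m) := by linarith [Real.add_one_le_exp (7 * m)]
    rw [hd, h1]; nlinarith
  have hd1 : d ≤ 1 := by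
    have : Real.exp (-(9 * m)) ≤ 1 := Real.exp_le_one_iff.2 (by linarith)
    rw [hd]; linarith
  set η : ℝ := E / 16 with hη
  have hη0 : 0 < η := by positivity
  set C : ℝ := 8 * m + 1 with hC
  have hC0 : 0 < C := by positivity
  set q : ℝ := η / (2 * C) with hq
  have hq0 : 0 < q := by positivity
  have hqC : q * C = η / 2 := by rw [hq]; field_simp
  have hq1 : q ≤ 1 := by
    rw [hq, div_le_one (by positivity)]; rw [hη, hC]; linarith
  set S' : ℝ := max S 0 with hS'
  have hS0 : 0 ≤ S' := le_max_right _ _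
  obtain ⟨J, hJ⟩ := exists_nat_gt (16 ^ n * ((ν * C + 1) ^ n * (5 ^ n * w) + (ν * C) ^ n * S') /
    (η ^ n * w))
  have hqJ : 0 < q ^ J := by positivity
  have hqJ1 : q ^ J ≤ 1 := pow_le_one₀ hq0.le hq1
  refine ⟨q ^ J * d / 4, (q ^ J)⁻¹, by have := hE0.trans_le hdE; positivity, by
    have := mul_le_mul hqJ1 hd1 (hE0.le.trans hdE) zero_le_one
    linarith, (one_le_inv₀ hqJ).2 hqJ1, ?_⟩
  intro g v hv hv1 hg xs hxs1 hxs3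
  by_contra hlt
  push Not at hlt
  set K : ℝ := (q ^ J)⁻¹ with hK
  have hK0 : 0 < K := by positivity
  set D : Set (En n) := {x | 1 ≤ ‖x‖ ∧ ‖x‖ ≤ 4} with hD
  have hDb : D ⊆ ball (0 : En n) 5 := fun x hx => by
    rw [mem_ball_zero_iff]; linarith [hx.2]
  have hDc : IsCompact D := by
    refine (isCompact_closedBall (0 : En n) 4).of_isClosed_subset ?_ fun x hx => by
      simpa using hx.2
    exact (isClosed_le continuous_const continuous_norm).inter
      (isClosed_le continuous_norm continuous_const)
  have hxsD : xs ∈ D := ⟨hxs1, by linarith⟩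
  set F : ℝ → ℝ := fun s => Real.exp (-m * s) - E with hF
  set F1 : ℝ → ℝ := fun s => -m * Real.exp (-m * s) with hF1
  set F2 : ℝ → ℝ := fun s => m ^ 2 * Real.exp (-m * s) with hF2
  have hde : ∀ s, HasDerivAt (fun s : ℝ => Real.exp (-m * s)) (-m * Real.exp (-m * s)) s := by
    intro s
    have h1 : HasDerivAt (fun s : ℝ => -m * s) (-m) s := by
      simpa using (hasDerivAt_id s).const_mul (-m)
    exact h1.exp.congr_deriv (by ring)
  have hdF : ∀ s, HasDerivAt F (F1 s) s := fun s => (hde s).sub_const E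
  have hdF1 : ∀ s, HasDerivAt F1 (F2 s) s := fun s =>
    ((hde s).const_mul (-m)).congr_deriv (by simp only [hF2]; ring)
  have hFc : Continuous F := by fun_prop
  have hsq : ∀ x ∈ D, 1 ≤ ‖x‖ ^ 2 ∧ ‖x‖ ^ 2 ≤ 16 := by
    intro x hx
    obtain ⟨h1, h2⟩ := hx
    constructor <;> nlinarith
  have hexp : ∀ x ∈ D, E ≤ Real.exp (-m * ‖x‖ ^ 2) ∧ Real.exp (-m * ‖x‖ ^ 2) ≤ 1 := by
    intro x hx
    obtain ⟨h1, h2⟩ := hsq x hx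
    refine ⟨Real.exp_le_exp.2 (by nlinarith), Real.exp_le_one_iff.2 (by nlinarith)⟩
  have hpn : ∀ x ∈ D, ‖(2 * F1 (‖x‖ ^ 2)) • x‖ = 2 * m * Real.exp (-m * ‖x‖ ^ 2) * ‖x‖ := by
    intro x _
    rw [norm_smul, Real.norm_eq_abs, hF1]
    simp only
    rw [show 2 * (-m * Real.exp (-m * ‖x‖ ^ 2)) = -(2 * m * Real.exp (-m * ‖x‖ ^ 2)) by ring,
      abs_neg, abs_of_nonneg (by positivity)]
  have hlam1 : ∀ j, q ^ j ≤ 1 := fun j => pow_le_one₀ hq0.le hq1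
  have key := multi hn hν hv hK0.le D hDc ⟨xs, hxsD⟩ hDb (fun t => (t - K) / K) (fun _ => 1 / K)
    (fun x => F (‖x‖ ^ 2)) (fun x => (2 * F1 (‖x‖ ^ 2)) • x)
    (fun x => Matrix.of fun i j => 4 * F2 (‖x‖ ^ 2) * x i * x j +
          2 * F1 (‖x‖ ^ 2) * (if i = j then 1 else 0))
    (fun j => q ^ j) J 0 η C
    (fun t => ((hasDerivAt_id t).sub_const K).div_const K)
    (by fun_prop) (fun x _ => taylor2_radial x hdF (hdF1 _)) (fun j _ => by positivity)
    (fun j k hjk _ => geom_sep hq0 hq1 hC0.le (by linarith) hjk) hη0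
    (fun x hx => by
      rw [add_zero, hpn x hx]
      obtain ⟨h1, -⟩ := hexp x hx
      have : 2 * 1 * E * 1 ≤ 2 * m * Real.exp (-m * ‖x‖ ^ 2) * ‖x‖ := by
        gcongr
        exact hx.1
      rw [hη]; linarith)
    (fun x hx => by
      rw [norm_zero, hpn x hx]
      obtain ⟨-, h1⟩ := hexp x hx
      have : 2 * m * Real.exp (-m * ‖x‖ ^ 2) * ‖x‖ ≤ 2 * m * 1 * 4 := by
        gcongr
        exact hx.2
      rw [hη, hC]; linarith)
    (fun j hj x hx t ht a ha => by
      rw [tr2_radial]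
      have h1 : 1 / K ≤ q ^ j := by
        rw [hK, one_div, inv_inv]; exact pow_le_pow_of_le_one hq0.le hq1 hj.le
      have h2 : 0 ≤ 4 * F2 (‖x‖ ^ 2) * quad a x + 2 * F1 (‖x‖ ^ 2) * ∑ i, a i i := by
        have e1 := ha.quad_ge x
        have e2 := (abs_le.1 (ha.trace_le hν0.le)).2
        obtain ⟨h1, -⟩ := hsq x hx
        have e3 : ν⁻¹ * 1 ≤ ν⁻¹ * ‖x‖ ^ 2 := by gcongr
        have e4 : n * ν ≤ m * ν⁻¹ := by
          rw [← div_eq_mul_inv, le_div_iff₀ hν0, hm]; nlinarith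
        have e5 : 0 ≤ m * (quad a x) * 2 - ∑ i, a i i := by
          have : m * ν⁻¹ ≤ m * quad a x := by gcongr; linarith
          have : 0 < m * ν⁻¹ := by positivity
          linarith
        have : 4 * F2 (‖x‖ ^ 2) * quad a x + 2 * F1 (‖x‖ ^ 2) * ∑ i, a i i =
          2 * m * Real.exp (-m * ‖x‖ ^ 2) * (m * (quad a x) * 2 - ∑ i, a i i) := by
          simp only [hF2, hF1]; ring
        rw [this]; positivity
      have h3 : 0 < q ^ j := by positivity
      have h4 : 1 * q ^ j ≤ C * q ^ j := by gcongr; rw [hC]; linarith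
      have := mul_nonneg h3.le h2
      linarith)
    (by
      intro j hj p hp x hx t ht hc
      have hl0 : 0 < q ^ j := by positivity
      have hl1 := hlam1 j
      have hlJ : q ^ J ≤ q ^ j := pow_le_pow_of_le_one hq0.le hq1 hj.le
      set l := q ^ j with hldef
      have hpn : ‖p‖ ≤ l * η := by simpa using hp
      have h1 := hc xs hxsD K ⟨hK0.le, le_rfl⟩
      have h2 : |⟪p, xs - x⟫| ≤ l * η * 7 := by
        refine (abs_real_inner_le_norm _ _).trans ?_
        gcongr
        refine (norm_sub_le _ _).trans ?_
        linarith [hx.2]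
      have h3 := (abs_le.1 h2).1
      have h4 : d ≤ F (‖xs‖ ^ 2) := by
        rw [hd, hF]
        have : Real.exp (-(9 * m)) ≤ Real.exp (-m * ‖xs‖ ^ 2) := by
          refine Real.exp_le_exp.2 ?_
          have : ‖xs‖ ^ 2 ≤ 9 := by nlinarith
          nlinarith
        simp only
        linarith
      simp only [sub_self, zero_div, zero_add] at h1
      have h5 : l * d ≤ l * F (‖xs‖ ^ 2) := by gcongr
      have h6 : q ^ J * d ≤ l * d := by gcongr; linarith
      have h7 : l * η * 7 ≤ l * d * (7 / 16) := by
        have : l * E ≤ l * d := by gcongr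
        rw [hη]; linarith
      have h8 : 0 < l * d := by have := hE0.trans_le hdE; positivity
      have hneg : v (x, t) < (t - K) / K + l * F (‖x‖ ^ 2) := by linarith
      obtain ⟨hx1, hx2⟩ := hexp x hx
      have hF0 : 0 ≤ F (‖x‖ ^ 2) := by simp only [hF]; linarith
      have hFl : l * F (‖x‖ ^ 2) ≤ 1 := by
        have : F (‖x‖ ^ 2) ≤ 1 := by simp only [hF]; linarith
        exact mul_le_one₀ hl1 hF0 this
      have hvn := hv.nonneg x (hDb hx) t ht
      have hth : (t - K) / K ≤ 0 := div_nonpos_of_nonpos_of_nonneg (by linarith [ht.2]) hK0.le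
      constructor
      · refine lt_of_le_of_ne ht.1 fun h => ?_
        rw [← h, zero_sub, neg_div, div_self hK0.ne'] at hneg
        rw [← h] at hvn
        linarith
      · have hn1 : ‖x‖ ≠ 1 := fun h => by
          have := hv1 x (by simp [h]) t ht
          linarith
        have hn4 : ‖x‖ ≠ 4 := fun h => by
          have : F (‖x‖ ^ 2) = 0 := by
            simp only [hF, h, hE]
            rw [sub_eq_zero]; congr 1; ring
          rw [this] at hneg
          linarith
        have ho : IsOpen {x : En n | 1 < ‖x‖ ∧ ‖x‖ < 4} :=
          (isOpen_lt continuous_const continuous_norm).inter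
            (isOpen_lt continuous_norm continuous_const)
        exact Filter.mem_of_superset (ho.mem_nhds ⟨lt_of_le_of_ne hx.1 hn1.symm,
          lt_of_le_of_ne hx.2 hn4⟩) fun z hz => ⟨hz.1.le, hz.2.le⟩)
  have hV : volume D ≤ ENNReal.ofReal (5 ^ n * w) := by
    refine (measure_mono hDb).trans ?_
    rw [Measure.addHaar_ball_of_pos _ _ (by norm_num), hvol, ENNReal.ofReal_mul (by positivity)]
    simp
  have := J_bd hv.meas D hC0.le hη0.le hw.le hν0.le (by positivity) hS0 hV
    ((lintegral_mono_set hDb).trans (hg.trans (ENNReal.ofReal_le_ofReal (le_max_left S 0)))) hvol key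
  rw [div_lt_iff₀ (by positivity)] at hJ
  linarith


lemma scale_mem {z : En n} {ρ : ℝ} (hρ : 0 < ρ) {r : ℝ} {x : En n} (hx : x ∈ ball (0 : En n) r) :
    z + ρ • x ∈ ball z (r * ρ) := by
  rw [mem_ball_zero_iff] at hx
  rw [mem_ball, dist_eq_norm, add_sub_cancel_left, norm_smul, Real.norm_of_nonneg hρ.le]
  nlinarith

lemma Super.normalize {ν : ℝ} {g : En n → ℝ≥0∞} {v : En n × ℝ → ℝ} {z : En n} {ρ R τ T c : ℝ}
    (hρ : 0 < ρ) (hc : 0 < c) (hv : Super ν g v z (R * ρ) τ (τ + T * ρ ^ 2)) :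
    Super ν (fun x => ENNReal.ofReal ρ * g (z + ρ • x))
      (fun X => c * v (z + ρ • X.1, τ + ρ ^ 2 * X.2)) 0 R 0 T := by
  refine hv.scale hρ hc z τ (fun x hx => scale_mem hρ hx) fun t ht => ?_
  constructor
  · have := ht.1
    have : 0 ≤ ρ ^ 2 * t := by positivity
    linarith
  · have := ht.2
    have : ρ ^ 2 * t ≤ ρ ^ 2 * T := by gcongr
    linarith

lemma scale_back {z x : En n} {ρ : ℝ} (hρ : 0 < ρ) : z + ρ • (ρ⁻¹ • (x - z)) = x := by
  rw [smul_smul, mul_inv_cancel₀ hρ.ne', one_smul]; abel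

lemma norm_back {z x : En n} {ρ : ℝ} (hρ : 0 < ρ) : ‖ρ⁻¹ • (x - z)‖ = ‖x - z‖ / ρ := by
  rw [norm_smul, norm_inv, Real.norm_of_nonneg hρ.le]; field_simp

lemma lemB0' (hn : 0 < n) {ν : ℝ} (hν : 1 ≤ ν) (S : ℝ) : ∃ c K : ℝ, 0 < c ∧ c ≤ 1 ∧ 1 ≤ K ∧
    ∀ (m τ ρ : ℝ) (z : En n) (g : En n → ℝ≥0∞) (v : En n × ℝ → ℝ), 0 ≤ m → 0 < ρ →
      Super ν g v z (5 * ρ) τ (τ + K * ρ ^ 2) →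
      (∀ x ∈ closedBall z ρ, ∀ t ∈ Icc τ (τ + K * ρ ^ 2), m ≤ v (x, t)) →
      ∫⁻ x in ball z (5 * ρ), g x ^ n ≤ ENNReal.ofReal S →
      ∀ x, ρ ≤ ‖x - z‖ → ‖x - z‖ ≤ 3 * ρ → c * m ≤ v (x, τ + K * ρ ^ 2) := by
  obtain ⟨c, K, hc, hc1, hK, h⟩ := lemB0 hn hν S
  refine ⟨c, K, hc, hc1, hK, fun m τ ρ z g v hm hρ hv hv1 hg x hx1 hx3 => ?_⟩
  rcases hm.eq_or_lt with rfl | hm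
  · rw [mul_zero]
    refine hv.nonneg x ?_ _ ⟨?_, le_rfl⟩
    · rw [mem_ball, dist_eq_norm]; linarith
    · have : 0 ≤ K * ρ ^ 2 := by positivity
      linarith
  have h5 := h _ _ (hv.normalize hρ (inv_pos.2 hm))
    (by
      intro x hx t ht
      rw [mem_closedBall_zero_iff] at hx
      have h1 : z + ρ • x ∈ closedBall z ρ := by
        rw [mem_closedBall, dist_eq_norm, add_sub_cancel_left, norm_smul, Real.norm_of_nonneg hρ.le]
        nlinarith
      have h2 : τ + ρ ^ 2 * t ∈ Icc τ (τ + K * ρ ^ 2) := by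
        constructor
        · have := ht.1
          have : 0 ≤ ρ ^ 2 * t := by positivity
          linarith
        · have := ht.2
          have : ρ ^ 2 * t ≤ ρ ^ 2 * K := by gcongr
          linarith
      have := hv1 _ h1 _ h2
      simp only
      rw [inv_mul_eq_div, le_div_iff₀ hm]; linarith)
    ((lintegral_scale hv.meas hρ z _ _ measurableSet_ball measurableSet_ball
      (fun x hx => scale_mem hρ hx)).trans hg)
    (ρ⁻¹ • (x - z)) (by rw [norm_back hρ, le_div_iff₀ hρ]; linarith)
    (by rw [norm_back hρ, div_le_iff₀ hρ]; linarith)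
  simp only [scale_back hρ] at h5
  rw [inv_mul_eq_div, le_div_iff₀ hm, mul_comm (ρ ^ 2)] at h5
  exact h5

lemma lemB1 (hn : 0 < n) {ν : ℝ} (hν : 1 ≤ ν) (S : ℝ) : ∃ c K : ℝ, 0 < c ∧ c ≤ 1 ∧ 1 ≤ K ∧
    ∀ (m t₀ t₂ a ε : ℝ) (z : En n) (g : En n → ℝ≥0∞) (v : En n × ℝ → ℝ), 0 ≤ m → 0 < ε →
      5 / 2 * ε ≤ a → a + 4 * ε ≤ 2 →
      Super ν g v z 2 t₀ t₂ →
      (∀ x ∈ ball z a, ∀ t ∈ Icc t₀ t₂, m ≤ v (x, t)) →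
      ∫⁻ x in ball z 2, g x ^ n ≤ ENNReal.ofReal S →
      ∀ x ∈ ball z (a + ε), ∀ t ∈ Icc (t₀ + K * ε ^ 2) t₂, c * m ≤ v (x, t) := by
  obtain ⟨c, K, hc, hc1, hK, h⟩ := lemB0' hn hν S
  refine ⟨c, K, hc, hc1, hK, fun m t₀ t₂ a ε z g v hm hε ha ha2 hv hv1 hg x hx t ht => ?_⟩
  have hKε : 0 < K * ε ^ 2 := by positivity
  rw [mem_ball, dist_eq_norm] at hx
  rcases lt_or_ge ‖x - z‖ a with hxa | hxa
  · have := hv1 x (by rw [mem_ball, dist_eq_norm]; exact hxa) t ⟨by linarith [ht.1], ht.2⟩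
    nlinarith
  set R := ‖x - z‖ with hR
  have hR0 : 0 < R := by linarith
  set z' : En n := z + (1 - 5 / 2 * ε / R) • (x - z) with hz'
  have hfr : 0 ≤ 1 - 5 / 2 * ε / R := by
    rw [sub_nonneg, div_le_one hR0]; linarith
  have h1 : dist z' z = R - 5 / 2 * ε := by
    rw [dist_eq_norm, hz', add_sub_cancel_left, norm_smul, Real.norm_of_nonneg hfr, ← hR]
    field_simp
  have h2 : ‖x - z'‖ = 5 / 2 * ε := by
    have : x - z' = (5 / 2 * ε / R) • (x - z) := by
      rw [hz', sub_smul, one_smul]; abel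
    rw [this, norm_smul, Real.norm_of_nonneg (by positivity), ← hR]
    field_simp
  have hb : ball z' (5 * ε) ⊆ ball z 2 := ball_subset_ball' (by rw [h1]; linarith)
  have e : t - K * ε ^ 2 + K * ε ^ 2 = t := by ring
  have := h m (t - K * ε ^ 2) ε z' g v hm hε
    (hv.mono hb (by linarith [ht.1]) (by rw [e]; exact ht.2))
    (by
      intro x' hx' t' ht'
      rw [e] at ht'
      refine hv1 x' ?_ t' ⟨by linarith [ht.1, ht'.1], ht'.2.trans ht.2⟩
      exact closedBall_subset_ball' (by rw [h1]; linarith) hx')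
    ((lintegral_mono_set hb).trans hg) x (by rw [h2]; linarith) (by rw [h2]; linarith)
  rwa [e] at this

lemma lemStep0 (hn : 0 < n) {ν : ℝ} (hν : 1 ≤ ν) (S : ℝ) : ∃ T₁ : ℝ, 0 < T₁ ∧ T₁ ≤ 1 ∧
    ∀ κ, 0 < κ → κ ≤ T₁ → ∃ c, 0 < c ∧ c ≤ 1 ∧
    ∀ (κ' m : ℝ) (z : En n) (g : En n → ℝ≥0∞) (v : En n × ℝ → ℝ), 0 ≤ m → κ / 2 ≤ κ' → κ' ≤ κ →
      Super ν g v z 2 0 κ' →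
      (∀ x ∈ ball z 1, m ≤ v (x, 0)) →
      ∫⁻ x in ball z 2, g x ^ n ≤ ENNReal.ofReal S →
      ∀ x ∈ ball z (3 / 2), c * m ≤ v (x, κ') := by
  obtain ⟨c₁, T₁, hc₁, hc₁1, hT₁, hT₁1, hA⟩ := lemA4 hn hν S
  obtain ⟨c₂, K, hc₂, hc₂1, hK, hB⟩ := lemB1 hn hν S
  refine ⟨T₁, hT₁, hT₁1, fun κ hκ hκT => ?_⟩
  obtain ⟨M, hM⟩ := exists_nat_gt (max (2 * K / κ) 6)
  have hM6 : (6 : ℝ) < M := (le_max_right _ _).trans_lt hM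
  have hMK : 2 * K / κ < M := (le_max_left _ _).trans_lt hM
  rw [div_lt_iff₀ hκ] at hMK
  have hM0 : (0 : ℝ) < M := by linarith
  refine ⟨c₂ ^ M * c₁, by positivity, mul_le_one₀ (pow_le_one₀ hc₂.le hc₂1) hc₁.le hc₁1, ?_⟩
  intro κ' m z g v hm hκ1 hκ2 hv hv1 hg
  have hκ0 : 0 < κ' := by linarith
  set ε : ℝ := 1 / M with hε
  have hε0 : 0 < ε := by positivity
  have hε6 : ε ≤ 1 / 6 := by
    rw [hε]; exact one_div_le_one_div_of_le (by norm_num) hM6.le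
  have hMε : M * ε = 1 := by rw [hε]; field_simp
  have h0 := hA κ' m z g v hκ0.le (hκ2.trans hκT) hm hv hv1 hg
  have hKε : 0 < K * ε ^ 2 := by positivity
  have hind : ∀ k : ℕ, k ≤ M → ∀ x ∈ ball z (1 / 2 + k * ε), ∀ t ∈ Icc (k * (K * ε ^ 2)) κ',
      c₂ ^ k * (c₁ * m) ≤ v (x, t) := by
    intro k
    induction k with
    | zero =>
      intro _ x hx t ht
      simp only [Nat.cast_zero, zero_mul, add_zero, pow_zero, one_mul] at *
      exact h0 x (ball_subset_closedBall hx) t ht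
    | succ k ih =>
      intro hk x hx t ht
      have hk' : (k : ℝ) + 1 ≤ M := by exact_mod_cast hk
      have hkε : (k : ℝ) * ε + ε ≤ 1 := by nlinarith
      have hkε0 : 0 ≤ (k : ℝ) * ε := by positivity
      have hkK : 0 ≤ (k : ℝ) * (K * ε ^ 2) := by positivity
      push_cast at hx ht
      have := hB (c₂ ^ k * (c₁ * m)) (k * (K * ε ^ 2)) κ' (1 / 2 + k * ε) ε z g v (by positivity) hε0
        (by linarith) (by linarith) (hv.mono subset_rfl hkK le_rfl)
        (ih (by omega)) hg x (by convert hx using 2; ring) t ⟨by linarith [ht.1], ht.2⟩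
      rw [pow_succ]
      linarith
  intro x hx
  have := hind M le_rfl x (by rw [hMε]; convert hx using 2; norm_num) κ' ⟨by
    have : (M : ℝ) * (K * ε ^ 2) = K * ε := by
      linear_combination (K * ε) * hMε
    rw [this, hε, mul_one_div, div_le_iff₀ hM0]
    nlinarith, le_rfl⟩
  linarith

/-- One step: expansion of a ball by a factor `3/2` in time `κ' ρ²`. -/
lemma lemStep (hn : 0 < n) {ν : ℝ} (hν : 1 ≤ ν) (S : ℝ) : ∃ T₁ : ℝ, 0 < T₁ ∧ T₁ ≤ 1 ∧
    ∀ κ, 0 < κ → κ ≤ T₁ → ∃ c, 0 < c ∧ c ≤ 1 ∧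
    ∀ (κ' m τ ρ : ℝ) (z : En n) (g : En n → ℝ≥0∞) (v : En n × ℝ → ℝ), 0 ≤ m → 0 < ρ →
      κ / 2 ≤ κ' → κ' ≤ κ → Super ν g v z (2 * ρ) τ (τ + κ' * ρ ^ 2) →
      (∀ x ∈ ball z ρ, m ≤ v (x, τ)) →
      ∫⁻ x in ball z (2 * ρ), g x ^ n ≤ ENNReal.ofReal S →
      ∀ x ∈ ball z (3 / 2 * ρ), c * m ≤ v (x, τ + κ' * ρ ^ 2) := by
  obtain ⟨T₁, hT, hT1, h⟩ := lemStep0 hn hν S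
  refine ⟨T₁, hT, hT1, fun κ hκ hκT => ?_⟩
  obtain ⟨c, hc, hc1, h⟩ := h κ hκ hκT
  refine ⟨c, hc, hc1, fun κ' m τ ρ z g v hm hρ h1 h2 hv hv1 hg x hx => ?_⟩
  rw [mem_ball, dist_eq_norm] at hx
  have h5 := h κ' m 0 _ _ hm h1 h2 (hv.normalize hρ one_pos)
    (by
      intro x hx
      have hx1 := scale_mem (z := z) hρ hx
      rw [one_mul] at hx1
      have := hv1 (z + ρ • x) hx1
      simp only [mul_zero, add_zero]
      linarith)
    ((lintegral_scale hv.meas hρ z _ _ measurableSet_ball measurableSet_ball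
      (fun x hx => scale_mem hρ hx)).trans hg)
    (ρ⁻¹ • (x - z)) (by rw [mem_ball_zero_iff, norm_back hρ, div_lt_iff₀ hρ]; linarith)
  simp only [scale_back hρ] at h5
  rw [one_mul, mul_comm (ρ ^ 2)] at h5
  exact h5


/-- The step property with constants `κ`, `c` for a given supersolution on the unit cylinder. -/
def StepP (κ c T : ℝ) (v : En n × ℝ → ℝ) : Prop :=
  ∀ (κ' m τ ρ : ℝ) (z : En n), 0 ≤ m → 0 < ρ → κ / 2 ≤ κ' → κ' ≤ κ → ‖z‖ + 2 * ρ ≤ 1 → 0 ≤ τ →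
    τ + κ' * ρ ^ 2 ≤ T → (∀ x ∈ ball z ρ, m ≤ v (x, τ)) →
    ∀ x ∈ ball z (3 / 2 * ρ), c * m ≤ v (x, τ + κ' * ρ ^ 2)

lemma phase1 {κ c T : ℝ} {v : En n × ℝ → ℝ} (hκ : 0 < κ) (hc : 0 < c) (hc1 : c ≤ 1)
    (h : StepP κ c T v) : ∀ (k : ℕ) (ρ t m : ℝ) (z : En n), 0 < ρ → 4 / 9 ≤ ρ * (9 / 8) ^ k →
      ‖z‖ + 2 * ρ ≤ 1 → 0 ≤ m → 0 ≤ t → t + 64 / 17 * κ * (1 / 4 - ρ ^ 2) + κ / 4 ≤ T →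
      (∀ x ∈ ball z ρ, m ≤ v (x, t)) →
      ∃ t', t ≤ t' ∧ t' ≤ t + 64 / 17 * κ * (1 / 4 - ρ ^ 2) + κ / 4 ∧
        ∀ x ∈ ball (0 : En n) (1 / 2), c ^ (k + 1) * m ≤ v (x, t') := by
  have big : ∀ (k : ℕ) (ρ t m : ℝ) (z : En n), 0 < ρ → 4 / 9 ≤ ρ →
      ‖z‖ + 2 * ρ ≤ 1 → 0 ≤ m → 0 ≤ t → t + 64 / 17 * κ * (1 / 4 - ρ ^ 2) + κ / 4 ≤ T →
      (∀ x ∈ ball z ρ, m ≤ v (x, t)) →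
      ∃ t', t ≤ t' ∧ t' ≤ t + 64 / 17 * κ * (1 / 4 - ρ ^ 2) + κ / 4 ∧
        ∀ x ∈ ball (0 : En n) (1 / 2), c ^ (k + 1) * m ≤ v (x, t') := by
    intro k ρ t m z hρ hρ4 hz hm ht htT hv
    have hz0 := norm_nonneg z
    have hρ2 : ρ ^ 2 ≤ 1 / 4 := by nlinarith
    have e1 : 0 ≤ 64 / 17 * κ * (1 / 4 - ρ ^ 2) := mul_nonneg (by positivity) (by linarith)
    have e2 : κ * ρ ^ 2 ≤ κ * (1 / 4) := by gcongr
    have e3 : 0 ≤ κ * ρ ^ 2 := by positivity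
    refine ⟨t + κ * ρ ^ 2, by linarith, by linarith, fun x hx => ?_⟩
    have h1 := h κ m t ρ z hm hρ (by linarith) le_rfl hz ht (by linarith) hv x (by
      rw [mem_ball_zero_iff] at hx
      rw [mem_ball, dist_eq_norm]
      have := norm_sub_le x z
      linarith)
    have h2 : c ^ (k + 1) ≤ c := pow_le_of_le_one hc.le hc1 (by omega)
    have h3 : c ^ (k + 1) * m ≤ c * m := by gcongr
    linarith
  intro k
  induction k with
  | zero =>
    intro ρ t m z hρ hk
    rw [pow_zero, mul_one] at hk
    exact big 0 ρ t m z hρ hk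
  | succ k ih =>
    intro ρ t m z hρ hk hz hm ht htT hv
    rcases le_or_gt (4 / 9) ρ with h4 | h4
    · exact big (k + 1) ρ t m z hρ h4 hz hm ht htT hv
    have hz0 := norm_nonneg z
    have hρ2 : ρ ^ 2 ≤ 1 / 4 := by nlinarith
    have hρ3 : (9 / 8 * ρ) ^ 2 ≤ 1 / 4 := by nlinarith
    have e1 : 0 ≤ 64 / 17 * κ * (1 / 4 - (9 / 8 * ρ) ^ 2) := mul_nonneg (by positivity) (by linarith)
    have e2 : 64 / 17 * κ * (1 / 4 - (9 / 8 * ρ) ^ 2) + κ * ρ ^ 2 = 64 / 17 * κ * (1 / 4 - ρ ^ 2) := by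
      ring
    have e3 : 0 ≤ κ * ρ ^ 2 := by positivity
    set s : ℝ := (1 - 9 / 4 * ρ) / (1 - 2 * ρ) with hs
    have hd : 0 < 1 - 2 * ρ := by linarith
    have hs0 : 0 ≤ s := div_nonneg (by linarith) hd.le
    have hs1 : 1 - s = (ρ / 4) / (1 - 2 * ρ) := by
      rw [hs, eq_div_iff hd.ne', sub_mul, div_mul_cancel₀ _ hd.ne']; ring
    have hs2 : 0 ≤ 1 - s := by rw [hs1]; positivity
    have hz1 : ‖s • z‖ ≤ 1 - 9 / 4 * ρ := by
      rw [norm_smul, Real.norm_of_nonneg hs0]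
      calc s * ‖z‖ ≤ s * (1 - 2 * ρ) := by gcongr; linarith
        _ = _ := by rw [hs, div_mul_cancel₀ _ hd.ne']
    have hz2 : ‖s • z - z‖ ≤ ρ / 4 := by
      have : s • z - z = -((1 - s) • z) := by rw [sub_smul, one_smul]; abel
      rw [this, norm_neg, norm_smul, Real.norm_of_nonneg hs2]
      calc (1 - s) * ‖z‖ ≤ (1 - s) * (1 - 2 * ρ) := by gcongr; linarith
        _ = _ := by rw [hs1, div_mul_cancel₀ _ hd.ne']
    have hst := h κ m t ρ z hm hρ (by linarith) le_rfl hz ht (by linarith) hv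
    obtain ⟨t', h1, h2, h3⟩ := ih (9 / 8 * ρ) (t + κ * ρ ^ 2) (c * m) (s • z) (by positivity)
      (by rw [pow_succ] at hk; linarith) (by linarith) (by positivity) (by linarith) (by linarith)
      (fun x hx => hst x (ball_subset_ball' (by rw [dist_eq_norm]; linarith) hx))
    refine ⟨t', by linarith, by linarith, fun x hx => ?_⟩
    have := h3 x hx
    rw [pow_succ]
    linarith

lemma phase2 {κ c T : ℝ} {v : En n × ℝ → ℝ} (hc : 0 < c) 
    (h : StepP κ c T v) {κ' t m : ℝ} (hκ : 0 < κ) (h1 : κ / 2 ≤ κ') (h2 : κ' ≤ κ) (ht : 0 ≤ t) (hm : 0 ≤ m)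
    (hv : ∀ x ∈ ball (0 : En n) (1 / 2), m ≤ v (x, t)) : ∀ N : ℕ, t + N * (κ' / 4) ≤ T →
      ∀ x ∈ ball (0 : En n) (1 / 2), c ^ N * m ≤ v (x, t + N * (κ' / 4)) := by
  intro N
  induction N with
  | zero => intro _ x hx; simpa using hv x hx
  | succ N ih =>
    intro hT x hx
    have e : t + ((N + 1 : ℕ) : ℝ) * (κ' / 4) = t + N * (κ' / 4) + κ' * (1 / 2) ^ 2 := by
      push_cast; ring
    rw [e] at hT ⊢
    have h0 : 0 ≤ (N : ℝ) * (κ' / 4) := by have : 0 ≤ κ' := by linarith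
                                           positivity
    have := h κ' (c ^ N * m) (t + N * (κ' / 4)) (1 / 2) 0 (by positivity) (by norm_num) h1 h2
      (by simp) (by linarith) hT (ih (by linarith)) x
      (ball_subset_ball (by norm_num) hx)
    rw [pow_succ]
    linarith

lemma iter_const {c : ℝ} (hc : 0 < c) (hc1 : c ≤ 1) (M : ℕ) : ∃ γ : ℝ, 0 < γ ∧
    ∀ ρ : ℝ, 0 < ρ → ρ ≤ 1 → ∃ k : ℕ, 4 / 9 ≤ ρ / 2 * (9 / 8) ^ k ∧
      (2 / ρ) ^ (-γ) ≤ c ^ (k + 1 + M) := by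
  have hq : 0 < Real.log (9 / 8) := Real.log_pos (by norm_num)
  have h2 : 0 < Real.log 2 := Real.log_pos (by norm_num)
  have hlc : 0 ≤ -Real.log c := by have := Real.log_nonpos hc.le hc1; linarith
  refine ⟨-Real.log c * (1 / Real.log (9 / 8) + (2 + M) / Real.log 2) + 1, by positivity, ?_⟩
  intro ρ hρ hρ1
  have hL : Real.log 2 ≤ Real.log (2 / ρ) :=
    Real.log_le_log (by norm_num) (by rw [le_div_iff₀ hρ]; linarith)
  set L := Real.log (2 / ρ) with hLdef
  refine ⟨⌈L / Real.log (9 / 8)⌉₊, ?_, ?_⟩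
  · have h3 := Nat.le_ceil (L / Real.log (9 / 8))
    rw [div_le_iff₀ hq] at h3
    have h4 : 2 / ρ ≤ (9 / 8 : ℝ) ^ ⌈L / Real.log (9 / 8)⌉₊ := by
      rw [← Real.log_le_log_iff (by positivity) (by positivity), Real.log_pow]
      exact h3
    rw [div_le_iff₀ hρ] at h4
    linarith
  · set k := ⌈L / Real.log (9 / 8)⌉₊ with hk
    have h3 : (k : ℝ) < L / Real.log (9 / 8) + 1 := Nat.ceil_lt_add_one (by first | positivity | exact div_nonneg (by linarith) hq.le)
    rw [← Real.log_le_log_iff (by positivity) (by positivity), Real.log_rpow (by positivity),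
      Real.log_pow, ← hLdef]
    push_cast
    have h4 : ((k : ℝ) + 1 + M) ≤ L * (1 / Real.log (9 / 8) + (2 + M) / Real.log 2) := by
      have : (2 + (M : ℝ)) ≤ L * ((2 + M) / Real.log 2) := by
        rw [mul_div_assoc', le_div_iff₀ h2]
        have : (0 : ℝ) ≤ 2 + M := by positivity
        nlinarith
      rw [mul_add, mul_one_div]
      linarith
    have h5 := mul_le_mul_of_nonneg_left h4 hlc
    nlinarith

lemma lemIter (hn : 0 < n) {ν : ℝ} (hν : 1 ≤ ν) (S h : ℝ) (hh : h ∈ Ioo (0 : ℝ) 1) : ∃ γ : ℝ, 0 < γ ∧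
    ∀ (T m ρ : ℝ) (z : En n) (g : En n → ℝ≥0∞) (v : En n × ℝ → ℝ), h ^ 2 ≤ T → T ≤ 1 → 0 ≤ m →
      0 < ρ → ‖z‖ + ρ ≤ 1 → Super ν g v 0 1 0 T → (∀ x ∈ ball z ρ, m ≤ v (x, 0)) →
      ∫⁻ x in ball (0 : En n) 1, g x ^ n ≤ ENNReal.ofReal S →
      ∀ x ∈ ball (0 : En n) (1 / 2), m ≤ (2 / ρ) ^ γ * v (x, T) := by
  obtain ⟨T₁, hT₁, hT₁1, hstep⟩ := lemStep hn hν S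
  have hh0 : 0 < h := hh.1
  set κ : ℝ := min T₁ (h ^ 2 / 4) with hκ
  have hκ0 : 0 < κ := by positivity
  have hκT : κ ≤ T₁ := min_le_left _ _
  have hκh : κ ≤ h ^ 2 / 4 := min_le_right _ _
  obtain ⟨c, hc, hc1, hstep⟩ := hstep κ hκ0 hκT
  obtain ⟨M, hM⟩ := exists_nat_gt (8 / κ)
  obtain ⟨γ, hγ, hit⟩ := iter_const hc hc1 M
  refine ⟨γ, hγ, fun T m ρ z g v hT hT1 hm hρ hz hv hv1 hg x hx => ?_⟩
  have hz0 := norm_nonneg z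
  obtain ⟨k, hk, hk2⟩ := hit ρ hρ (by linarith)
  have hP : StepP κ c T v := by
    intro κ' m τ ρ z hm hρ h1 h2 hz hτ hτT hv1
    have hb : ball z (2 * ρ) ⊆ ball 0 1 := ball_subset_ball' (by rw [dist_zero_right]; linarith)
    exact hstep κ' m τ ρ z g v hm hρ h1 h2 (hv.mono hb hτ hτT) hv1
      ((lintegral_mono_set hb).trans hg)
  have hρ2 : (ρ / 2) ^ 2 ≤ 1 / 4 := by nlinarith
  have hA : 64 / 17 * κ * (1 / 4 - (ρ / 2) ^ 2) + κ / 4 ≤ h ^ 2 / 2 := by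
    have : 64 / 17 * κ * (1 / 4 - (ρ / 2) ^ 2) ≤ 64 / 17 * κ * (1 / 4) := by
      gcongr
      have : 0 ≤ (ρ / 2) ^ 2 := by positivity
      linarith
    linarith
  obtain ⟨t', ht1, ht2, h3⟩ := phase1 hκ0 hc hc1 hP k (ρ / 2) 0 m z (by positivity) hk (by linarith)
    hm le_rfl (by have : 0 < h ^ 2 := by positivity
                  linarith)
    (fun x hx => hv1 x (ball_subset_ball (by linarith) hx))
  set L := T - t' with hL
  have hL1 : 2 * κ ≤ L := by rw [hL]; linarith
  have hL2 : L ≤ 1 := by rw [hL]; linarith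
  have hL0 : 0 < L := by linarith
  set N := ⌈4 * L / κ⌉₊ with hN
  have hN1 : 4 * L / κ ≤ N := Nat.le_ceil _
  have hN2 : (N : ℝ) < 4 * L / κ + 1 := Nat.ceil_lt_add_one (by first | positivity | exact div_nonneg (by linarith) hq.le)
  have hN0 : 0 < (N : ℝ) := lt_of_lt_of_le (by positivity) hN1
  have hN3 : (N : ℝ) ≤ 8 * L / κ := by
    have : 1 ≤ 4 * L / κ := by rw [le_div_iff₀ hκ0]; linarith
    have e : 8 * L / κ = 4 * L / κ + 4 * L / κ := by ring
    linarith
  have hNM : N ≤ M := by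
    have h1 : 8 * L / κ ≤ 8 / κ := by gcongr; linarith
    have : (N : ℝ) < M := by linarith
    exact_mod_cast this.le
  have e : t' + N * (4 * L / N / 4) = T := by rw [hL]; field_simp; ring
  have h4 := phase2 hc hP (κ' := 4 * L / N) (t := t') (m := c ^ (k + 1) * m) hκ0
    (by rw [le_div_iff₀ hN0]; rw [le_div_iff₀ hκ0] at hN3; linarith)
    (by rw [div_le_iff₀ hN0]; rw [div_le_iff₀ hκ0] at hN1; linarith) (by linarith) (by positivity)
    h3 N e.le x hx
  rw [e] at h4
  have h5 : c ^ M ≤ c ^ N := pow_le_pow_of_le_one hc.le hc1 hNM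
  have h6 : c ^ (k + 1 + M) * m ≤ v (x, T) := by
    refine le_trans ?_ h4
    rw [pow_add, mul_comm (c ^ (k + 1)), mul_assoc]
    gcongr
  have h7 : (2 / ρ) ^ (-γ) * m ≤ v (x, T) := by
    refine le_trans ?_ h6
    gcongr
  rw [Real.rpow_neg (by positivity), inv_mul_eq_div, div_le_iff₀ (by positivity)] at h7
  linarith


/-- The minimal Pucci-type operator of the class of admissible matrices. -/
def pucci (ν : ℝ) (H : Fin n → Fin n → ℝ) : ℝ :=
  sInf ((fun a : Fin n → Fin n → ℝ => ∑ i, ∑ j, a i j * H i j) '' {a | Adm ν (Matrix.of a)})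

lemma isCompact_adm (ν : ℝ) (hν : 0 ≤ ν) : IsCompact {a : Fin n → Fin n → ℝ | Adm ν (Matrix.of a)} := by
  refine (isCompact_closedBall (0 : Fin n → Fin n → ℝ) ν).of_isClosed_subset ?_ ?_
  · simp only [Adm, Matrix.of_apply]
    refine IsClosed.inter ?_ ?_
    · have : {a : Fin n → Fin n → ℝ | ∀ ξ : Fin n → ℝ, ν⁻¹ * (∑ i, ξ i ^ 2) ≤
          ∑ i, ∑ j, a i j * ξ i * ξ j} = ⋂ ξ : Fin n → ℝ, {a | ν⁻¹ * (∑ i, ξ i ^ 2) ≤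
          ∑ i, ∑ j, a i j * ξ i * ξ j} := by ext; simp
      change IsClosed {a : Fin n → Fin n → ℝ | ∀ ξ : Fin n → ℝ, ν⁻¹ * (∑ i, ξ i ^ 2) ≤
          ∑ i, ∑ j, a i j * ξ i * ξ j}
      rw [this]
      exact isClosed_iInter fun ξ => isClosed_le continuous_const (by fun_prop)
    · change IsClosed {a : Fin n → Fin n → ℝ | ∑ i, ∑ j, (a i j) ^ 2 ≤ ν ^ 2}
      exact isClosed_le (by fun_prop) continuous_const
  · intro a ha
    rw [mem_closedBall_zero_iff, pi_norm_le_iff_of_nonneg hν]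
    intro i
    rw [pi_norm_le_iff_of_nonneg hν]
    intro j
    have h1 : a i j ^ 2 ≤ ν ^ 2 := by
      refine le_trans ?_ ha.2
      refine le_trans ?_ (Finset.single_le_sum (f := fun i => ∑ j, a i j ^ 2)
        (fun i _ => Finset.sum_nonneg fun j _ => sq_nonneg _) (Finset.mem_univ i))
      exact Finset.single_le_sum (f := fun j => a i j ^ 2) (fun j _ => sq_nonneg _) (Finset.mem_univ j)
    rw [Real.norm_eq_abs]
    exact abs_le_of_sq_le_sq h1 hν

lemma pucci_cont {ν : ℝ} (hν : 0 ≤ ν) : Continuous (pucci (n := n) ν) := by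
  refine IsCompact.continuous_sInf (f := fun (H a : Fin n → Fin n → ℝ) => ∑ i, ∑ j, a i j * H i j)
    (isCompact_adm ν hν) ?_
  simp only [Function.HasUncurry.uncurry, id]
  fun_prop

lemma pucci_le {ν : ℝ} (hν : 0 ≤ ν) {a : Matrix (Fin n) (Fin n) ℝ} (ha : Adm ν a)
    (H : Fin n → Fin n → ℝ) : pucci ν H ≤ tr2 a (Matrix.of H) := by
  refine csInf_le ((isCompact_adm ν hν).image (by fun_prop)).bddBelow ⟨fun i j => a i j, ha, rfl⟩

lemma pucci_ex {ν : ℝ} (hν : 0 ≤ ν) {a₀ : Matrix (Fin n) (Fin n) ℝ} (ha₀ : Adm ν a₀)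
    (H : Fin n → Fin n → ℝ) : ∃ a, Adm ν a ∧ tr2 a (Matrix.of H) = pucci ν H := by
  have hc : IsCompact ((fun a : Fin n → Fin n → ℝ => ∑ i, ∑ j, a i j * H i j) ''
    {a | Adm ν (Matrix.of a)}) := (isCompact_adm ν hν).image (by fun_prop)
  obtain ⟨a, ha, h⟩ := hc.sInf_mem ⟨_, ⟨fun i j => a₀ i j, ha₀, rfl⟩⟩
  exact ⟨Matrix.of a, ha, h⟩

lemma closure_pcyl (y : En n) (s : ℝ) {r : ℝ} (hr : 0 < r) :
    closure (pcyl (y, s) r) = closedBall y r ×ˢ Icc (s - r ^ 2) s := by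
  have : s - r ^ 2 ≠ s := by
    have : 0 < r ^ 2 := by positivity
    linarith
  simp only [pcyl, box, closure_prod_eq]
  rw [closure_ball _ hr.ne', closure_Ioo this]

lemma super_of_C21 {ν : ℝ} (hν : 1 ≤ ν) {y : En n} {s r : ℝ} {v : En n × ℝ → ℝ}
    {a : En n × ℝ → Matrix (Fin n) (Fin n) ℝ} {b : En n × ℝ → En n} (hr : 0 < r)
    (hC : IsC21 v (closure (pcyl (y, s) r))) (ha : UnifParabolic ν a (pcyl (y, s) r))
    (hv0 : ∀ X ∈ pcyl (y, s) r, 0 ≤ v X)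
    (hL : ∀ X ∈ pcyl (y, s) r, -Dt v X + Lop a b v X ≤ 0) :
    ∃ g : En n → ℝ≥0∞, Super ν g v y r (s - r ^ 2) s ∧
      ∫⁻ x in ball y r, g x ^ n ≤ LxnLtinfPow b (pcyl (y, s) r) := by
  have hν0 : 0 ≤ ν := by linarith
  have hr2 : s - r ^ 2 < s := by
    have : 0 < r ^ 2 := by positivity
    linarith
  have hcl := closure_pcyl y s hr
  set I : Set ℝ := Ioo (s - r ^ 2) s with hI
  have hpc : ∀ x t, (x, t) ∈ pcyl (y, s) r ↔ x ∈ ball y r ∧ t ∈ I := fun x t => Iff.rfl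
  have hQ : ∀ x ∈ ball y r, ∀ t ∈ Icc (s - r ^ 2) s, (x, t) ∈ closure (pcyl (y, s) r) := by
    intro x hx t ht
    rw [hcl]
    exact ⟨ball_subset_closedBall hx, ht⟩
  set p : En n × ℝ → En n := fun X => WithLp.toLp 2 fun i => Dx v i X with hp
  set PH : En n × ℝ → ℝ := fun X => pucci ν (fun i j => Dxx v i j X) with hPH
  have hpc' : ContinuousOn p (closure (pcyl (y, s) r)) := by
    refine (PiLp.continuous_toLp 2 _).comp_continuousOn (continuousOn_pi.2 fun i => hC.cont_x i)
  have hPHc : ContinuousOn PH (closure (pcyl (y, s) r)) :=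
    (pucci_cont hν0).comp_continuousOn
      (continuousOn_pi.2 fun i => continuousOn_pi.2 fun j => hC.cont_xx i j)
  -- the basic differential inequality
  have hineq : ∀ X ∈ pcyl (y, s) r, PH X - Dt v X ≤ ‖b X‖ * ‖p X‖ := by
    intro X hX
    have h1 := hL X hX
    have h2 := pucci_le hν0 (ha X hX) (fun i j => Dxx v i j X)
    have h3 : ∑ i, b X i * Dx v i X = ⟪b X, p X⟫ := by
      simp only [hp, PiLp.inner_apply, RCLike.inner_apply, conj_trivial]
      exact Finset.sum_congr rfl fun i _ => mul_comm _ _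
    have h4 := (abs_le.1 (abs_real_inner_le_norm (b X) (p X))).1
    simp only [Lop] at h1
    rw [h3] at h1
    simp only [tr2, Matrix.of_apply] at h2
    simp only [hPH]
    linarith
  classical
  set Nk : ℚ → En n → ℝ := fun k => (ball y r).piecewise (fun x => PH (x, k) - Dt v (x, k)) 0 with hNk
  set Pk : ℚ → En n → ℝ := fun k => (ball y r).piecewise (fun x => ‖p (x, k)‖) 0 with hPk
  set g : En n → ℝ≥0∞ := fun x => ⨆ k : ℚ, if (k : ℝ) ∈ I then ENNReal.ofReal (Nk k x / Pk k x) else 0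
    with hg
  have hgm : Measurable g := by
    refine Measurable.iSup fun k => ?_
    by_cases hk : (k : ℝ) ∈ I
    · simp only [hk, if_true]
      have hmaps : MapsTo (fun x : En n => (x, (k : ℝ))) (ball y r) (closure (pcyl (y, s) r)) :=
        fun x hx => hQ x hx k (Ioo_subset_Icc_self hk)
      have hcx : ContinuousOn (fun x : En n => (x, (k : ℝ))) (ball y r) := by fun_prop
      have h1 : Measurable (Nk k) :=
        ContinuousOn.measurable_piecewise ((hPHc.comp hcx hmaps).sub (hC.cont_t.comp hcx hmaps))
          continuousOn_const measurableSet_ball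
      have h2 : Measurable (Pk k) :=
        ContinuousOn.measurable_piecewise (hpc'.comp hcx hmaps).norm
          continuousOn_const measurableSet_ball
      exact (h1.div h2).ennreal_ofReal
    · simp only [hk, if_false]
      exact measurable_const
  have hct : ∀ x ∈ ball y r, ContinuousOn (fun t : ℝ => (x, t)) (Icc (s - r ^ 2) s) ∧
      MapsTo (fun t : ℝ => (x, t)) (Icc (s - r ^ 2) s) (closure (pcyl (y, s) r)) := by
    intro x hx
    exact ⟨by fun_prop, fun t ht => hQ x hx t ht⟩
  refine ⟨g, ⟨hgm, ?_, ?_, ?_⟩, ?_⟩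
  · refine hC.cont.mono ?_
    rintro ⟨x, t⟩ ⟨hx, ht⟩
    exact hQ x hx t ht
  · intro x hx t ht
    exact le_on_closure (f := fun _ => (0 : ℝ)) (g := v) hv0 continuousOn_const hC.cont (hQ x hx t ht)
  · intro x hx t ht
    refine ⟨Dt v (x, t), p (x, t), Matrix.of fun i j => Dxx v i j (x, t),
      (hC.diff_t _ (hQ x hx t ht)).hasDerivAt, ?_, ?_⟩
    · refine taylor2_of_C21 hC ?_
      filter_upwards [isOpen_ball.mem_nhds hx] with z hz
      exact hQ z hz t ht
    · intro hgx ε hε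
      have hmid : (y, s - r ^ 2 / 2) ∈ pcyl (y, s) r := by
        rw [hpc]
        have : 0 < r ^ 2 := by positivity
        exact ⟨mem_ball_self hr, by constructor <;> linarith⟩
      obtain ⟨a₁, ha₁, he⟩ := pucci_ex hν0 (ha _ hmid) (fun i j => Dxx v i j (x, t))
      refine ⟨a₁, ha₁, ?_⟩
      rw [he]
      obtain ⟨hct1, hct2⟩ := hct x hx
      have hcls : closure (I ∩ Set.range ((↑) : ℚ → ℝ)) = Icc (s - r ^ 2) s := by
        rw [closure_ordConnected_inter_rat ordConnected_Ioo, closure_Ioo hr2.ne]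
        exact ⟨s - r ^ 2 / 2, by constructor <;> linarith, s - r ^ 2 / 4,
          by constructor <;> linarith, by intro h; linarith⟩
      have key := le_on_closure (s := I ∩ Set.range ((↑) : ℚ → ℝ)) (f := fun t => PH (x, t))
        (g := fun t => Dt v (x, t) + (g x).toReal * ‖p (x, t)‖) (by
          rintro _ ⟨hk, k, rfl⟩
          have hX : (x, (k : ℝ)) ∈ pcyl (y, s) r := (hpc _ _).2 ⟨hx, hk⟩
          have h1 := hineq _ hX
          rcases (norm_nonneg (p (x, (k : ℝ)))).eq_or_lt with h0 | h0
          · rw [← h0] at h1 ⊢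
            linarith
          have h2 : ENNReal.ofReal (Nk k x / Pk k x) ≤ g x := by
            have := le_iSup (fun k : ℚ => if (k : ℝ) ∈ I then ENNReal.ofReal (Nk k x / Pk k x) else 0) k
            simp only [hk, if_true] at this
            exact this
          have h3 : Nk k x / Pk k x ≤ (g x).toReal := (ENNReal.ofReal_le_iff_le_toReal hgx).1 h2
          simp only [hNk, hPk, Set.piecewise_eq_of_mem _ _ _ hx] at h3
          rw [div_le_iff₀ h0] at h3
          linarith)
        (by rw [hcls]; exact hPHc.comp hct1 hct2)
        (by
          rw [hcls]
          exact (hC.cont_t.comp hct1 hct2).add ((hpc'.comp hct1 hct2).norm.const_mul _))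
        (x := t) (by rw [hcls]; exact ht)
      simp only [hPH] at key
      linarith
  · have hle : ∀ x, (ball y r).indicator (fun x => g x ^ n) x ≤
        (essSup (fun t => (‖b (x, t)‖₊ : ℝ≥0∞))
          (volume.restrict {t | (x, t) ∈ pcyl (y, s) r})) ^ n := by
      intro x
      by_cases hx : x ∈ ball y r
      · rw [Set.indicator_of_mem hx]
        have hset : {t | (x, t) ∈ pcyl (y, s) r} = I := by
          ext t; simp only [mem_ofPred_eq, hpc]; exact ⟨fun h => h.2, fun h => ⟨hx, h⟩⟩
        rw [hset]
        refine pow_le_pow_left' ?_ n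
        refine iSup_le fun k => ?_
        split_ifs with hk
        swap
        · exact zero_le
        set B := essSup (fun t => (‖b (x, t)‖₊ : ℝ≥0∞)) (volume.restrict I) with hB
        simp only [hNk, hPk, Set.piecewise_eq_of_mem _ _ _ hx]
        rcases (norm_nonneg (p (x, (k : ℝ)))).eq_or_lt with h0 | h0
        · rw [← h0]; simp
        by_contra hcon
        push Not at hcon
        have hae : ∀ᵐ t ∂(volume.restrict I), (‖b (x, t)‖₊ : ℝ≥0∞) ≤ B := ENNReal.ae_le_essSup _
        rw [ae_restrict_iff' measurableSet_Ioo] at hae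
        obtain ⟨hct1, hct2⟩ := hct x hx
        have hnI : Icc (s - r ^ 2) s ∈ nhds (k : ℝ) := Icc_mem_nhds hk.1 hk.2
        have c1 : ContinuousAt (fun t : ℝ => PH (x, t)) k := (hPHc.comp hct1 hct2).continuousAt hnI
        have c2 : ContinuousAt (fun t : ℝ => Dt v (x, t)) k :=
          (hC.cont_t.comp hct1 hct2).continuousAt hnI
        have c3 : ContinuousAt (fun t : ℝ => ‖p (x, t)‖) k :=
          ((hpc'.comp hct1 hct2).continuousAt hnI).norm
        have c4 : ContinuousAt (fun t : ℝ => ENNReal.ofReal ((PH (x, t) - Dt v (x, t)) / ‖p (x, t)‖)) k :=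
          ENNReal.continuous_ofReal.continuousAt.comp ((c1.sub c2).div c3 h0.ne')
        have hW : {t : ℝ | t ∈ I ∧ B < ENNReal.ofReal ((PH (x, t) - Dt v (x, t)) / ‖p (x, t)‖)} ∈
            nhds (k : ℝ) := by
          filter_upwards [isOpen_Ioo.mem_nhds hk, c4.eventually (lt_mem_nhds hcon)] with t h1 h2
          exact ⟨h1, h2⟩
        have hpos := MeasureTheory.Measure.measure_pos_of_mem_nhds volume hW
        refine hpos.ne' (measure_mono_null ?_ hae)
        rintro t ⟨ht1, ht2⟩ hcontra
        have h1 := hcontra ht1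
        have h2 := hineq (x, t) ((hpc _ _).2 ⟨hx, ht1⟩)
        have h3 : ENNReal.ofReal ((PH (x, t) - Dt v (x, t)) / ‖p (x, t)‖) ≤ (‖b (x, t)‖₊ : ℝ≥0∞) := by
          change _ ≤ ‖b (x, t)‖ₑ
          rw [← ofReal_norm]
          refine ENNReal.ofReal_le_ofReal ?_
          exact div_le_of_le_mul₀ (norm_nonneg _) (norm_nonneg _) h2
        exact absurd (ht2.trans_le (h3.trans h1)) (lt_irrefl _)
      · rw [Set.indicator_of_notMem hx]
        exact zero_le
    rw [← lintegral_indicator measurableSet_ball]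
    exact lintegral_mono hle


lemma ball_sub_norm (hn : 0 < n) {z y : En n} {ρ r : ℝ} (hρ : 0 < ρ) (hr : 0 < r)
    (h : ball z ρ ⊆ ball y r) : ‖z - y‖ + ρ ≤ r := by
  have h1 : closedBall z ρ ⊆ closedBall y r := by
    rw [← closure_ball z hρ.ne', ← closure_ball y hr.ne']
    exact closure_mono h
  obtain ⟨u, hu, hu2⟩ : ∃ u : En n, ‖u‖ = 1 ∧ z - y = ‖z - y‖ • u := by
    by_cases hz : z - y = 0
    · exact ⟨EuclideanSpace.single ⟨0, hn⟩ 1, by simp, by simp [hz]⟩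
    · refine ⟨‖z - y‖⁻¹ • (z - y), ?_, ?_⟩
      · rw [norm_smul, norm_inv, norm_norm, inv_mul_cancel₀ (norm_ne_zero_iff.2 hz)]
      · rw [smul_smul, mul_inv_cancel₀ (norm_ne_zero_iff.2 hz), one_smul]
  have h2 : z + ρ • u ∈ closedBall y r := by
    apply h1
    rw [mem_closedBall, dist_eq_norm, add_sub_cancel_left, norm_smul, hu, Real.norm_of_nonneg hρ.le]
    linarith
  rw [mem_closedBall, dist_eq_norm] at h2
  have h3 : z + ρ • u - y = (‖z - y‖ + ρ) • u := by
    rw [add_smul, ← hu2]; abel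
  rw [h3, norm_smul, hu, mul_one, Real.norm_of_nonneg (by positivity)] at h2
  exact h2

/-- **Quantitative infimum comparison for supersolutions** (Lemma 4.2). -/
theorem infimum_comparison
    (n : ℕ) (hn : 0 < n) (ν S h : ℝ) (hν : 1 ≤ ν) (hh : h ∈ Set.Ioo (0 : ℝ) 1) :
    ∃ γ : ℝ, 0 < γ ∧
      ∀ (y z : En n) (s r ρ τ σ : ℝ) (v : En n × ℝ → ℝ)
        (a : En n × ℝ → Matrix (Fin n) (Fin n) ℝ) (b : En n × ℝ → En n),
        0 < r → 0 < ρ →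
        ball z ρ ⊆ ball y r →
        s - r ^ 2 ≤ τ → τ + h ^ 2 * r ^ 2 ≤ σ → σ ≤ s →
        IsC21 v (closure (pcyl (y, s) r)) →
        UnifParabolic ν a (pcyl (y, s) r) →
        LxnLtinfPow b (pcyl (y, s) r) ≤ ENNReal.ofReal S →
        (∀ X ∈ pcyl (y, s) r, 0 ≤ v X) →
        (∀ X ∈ pcyl (y, s) r, -Dt v X + Lop a b v X ≤ 0) →
        sInf (v '' (ball z ρ ×ˢ ({τ} : Set ℝ))) ≤
          (2 * r / ρ) ^ γ * sInf (v '' (ball y (r / 2) ×ˢ ({σ} : Set ℝ))) := by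
  obtain ⟨γ, hγ, H⟩ := lemIter hn hν S h hh
  refine ⟨γ, hγ, ?_⟩
  intro y z s r ρ τ σ v a b hr hρ hsub h1 h2 h3 hC ha hb hv0 hL
  obtain ⟨g, hg, hgi⟩ := super_of_C21 hν hr hC ha hv0 hL
  have hzn := ball_sub_norm hn hρ hr hsub
  have hr2 : 0 < r ^ 2 := by positivity
  have hh2 : 0 ≤ h ^ 2 * r ^ 2 := by positivity
  have hTr : τ + (σ - τ) / r ^ 2 * r ^ 2 = σ := by field_simp; ring
  have hσ : s - r ^ 2 ≤ σ := by linarith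
  have hτs : τ ≤ s := by linarith
  have hS1 : Super ν g v y (1 * r) τ (τ + (σ - τ) / r ^ 2 * r ^ 2) := by
    rw [hTr, one_mul]
    exact hg.mono subset_rfl h1 h3
  have hpos : ∀ q ∈ v '' (ball z ρ ×ˢ ({τ} : Set ℝ)), 0 ≤ q := by
    rintro q ⟨⟨x, t⟩, ⟨hx, ht⟩, rfl⟩
    simp only [mem_singleton_iff] at ht
    subst ht
    exact hg.nonneg x (hsub hx) _ ⟨h1, hτs⟩
  set m := sInf (v '' (ball z ρ ×ˢ ({τ} : Set ℝ))) with hm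
  have hm0 : 0 ≤ m := Real.sInf_nonneg hpos
  have key := H ((σ - τ) / r ^ 2) m (ρ / r) (r⁻¹ • (z - y)) _ _
    (by rw [le_div_iff₀ hr2]; linarith) (by rw [div_le_one hr2]; linarith) hm0 (by positivity)
    (by rw [norm_back hr, ← add_div, div_le_one hr]; exact hzn)
    (hS1.normalize hr one_pos)
    (by
      intro x hx
      simp only [one_mul, mul_zero, add_zero]
      refine csInf_le ⟨0, hpos⟩ ⟨(y + r • x, τ), ⟨?_, rfl⟩, rfl⟩
      have h5 : y + r • x - z = r • (x - r⁻¹ • (z - y)) := by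
        rw [smul_sub, smul_smul, mul_inv_cancel₀ hr.ne', one_smul]; abel
      rw [mem_ball, dist_eq_norm] at hx
      rw [mem_ball, dist_eq_norm, h5, norm_smul, Real.norm_of_nonneg hr.le]
      rw [lt_div_iff₀ hr] at hx
      linarith)
    ((lintegral_scale hg.meas hr y _ _ measurableSet_ball measurableSet_ball
      (fun x hx => by have := scale_mem (z := y) hr hx; rwa [one_mul] at this)).trans (hgi.trans hb))
  have hc : (0 : ℝ) < (2 * r / ρ) ^ γ := Real.rpow_pos_of_pos (by positivity) _
  rw [mul_comm, ← div_le_iff₀ hc]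
  refine le_csInf ?_ ?_
  · exact Set.Nonempty.image _ ⟨(y, σ), mem_ball_self (by positivity), rfl⟩
  · rintro q ⟨⟨x, t⟩, ⟨hx, ht⟩, rfl⟩
    simp only [mem_singleton_iff] at ht
    subst ht
    have h6 := key (r⁻¹ • (x - y)) (by
      rw [mem_ball, dist_eq_norm] at hx
      rw [mem_ball_zero_iff, norm_back hr, div_lt_iff₀ hr]; linarith)
    simp only [scale_back hr, one_mul] at h6
    rw [mul_comm (r ^ 2), hTr] at h6
    rw [div_le_iff₀ hc, mul_comm]
    have h7 : 2 / (ρ / r) = 2 * r / ρ := by field_simp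
    rwa [h7] at h6
end
end

section
/- Parabolic covering lemma: Let n be a positive integer, let μ₀ ∈ (0,1) be a fixed constant, and let Γ ⊂ ℝ^{n+1} be a Lebesgue measurable set with finite (n+1)-dimensional Lebesgue measure |Γ|. Define the family of standard parabolic cylinders 𝒜 := {Q_r(Y) : Y ∈ ℝ^{n+1}, r > 0, |Q_r(Y) ∩ Γ| ≥ (1−μ₀)·|Q_r(Y)|} and the open set E := ⋃_{Q ∈ 𝒜} Q. Then |Γ \ E| = 0 and |E| ≥ q₀·|Γ|, where q₀ := 1 + 3^{−n−1}·μ₀ > 1. -/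
open MeasureTheory ENNReal Metric Set RealInnerProductSpace

noncomputable section

variable {n : ℕ}

/-- The union of all standard parabolic cylinders in which `Γ` has relative
measure at least `1 - μ₀`. -/
def coverUnion (n : ℕ) (μ₀ : ℝ) (Γ : Set (En n × ℝ)) : Set (En n × ℝ) :=
  ⋃ (Y : En n × ℝ) (r : ℝ)
    (_ : 0 < r ∧ ENNReal.ofReal (1 - μ₀) * volume (pcyl Y r) ≤ volume (pcyl Y r ∩ Γ)),
    pcyl Y r

/-- Volume of the unit ball. -/
def ubv (n : ℕ) : ℝ≥0∞ := volume (ball (0 : En n) 1)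

theorem ubv_pos (n : ℕ) : 0 < ubv n := measure_ball_pos _ _ one_pos

theorem ubv_lt_top (n : ℕ) : ubv n < ⊤ := measure_ball_lt_top

theorem vol_box (y : En n) {ρ : ℝ} (hρ : 0 < ρ) (a b : ℝ) :
    volume (box y ρ a b) = ENNReal.ofReal (ρ ^ n) * ubv n * ENNReal.ofReal (b - a) := by
  unfold box ubv
  rw [Measure.volume_eq_prod, Measure.prod_prod, Real.volume_Ioo,
    Measure.addHaar_ball_of_pos _ _ hρ]
  simp

theorem vol_cbox (y : En n) {ρ : ℝ} (hρ : 0 < ρ) (a b : ℝ) :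
    volume (closedBall y ρ ×ˢ Icc a b) =
      ENNReal.ofReal (ρ ^ n) * ubv n * ENNReal.ofReal (b - a) := by
  unfold ubv
  rw [Measure.volume_eq_prod, Measure.prod_prod, Real.volume_Icc,
    Measure.addHaar_closedBall _ _ hρ.le]
  simp

theorem vol_pcyl (Y : En n × ℝ) {r : ℝ} (hr : 0 < r) :
    volume (pcyl Y r) = ENNReal.ofReal (r ^ n) * ubv n * ENNReal.ofReal (r ^ 2) := by
  unfold pcyl
  rw [vol_box _ hr]
  simp

theorem isOpen_pcyl (Y : En n × ℝ) (r : ℝ) : IsOpen (pcyl Y r) :=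
  isOpen_ball.prod isOpen_Ioo

theorem pcyl_nonempty (Y : En n × ℝ) {r : ℝ} (hr : 0 < r) : (pcyl Y r).Nonempty :=
  ⟨(Y.1, Y.2 - r ^ 2 / 2), mem_ball_self hr, by constructor <;> simp <;> nlinarith [pow_pos hr 2]⟩

theorem vol_pcyl_lt_top (Y : En n × ℝ) {r : ℝ} (hr : 0 < r) : volume (pcyl Y r) < ⊤ := by
  rw [vol_pcyl Y hr]
  exact ENNReal.mul_lt_top (ENNReal.mul_lt_top ofReal_lt_top (ubv_lt_top n)) ofReal_lt_top

theorem vol_pcyl_pos (Y : En n × ℝ) {r : ℝ} (hr : 0 < r) : 0 < volume (pcyl Y r) :=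
  (isOpen_pcyl Y r).measure_pos _ (pcyl_nonempty Y hr)

theorem pcyl_mono (Y : En n × ℝ) {r R : ℝ} (hr : 0 < r) (h : r ≤ R) : pcyl Y r ⊆ pcyl Y R := by
  apply Set.prod_mono (ball_subset_ball h) (Ioo_subset_Ioo_left _)
  nlinarith

theorem isOpen_coverUnion (μ₀ : ℝ) (Γ : Set (En n × ℝ)) : IsOpen (coverUnion n μ₀ Γ) :=
  isOpen_iUnion fun Y => isOpen_iUnion fun r => isOpen_iUnion fun _ => isOpen_pcyl Y r

theorem subset_coverUnion {μ₀ : ℝ} {Γ : Set (En n × ℝ)} {Y : En n × ℝ} {r : ℝ} (hr : 0 < r)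
    (h : ENNReal.ofReal (1 - μ₀) * volume (pcyl Y r) ≤ volume (pcyl Y r ∩ Γ)) :
    pcyl Y r ⊆ coverUnion n μ₀ Γ := by
  intro X hX
  simp only [coverUnion, mem_iUnion]
  exact ⟨Y, r, ⟨hr, h⟩, hX⟩

/-- The residual set has small density in every cylinder. -/
theorem resid_le (μ₀ : ℝ) (Γ : Set (En n × ℝ)) (Y : En n × ℝ) {r : ℝ} (hr : 0 < r) :
    volume ((Γ \ coverUnion n μ₀ Γ) ∩ pcyl Y r) ≤ ENNReal.ofReal (1 - μ₀) * volume (pcyl Y r) := by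
  by_cases h : ENNReal.ofReal (1 - μ₀) * volume (pcyl Y r) ≤ volume (pcyl Y r ∩ Γ)
  · have : (Γ \ coverUnion n μ₀ Γ) ∩ pcyl Y r = ∅ := by
      ext X
      simp only [mem_inter_iff, mem_diff, mem_empty_iff_false, iff_false]
      rintro ⟨⟨_, h2⟩, h3⟩
      exact h2 (subset_coverUnion hr h h3)
    simp [this]
  · refine le_trans (measure_mono ?_) (not_le.1 h).le
    rintro X ⟨⟨h1, _⟩, h3⟩
    exact ⟨h3, h1⟩

theorem resid_le_closed (μ₀ : ℝ) (Γ : Set (En n × ℝ)) (Y : En n × ℝ) {r : ℝ} (hr : 0 < r) :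
    volume ((Γ \ coverUnion n μ₀ Γ) ∩ (closedBall Y.1 r ×ˢ Icc (Y.2 - r ^ 2) Y.2)) ≤
      ENNReal.ofReal (1 - μ₀) * volume (pcyl Y r) := by
  refine le_trans ?_ (resid_le μ₀ Γ Y hr)
  set F := Γ \ coverUnion n μ₀ Γ
  set C := closedBall Y.1 r ×ˢ Icc (Y.2 - r ^ 2) Y.2 with hC
  have hsub : pcyl Y r ⊆ C := Set.prod_mono ball_subset_closedBall Ioo_subset_Icc_self
  have h0 : volume (C \ pcyl Y r) = 0 := by
    rw [measure_diff hsub (isOpen_pcyl Y r).measurableSet.nullMeasurableSet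
      (vol_pcyl_lt_top Y hr).ne, hC, vol_cbox _ hr, vol_pcyl Y hr]
    simp
  calc volume (F ∩ C) ≤ volume ((F ∩ pcyl Y r) ∪ (C \ pcyl Y r)) := by
        apply measure_mono
        intro X hX
        by_cases h : X ∈ pcyl Y r
        · exact Or.inl ⟨hX.1, h⟩
        · exact Or.inr ⟨hX.2, h⟩
    _ ≤ _ := (measure_union_le _ _).trans (by rw [h0, add_zero])

theorem resid_ball (μ₀ : ℝ) (Γ : Set (En n × ℝ)) (X : En n × ℝ) (N : ℕ) :
    volume ((Γ \ coverUnion n μ₀ Γ) ∩ closedBall X (2 / (N + 1 : ℝ))) ≤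
      ENNReal.ofReal (1 - μ₀) * volume (closedBall X (2 / (N + 1 : ℝ))) := by
  set F := Γ \ coverUnion n μ₀ Γ
  have hN : (0 : ℝ) < N + 1 := by positivity
  set ρ : ℝ := 2 / (N + 1 : ℝ) with hρ
  have hρ0 : 0 < ρ := by positivity
  have hρN : ρ ^ 2 * (N + 1) = 2 * ρ := by rw [hρ]; field_simp
  let Y : ℕ → En n × ℝ := fun k => (X.1, X.2 - ρ + (k + 1) * ρ ^ 2)
  have hball : closedBall X ρ = closedBall X.1 ρ ×ˢ Icc (X.2 - ρ) (X.2 + ρ) := by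
    rw [← Real.closedBall_eq_Icc, closedBall_prod_same]
  have hcov : closedBall X ρ ⊆
      ⋃ k ∈ Finset.range (N + 1), closedBall (Y k).1 ρ ×ˢ Icc ((Y k).2 - ρ ^ 2) (Y k).2 := by
    rw [hball]
    rintro ⟨x, t⟩ ⟨hx, ht1, ht2⟩
    simp only at hx ht1 ht2
    simp only [mem_iUnion]
    have hρ2 : 0 < ρ ^ 2 := by positivity
    by_cases hlast : X.2 + ρ - ρ ^ 2 ≤ t
    · refine ⟨N, by simp, hx, ?_, ?_⟩ <;> simp only [Y] <;> nlinarith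
    · push Not at hlast
      have h0 : 0 ≤ (t - (X.2 - ρ)) / ρ ^ 2 := div_nonneg (by linarith) hρ2.le
      have h1 := Nat.floor_le h0
      have h2 := Nat.lt_floor_add_one ((t - (X.2 - ρ)) / ρ ^ 2)
      rw [le_div_iff₀ hρ2] at h1
      rw [div_lt_iff₀ hρ2] at h2
      refine ⟨⌊(t - (X.2 - ρ)) / ρ ^ 2⌋₊, ?_, hx, ?_, ?_⟩
      · simp only [Finset.mem_range]
        have : (⌊(t - (X.2 - ρ)) / ρ ^ 2⌋₊ : ℝ) < N + 1 := by
          by_contra hcon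
          push Not at hcon
          nlinarith
        exact_mod_cast this
      · simp only [Y]; nlinarith
      · simp only [Y]; nlinarith
  calc volume (F ∩ closedBall X ρ)
      ≤ volume (⋃ k ∈ Finset.range (N + 1),
          F ∩ (closedBall (Y k).1 ρ ×ˢ Icc ((Y k).2 - ρ ^ 2) (Y k).2)) := by
        apply measure_mono
        rw [← inter_iUnion₂]
        exact inter_subset_inter_right _ hcov
    _ ≤ ∑ k ∈ Finset.range (N + 1),
          volume (F ∩ (closedBall (Y k).1 ρ ×ˢ Icc ((Y k).2 - ρ ^ 2) (Y k).2)) :=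
        measure_biUnion_finset_le _ _
    _ ≤ ∑ k ∈ Finset.range (N + 1), ENNReal.ofReal (1 - μ₀) *
          (ENNReal.ofReal (ρ ^ n) * ubv n * ENNReal.ofReal (ρ ^ 2)) := by
        apply Finset.sum_le_sum
        intro k _
        rw [← vol_pcyl (Y k) hρ0]
        exact resid_le_closed μ₀ Γ (Y k) hρ0
    _ = _ := by
        rw [hball, vol_cbox _ hρ0]
        have : X.2 + ρ - (X.2 - ρ) = (N + 1 : ℕ) * ρ ^ 2 := by push_cast; linarith
        rw [this, ENNReal.ofReal_mul (by positivity), ENNReal.ofReal_natCast]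
        simp only [Finset.sum_const, Finset.card_range, nsmul_eq_mul]
        ring

theorem resid_null {μ₀ : ℝ} (hμ₀ : 0 < μ₀) (Γ : Set (En n × ℝ)) :
    volume (Γ \ coverUnion n μ₀ Γ) = 0 := by
  set F := Γ \ coverUnion n μ₀ Γ with hF
  have : IsUnifLocDoublingMeasure (volume : Measure (En n × ℝ)) := inferInstance
  have hd := Besicovitch.ae_tendsto_measure_inter_div (volume : Measure (En n × ℝ)) F
  have hfalse : ∀ᵐ x ∂(volume : Measure (En n × ℝ)).restrict F, False := by
    filter_upwards [hd] with x hx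
    have hlim : Filter.Tendsto (fun N : ℕ => 2 / (N + 1 : ℝ)) Filter.atTop (nhdsWithin 0 (Ioi 0)) := by
      apply tendsto_nhdsWithin_iff.2 ⟨?_, Filter.Eventually.of_forall fun N => ?_⟩
      · have := (tendsto_one_div_add_atTop_nhds_zero_nat (𝕜 := ℝ)).const_mul 2
        simpa [div_eq_mul_inv] using this
      · simp only [mem_Ioi]; positivity
    have h1 := hx.comp hlim
    have h2 : (1 : ℝ≥0∞) ≤ ENNReal.ofReal (1 - μ₀) := by
      apply le_of_tendsto h1
      refine Filter.Eventually.of_forall fun N => ?_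
      exact ENNReal.div_le_of_le_mul (resid_ball μ₀ Γ x N)
    rw [ENNReal.one_le_ofReal] at h2
    linarith
  rw [Filter.eventually_false_iff_eq_bot, ae_eq_bot, Measure.restrict_eq_zero] at hfalse
  exact hfalse

/-- Radii of cylinders in the family are bounded. -/
theorem radius_bound (hn : 0 < n) {μ₀ : ℝ} (hμ₀ : μ₀ < 1) (Γ : Set (En n × ℝ))
    (hΓ : volume Γ < ⊤) : ∃ R : ℝ, 0 < R ∧ ∀ (Y : En n × ℝ) (r : ℝ), R ≤ r →
      volume (pcyl Y r ∩ Γ) < ENNReal.ofReal (1 - μ₀) * volume (pcyl Y r) := by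
  set c := (1 - μ₀) * (ubv n).toReal with hc
  have hc0 : 0 < c := mul_pos (by linarith) (ENNReal.toReal_pos (ubv_pos n).ne' (ubv_lt_top n).ne)
  refine ⟨1 + (volume Γ).toReal / c, by positivity, fun Y r hr => ?_⟩
  have h1r : 1 ≤ r := le_trans (by simp; positivity) hr
  have hr0 : 0 < r := by linarith
  refine lt_of_le_of_lt (measure_mono inter_subset_right) ?_
  rw [vol_pcyl Y hr0, ← ENNReal.ofReal_toReal hΓ.ne, ← ENNReal.ofReal_toReal (ubv_lt_top n).ne,
    ← ENNReal.ofReal_mul (by positivity), ← ENNReal.ofReal_mul (by positivity),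
    ← ENNReal.ofReal_mul (by linarith)]
  have key : (volume Γ).toReal < c * r := by
    have : (volume Γ).toReal / c < r := by linarith
    rw [div_lt_iff₀ hc0] at this
    linarith
  have hp : r ≤ r ^ n * r ^ 2 := by
    rw [← pow_add]
    exact le_self_pow₀ h1r (by omega)
  have h3 : (1 - μ₀) * (r ^ n * (ubv n).toReal * r ^ 2) = c * (r ^ n * r ^ 2) := by
    rw [hc]; ring
  rw [h3]
  have h4 : (volume Γ).toReal < c * (r ^ n * r ^ 2) :=
    key.trans_le (mul_le_mul_of_nonneg_left hp hc0.le)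
  exact (ENNReal.ofReal_lt_ofReal_iff (lt_of_le_of_lt ENNReal.toReal_nonneg h4)).2 h4

theorem exists_equality (hn : 0 < n) {μ₀ : ℝ} (hμ₀ : μ₀ < 1) (Γ : Set (En n × ℝ))
    (hΓ : volume Γ < ⊤) (Y : En n × ℝ) {r : ℝ} (hr : 0 < r)
    (h : ENNReal.ofReal (1 - μ₀) * volume (pcyl Y r) ≤ volume (pcyl Y r ∩ Γ)) :
    ∃ ρ, r ≤ ρ ∧ ENNReal.ofReal (1 - μ₀) * volume (pcyl Y ρ) = volume (pcyl Y ρ ∩ Γ) := by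
  obtain ⟨R, hR0, hR⟩ := radius_bound hn hμ₀ Γ hΓ
  have hrR : r ≤ R := by
    by_contra hcon
    exact absurd h (not_le.2 (hR Y r (by linarith)))
  let V : ℝ → ℝ := fun ρ => volume.real (pcyl Y ρ)
  let g : ℝ → ℝ := fun ρ => volume.real (pcyl Y ρ ∩ Γ)
  have hVeq : ∀ ρ ∈ Icc r R, V ρ = ρ ^ n * (ubv n).toReal * ρ ^ 2 := by
    intro ρ hρ
    have h0 : 0 < ρ := lt_of_lt_of_le hr hρ.1
    simp only [V, measureReal_def]
    rw [vol_pcyl Y h0, ENNReal.toReal_mul, ENNReal.toReal_mul, ENNReal.toReal_ofReal (by positivity),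
      ENNReal.toReal_ofReal (by positivity)]
  have hVc : ContinuousOn V (Icc r R) := by
    apply ContinuousOn.congr _ hVeq
    fun_prop
  have hmono : ∀ a ∈ Icc r R, ∀ b ∈ Icc r R, a ≤ b → |g b - g a| ≤ |V b - V a| := by
    intro a ha b hb hab
    have ha0 : 0 < a := lt_of_lt_of_le hr ha.1
    have hb0 : 0 < b := lt_of_lt_of_le hr hb.1
    have hs := pcyl_mono Y ha0 hab
    have hfb := (vol_pcyl_lt_top Y hb0).ne
    have h1 : g a ≤ g b := measureReal_mono (inter_subset_inter_left _ hs)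
      (ne_top_of_le_ne_top hfb (measure_mono inter_subset_left))
    have h3 : volume.real (pcyl Y b \ pcyl Y a) = V b - V a :=
      measureReal_diff hs (isOpen_pcyl Y a).measurableSet
    have h2 : g b ≤ g a + (V b - V a) := by
      rw [← h3]
      refine le_trans (measureReal_mono (fun X hX => ?_) ?_) (measureReal_union_le _ _)
      · by_cases hXa : X ∈ pcyl Y a
        · exact Or.inl ⟨hXa, hX.2⟩
        · exact Or.inr ⟨hX.1, hXa⟩
      · refine ne_top_of_le_ne_top hfb (measure_mono (union_subset ?_ diff_subset))
        exact inter_subset_left.trans hs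
    rw [abs_of_nonneg (by linarith), abs_of_nonneg (by linarith)]
    linarith
  have hmono' : ∀ a ∈ Icc r R, ∀ b ∈ Icc r R, |g b - g a| ≤ |V b - V a| := by
    intro a ha b hb
    rcases le_total a b with hab | hab
    · exact hmono a ha b hb hab
    · rw [abs_sub_comm, abs_sub_comm (V b)]
      exact hmono b hb a ha hab
  have hgc : ContinuousOn g (Icc r R) := by
    rw [Metric.continuousOn_iff] at hVc ⊢
    intro b hb ε hε
    obtain ⟨δ, hδ, H⟩ := hVc b hb ε hε
    exact ⟨δ, hδ, fun a ha hd => lt_of_le_of_lt (hmono' b hb a ha) (H a ha hd)⟩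
  have hfc : ContinuousOn (fun ρ => g ρ - (1 - μ₀) * V ρ) (Icc r R) := by fun_prop
  have hconv : ∀ ρ, r ≤ ρ → ENNReal.ofReal (1 - μ₀) * volume (pcyl Y ρ)
      = ENNReal.ofReal ((1 - μ₀) * V ρ) := by
    intro ρ hρ
    rw [ENNReal.ofReal_mul (by linarith), ofReal_measureReal (vol_pcyl_lt_top Y (by linarith)).ne]
  have hconv' : ∀ ρ, volume (pcyl Y ρ ∩ Γ) = ENNReal.ofReal (g ρ) := by
    intro ρ
    rw [ofReal_measureReal (ne_top_of_le_ne_top hΓ.ne (measure_mono inter_subset_right))]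
  have hlo : 0 ≤ g r - (1 - μ₀) * V r := by
    rw [hconv r le_rfl, hconv' r, ENNReal.ofReal_le_ofReal_iff measureReal_nonneg] at h
    linarith
  have hhi : g R - (1 - μ₀) * V R ≤ 0 := by
    have h5 := (hR Y R le_rfl).le
    rw [hconv R hrR, hconv' R, ENNReal.ofReal_le_ofReal_iff
      (mul_nonneg (by linarith) measureReal_nonneg)] at h5
    linarith
  obtain ⟨ρ, hρ, hρ0⟩ := intermediate_value_Icc' hrR hfc ⟨hhi, hlo⟩
  refine ⟨ρ, hρ.1, ?_⟩
  rw [hconv ρ hρ.1, hconv' ρ]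
  congr 1
  simp only at hρ0
  linarith

theorem enlarge {a b : En n × ℝ} {ra rb τ : ℝ} (hra : 0 < ra)
    (hne : (pcyl a ra ∩ pcyl b rb).Nonempty) (hle : ra ≤ τ * rb) :
    pcyl a ra ⊆ box b.1 ((1 + 2 * τ) * rb) (b.2 - rb ^ 2 - (τ * rb) ^ 2) (b.2 + (τ * rb) ^ 2) := by
  obtain ⟨⟨z, w⟩, ⟨hz1, hw1, hw1'⟩, ⟨hz2, hw2, hw2'⟩⟩ := hne
  rintro ⟨x, t⟩ ⟨hx, ht, ht'⟩
  simp only [mem_ball] at *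
  have hsq : ra ^ 2 ≤ (τ * rb) ^ 2 := pow_le_pow_left₀ hra.le hle 2
  refine ⟨?_, ?_, ?_⟩
  · simp only [mem_ball]
    have h1 := dist_triangle x a.1 b.1
    have h2 := dist_triangle_left a.1 b.1 z
    linarith
  · simp only; linarith
  · simp only; linarith

theorem main_tau (hn : 0 < n) {μ₀ : ℝ} (hμ₀ : μ₀ ∈ Set.Ioo (0 : ℝ) 1) (Γ : Set (En n × ℝ))
    (hΓm : MeasurableSet Γ) (hΓ : volume Γ < ⊤) {τ : ℝ} (hτ : 1 < τ) :
    ENNReal.ofReal μ₀ * volume (coverUnion n μ₀ Γ) ≤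
      ENNReal.ofReal ((1 + 2 * τ) ^ n * (1 + 2 * τ ^ 2)) * volume (coverUnion n μ₀ Γ \ Γ) := by
  set E := coverUnion n μ₀ Γ with hE
  obtain ⟨R, hR0, hR⟩ := radius_bound hn hμ₀.2 Γ hΓ
  let t : Set ((En n × ℝ) × ℝ) := {p | 0 < p.2 ∧
    ENNReal.ofReal (1 - μ₀) * volume (pcyl p.1 p.2) = volume (pcyl p.1 p.2 ∩ Γ)}
  obtain ⟨u, hut, hdisj, hcov⟩ := Vitali.exists_disjoint_subfamily_covering_enlargement
    (fun p : (En n × ℝ) × ℝ => pcyl p.1 p.2) t (fun p => p.2) τ hτ (fun p hp => hp.1.le) R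
    (fun p hp => by
      by_contra hcon
      exact absurd hp.2 (hR p.1 p.2 (not_le.1 hcon).le).ne')
    (fun p hp => pcyl_nonempty _ hp.1)
  have huc : u.Countable := hdisj.countable_of_isOpen (fun p _ => isOpen_pcyl _ _)
    (fun p hp => pcyl_nonempty _ (hut hp).1)
  set K := (1 + 2 * τ) ^ n * (1 + 2 * τ ^ 2) with hK
  have hEsub : E ⊆ ⋃ p ∈ u, box p.1.1 ((1 + 2 * τ) * p.2)
      (p.1.2 - p.2 ^ 2 - (τ * p.2) ^ 2) (p.1.2 + (τ * p.2) ^ 2) := by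
    intro X hX
    simp only [hE, coverUnion, mem_iUnion] at hX
    obtain ⟨Y, r, ⟨hr, hYr⟩, hX⟩ := hX
    obtain ⟨ρ, hrρ, hρ⟩ := exists_equality hn hμ₀.2 Γ hΓ Y hr hYr
    have hρ0 : 0 < ρ := lt_of_lt_of_le hr hrρ
    obtain ⟨b, hb, hne, hle⟩ := hcov (Y, ρ) ⟨hρ0, hρ⟩
    simp only [mem_iUnion]
    exact ⟨b, hb, enlarge hρ0 hne hle (pcyl_mono Y hr hrρ hX)⟩
  have hvol : ∀ p ∈ u, ENNReal.ofReal μ₀ * volume (box p.1.1 ((1 + 2 * τ) * p.2)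
      (p.1.2 - p.2 ^ 2 - (τ * p.2) ^ 2) (p.1.2 + (τ * p.2) ^ 2)) =
      ENNReal.ofReal K * volume (pcyl p.1 p.2 \ Γ) := by
    intro p hp
    obtain ⟨hp0, hpe⟩ := hut hp
    have hfin := (vol_pcyl_lt_top p.1 hp0).ne
    have h1 : volume (pcyl p.1 p.2 \ Γ) = ENNReal.ofReal μ₀ * volume (pcyl p.1 p.2) := by
      have h2 := measure_inter_add_diff (μ := volume) (pcyl p.1 p.2) hΓm
      rw [← hpe] at h2
      have h3 : ENNReal.ofReal (1 - μ₀) * volume (pcyl p.1 p.2) +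
          ENNReal.ofReal μ₀ * volume (pcyl p.1 p.2) = volume (pcyl p.1 p.2) := by
        rw [← add_mul, ← ENNReal.ofReal_add (by linarith [hμ₀.2]) hμ₀.1.le]
        simp
      have h4 : ENNReal.ofReal (1 - μ₀) * volume (pcyl p.1 p.2) ≠ ⊤ :=
        ENNReal.mul_ne_top ofReal_ne_top hfin
      exact (ENNReal.add_right_inj h4).1 (h2.trans h3.symm)
    rw [h1, vol_box _ (by positivity), vol_pcyl _ hp0]
    have h5 : p.1.2 + (τ * p.2) ^ 2 - (p.1.2 - p.2 ^ 2 - (τ * p.2) ^ 2) =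
        (1 + 2 * τ ^ 2) * p.2 ^ 2 := by ring
    rw [h5, mul_pow, hK, ENNReal.ofReal_mul (by positivity), ENNReal.ofReal_mul (by positivity),
      ENNReal.ofReal_mul (by positivity)]
    ring
  have : Countable u := huc.to_subtype
  calc ENNReal.ofReal μ₀ * volume E
      ≤ ENNReal.ofReal μ₀ * ∑' p : u, volume (box p.1.1.1 ((1 + 2 * τ) * p.1.2)
        (p.1.1.2 - p.1.2 ^ 2 - (τ * p.1.2) ^ 2) (p.1.1.2 + (τ * p.1.2) ^ 2)) := by
        gcongr
        exact (measure_mono hEsub).trans (measure_biUnion_le _ huc _)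
    _ = ENNReal.ofReal K * ∑' p : u, volume (pcyl p.1.1 p.1.2 \ Γ) := by
        rw [← ENNReal.tsum_mul_left, ← ENNReal.tsum_mul_left]
        exact tsum_congr fun p => hvol p.1 p.2
    _ ≤ ENNReal.ofReal K * volume (E \ Γ) := by
        gcongr
        rw [← measure_biUnion huc (hdisj.mono fun p => diff_subset)
          (fun p _ => (isOpen_pcyl _ _).measurableSet.diff hΓm)]
        apply measure_mono
        refine iUnion₂_subset fun p hp => diff_subset_diff_left ?_
        exact subset_coverUnion (hut hp).1 (hut hp).2.le

theorem main_lim (hn : 0 < n) {μ₀ : ℝ} (hμ₀ : μ₀ ∈ Set.Ioo (0 : ℝ) 1) (Γ : Set (En n × ℝ))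
    (hΓm : MeasurableSet Γ) (hΓ : volume Γ < ⊤) :
    ENNReal.ofReal μ₀ * volume (coverUnion n μ₀ Γ) ≤
      ENNReal.ofReal (3 ^ (n + 1)) * volume (coverUnion n μ₀ Γ \ Γ) := by
  have hlim : Filter.Tendsto (fun τ : ℝ => (1 + 2 * τ) ^ n * (1 + 2 * τ ^ 2))
      (nhdsWithin 1 (Ioi 1)) (nhds (3 ^ (n + 1))) := by
    have hc : Continuous (fun τ : ℝ => (1 + 2 * τ) ^ n * (1 + 2 * τ ^ 2)) := by fun_prop
    have := (hc.tendsto 1).mono_left (nhdsWithin_le_nhds (s := Ioi 1))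
    convert this using 2
    norm_num [pow_succ]
  have hlim2 := ENNReal.Tendsto.mul_const (b := volume (coverUnion n μ₀ Γ \ Γ))
    (ENNReal.tendsto_ofReal hlim) (Or.inl (by simp))
  refine ge_of_tendsto hlim2 ?_
  filter_upwards [self_mem_nhdsWithin] with τ hτ
  exact main_tau hn hμ₀ Γ hΓm hΓ hτ

/-- **Parabolic covering lemma** (Lemma 5.1). -/
theorem parabolic_covering_lemma
    (n : ℕ) (hn : 0 < n) (μ₀ : ℝ) (hμ₀ : μ₀ ∈ Set.Ioo (0 : ℝ) 1)
    (Γ : Set (En n × ℝ)) (hΓmeas : MeasurableSet Γ) (hΓfin : volume Γ < ⊤) :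
    volume (Γ \ coverUnion n μ₀ Γ) = 0 ∧
      ENNReal.ofReal (1 + μ₀ / 3 ^ (n + 1)) * volume Γ ≤ volume (coverUnion n μ₀ Γ) := by
  have hnull := resid_null hμ₀.1 Γ
  refine ⟨hnull, ?_⟩
  have hlim := main_lim hn hμ₀ Γ hΓmeas hΓfin
  set E := coverUnion n μ₀ Γ
  have h1 : volume Γ = volume (E ∩ Γ) := by
    rw [← measure_inter_add_diff Γ (isOpen_coverUnion μ₀ Γ).measurableSet, hnull, add_zero,
      inter_comm]
  have h2 : volume (E ∩ Γ) + volume (E \ Γ) = volume E := measure_inter_add_diff E hΓmeas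
  have h3 : volume Γ ≤ volume E := by rw [h1]; exact measure_mono inter_subset_left
  have h4 : ENNReal.ofReal (μ₀ / 3 ^ (n + 1)) * volume Γ ≤ volume (E \ Γ) := by
    rw [ENNReal.ofReal_div_of_pos (by positivity), div_eq_mul_inv, mul_right_comm,
      ← div_eq_mul_inv]
    apply ENNReal.div_le_of_le_mul'
    exact (mul_le_mul_right h3 _).trans hlim
  rw [ENNReal.ofReal_add zero_le_one (div_nonneg hμ₀.1.le (by positivity)), add_mul,
    ENNReal.ofReal_one, one_mul, ← h2, ← h1]
  exact add_le_add le_rfl h4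
end
end
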